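/- Let n ≥ 1 and let a_1, …, a_n : ℝ → ℝ be functions of class C^{2n}. Suppose that for every t ∈ ℝ the monic polynomial P(t)(x) = x^n + Σ_{j=1}^n (-1)^j a_j(t) x^{n-j} is hyperbolic, i.e. all its complex roots are real. Then there exist twice differentiable functions λ_1, …, λ_n : ℝ → ℝ such that for every t ∈ ℝ one has P(t)(x) = ∏_{j=1}^n (x - λ_j(t)) for all x. -/

import Mathlib

open Set Filter Topology

section GlueAbstract

variable {n : ℕ} (G : (ℝ → Fin n → ℝ) → ℝ → Prop)

structure GlueHyp : Prop where
  germ : ∀ f g t, f =ᶠ[𝓝 t] g → G f t → G g t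
  perm : ∀ f t (σ : Equiv.Perm (Fin n)), G f t → G (fun u => f u ∘ σ) t
  glue : ∀ f g t, G f t → G g t → ∃ σ : Equiv.Perm (Fin n), f t = g t ∘ σ ∧
    G (fun u => if u ≤ t then f u else g u ∘ σ) t

theorem GlueHyp.reflect {G : (ℝ → Fin n → ℝ) → ℝ → Prop} (h : GlueHyp G) :
    GlueHyp (fun f t => G (fun u => f (-u)) (-t)) where
  germ := by
    intro f g t hfg hf
    refine h.germ _ _ _ ?_ hf
    have : Tendsto (fun u : ℝ => -u) (𝓝 (-t)) (𝓝 t) := by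
      have := (continuous_neg (G := ℝ)).tendsto (-t)
      simpa using this
    exact this.eventually hfg
  perm := by
    intro f t σ hf
    exact h.perm _ _ σ hf
  glue := by
    intro f g t hf hg
    obtain ⟨σ, h1, h2⟩ := h.glue _ _ _ hg hf
    simp only [neg_neg] at h1
    refine ⟨σ⁻¹, ?_, ?_⟩
    · rw [h1]; ext i; simp
    · have h3 := h.perm _ _ σ⁻¹ h2
      refine h.germ _ _ _ (Eventually.of_forall ?_) h3
      intro u
      dsimp only
      rcases lt_trichotomy u (-t) with hu | hu | hu
      · rw [if_pos hu.le, if_neg (by linarith)]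
      · subst hu
        simp only [le_refl, if_true, neg_neg]
        rw [h1]; ext i; simp
      · rw [if_neg (by linarith), if_pos (by linarith)]
        ext i; simp

theorem extR {G : (ℝ → Fin n → ℝ) → ℝ → Prop} (h : GlueHyp G) {U : Set ℝ}
    (hloc : ∀ t ∈ U, ∃ f, ∀ᶠ u in 𝓝 t, G f u) {c d d' : ℝ} (hcd : c ≤ d) (hd : d ≤ d')
    (hU : Icc d d' ⊆ U) (f : ℝ → Fin n → ℝ) (hf : ∀ t ∈ Icc c d, G f t) :
    ∃ f', (∀ t ≤ d, f' t = f t) ∧ ∀ t ∈ Icc c d', G f' t := by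
  classical
  choose! g hg using hloc
  obtain ⟨t, ht0, htm, ⟨m, hm⟩, hcov⟩ := exists_monotone_Icc_subset_open_cover_Icc hd
    (c := fun x : Icc d d' => (fun y : Icc d d' => (y : ℝ)) ⁻¹' (interior {u | G (g x) u}))
    (fun x => isOpen_interior.preimage continuous_subtype_val)
    (by
      intro x _
      refine mem_iUnion.2 ⟨x, ?_⟩
      exact mem_interior_iff_mem_nhds.2 (hg x (hU x.2)))
  have key : ∀ k, ∃ f', (∀ u ≤ d, f' u = f u) ∧ ∀ u ∈ Icc c (t k : ℝ), G f' u := by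
    intro k
    induction k with
    | zero => exact ⟨f, fun _ _ => rfl, by rw [ht0]; exact hf⟩
    | succ k ih =>
      obtain ⟨f1, h1, h2⟩ := ih
      obtain ⟨x, hx⟩ := hcov k
      have hdk : d ≤ (t k : ℝ) := (t k).2.1
      have hle : (t k : ℝ) ≤ t (k+1) := htm (Nat.le_succ k)
      have hgx : ∀ u ∈ Icc (t k : ℝ) (t (k+1)), G (g x) u := by
        intro u hu
        have : (⟨u, hdk.trans hu.1, hu.2.trans (t (k+1)).2.2⟩ : Icc d d') ∈
          Icc (t k) (t (k+1)) := ⟨hu.1, hu.2⟩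
        exact interior_subset (hx this)
      obtain ⟨σ, hσ, hG⟩ := h.glue f1 (g x) (t k) (h2 _ ⟨hcd.trans hdk, le_rfl⟩)
        (hgx _ ⟨le_rfl, hle⟩)
      refine ⟨fun u => if u ≤ t k then f1 u else g x u ∘ σ, ?_, ?_⟩
      · intro u hu
        dsimp only
        rw [if_pos (hu.trans hdk), h1 u hu]
      · intro u hu
        rcases lt_trichotomy u (t k) with hlt | heq | hgt
        · refine h.germ f1 _ u ?_ (h2 u ⟨hu.1, hlt.le⟩)
          filter_upwards [Iio_mem_nhds hlt] with v hv
          rw [if_pos (le_of_lt hv)]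
        · rw [heq]; exact hG
        · refine h.germ (fun v => g x v ∘ σ) _ u ?_ (h.perm _ _ σ (hgx u ⟨hgt.le, hu.2⟩))
          filter_upwards [Ioi_mem_nhds hgt] with v hv
          rw [if_neg (not_le.2 hv)]
  obtain ⟨f', h1, h2⟩ := key m
  refine ⟨f', h1, ?_⟩
  rw [hm m le_rfl] at h2
  exact h2

theorem extL {G : (ℝ → Fin n → ℝ) → ℝ → Prop} (h : GlueHyp G) {U : Set ℝ}
    (hloc : ∀ t ∈ U, ∃ f, ∀ᶠ u in 𝓝 t, G f u) {c d c' : ℝ} (hcd : c ≤ d) (hd : c' ≤ c)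
    (hU : Icc c' c ⊆ U) (f : ℝ → Fin n → ℝ) (hf : ∀ t ∈ Icc c d, G f t) :
    ∃ f', (∀ t ≥ c, f' t = f t) ∧ ∀ t ∈ Icc c' d, G f' t := by
  obtain ⟨f', h1, h2⟩ := extR h.reflect (U := (fun x => -x) ⁻¹' U) (c := -d) (d := -c) (d' := -c')
    (by
      intro t ht
      obtain ⟨f, hf⟩ := hloc (-t) ht
      refine ⟨fun u => f (-u), ?_⟩
      have : Tendsto (fun u : ℝ => -u) (𝓝 t) (𝓝 (-t)) := (continuous_neg (G := ℝ)).tendsto t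
      filter_upwards [this.eventually hf] with u hu
      simpa using hu) (by linarith) (by linarith)
    (by
      intro x hx
      exact hU ⟨by linarith [hx.2], by linarith [hx.1]⟩) (fun u => f (-u))
    (by
      intro t ht
      simp only [neg_neg]
      exact hf _ ⟨by linarith [ht.2], by linarith [ht.1]⟩)
  refine ⟨fun u => f' (-u), ?_, ?_⟩
  · intro t ht
    have := h1 (-t) (by linarith)
    simpa using this
  · intro t ht
    have := h2 (-t) ⟨by linarith [ht.2], by linarith [ht.1]⟩
    simpa using this

theorem exhaust {U : Set ℝ} (hU : IsOpen U) {x : ℝ} (hx : x ∈ U) :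
    ∃ d : ℕ → ℝ, Monotone d ∧ (∀ k, x ≤ d k) ∧ (∀ k, Icc x (d k) ⊆ U) ∧
      ∀ t, Icc x t ⊆ U → x ≤ t → ∃ k, t < d k := by
  classical
  obtain ⟨e, he⟩ := exists_surjective_nat ℚ
  let d : ℕ → ℝ := fun k => Nat.rec x (fun k dk => if Icc x (e k : ℝ) ⊆ U then max dk (e k) else dk) k
  have hs : ∀ k, d (k+1) = if Icc x (e k : ℝ) ⊆ U then max (d k) (e k) else d k := fun k => rfl
  have hmono : Monotone d := by
    refine monotone_nat_of_le_succ fun k => ?_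
    rw [hs]; split_ifs
    · exact le_max_left _ _
    · exact le_rfl
  have hxd : ∀ k, x ≤ d k := fun k => hmono (Nat.zero_le k)
  refine ⟨d, hmono, hxd, ?_, ?_⟩
  · intro k
    induction k with
    | zero => 
      show Icc x x ⊆ U
      simpa using hx
    | succ k ih =>
      rw [hs]
      split_ifs with h
      · intro y hy
        rcases le_total (d k) (e k : ℝ) with h1 | h1
        · rw [max_eq_right h1] at hy; exact h hy
        · rw [max_eq_left h1] at hy; exact ih hy
      · exact ih
  · intro t ht hxt
    have htU : t ∈ U := ht ⟨hxt, le_rfl⟩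
    obtain ⟨ε, hε, hb⟩ := Metric.isOpen_iff.1 hU t htU
    obtain ⟨q, hq1, hq2⟩ := exists_rat_btwn (show t < t + ε by linarith)
    obtain ⟨k, rfl⟩ := he q
    refine ⟨k+1, ?_⟩
    rw [hs, if_pos]
    · exact lt_of_lt_of_le hq1 (le_max_right _ _)
    · intro y hy
      rcases le_total y t with h | h
      · exact ht ⟨hy.1, h⟩
      · apply hb
        rw [Metric.mem_ball, Real.dist_eq, abs_lt]
        constructor <;> linarith [hy.2]

theorem glue_component {G : (ℝ → Fin n → ℝ) → ℝ → Prop} (h : GlueHyp G) {U : Set ℝ}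
    (hU : IsOpen U) (hloc : ∀ t ∈ U, ∃ f, ∀ᶠ u in 𝓝 t, G f u) {x : ℝ} (hx : x ∈ U) :
    ∃ f, ∀ t, uIcc x t ⊆ U → G f t := by
  classical
  obtain ⟨d, dm, dx, dU, dex⟩ := exhaust hU hx
  obtain ⟨c, cm, cx, cU, cex⟩ := exhaust (U := (fun x => -x) ⁻¹' U) (x := -x)
    (hU.preimage continuous_neg) (by simpa using hx)
  let I : ℕ → Set ℝ := fun k => Icc (-c k) (d k)
  have hI : ∀ k, -c k ≤ x ∧ x ≤ d k := fun k => ⟨by linarith [cx k], dx k⟩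
  let T : ℕ → Type := fun k => {f : ℝ → Fin n → ℝ // ∀ t ∈ I k, G f t}
  have step : ∀ k (f : T k), ∃ f' : T (k+1), ∀ t ∈ I k, f'.1 t = f.1 t := by
    intro k f
    have hdk := dm (Nat.le_succ k)
    have hck := cm (Nat.le_succ k)
    obtain ⟨f1, h1, h2⟩ := extR h hloc (c := -c k) (d := d k) (d' := d (k+1))
      ((hI k).1.trans (hI k).2) hdk
      (fun y hy => dU (k+1) ⟨(dx k).trans hy.1, hy.2⟩) f.1 f.2
    obtain ⟨f2, h3, h4⟩ := extL h hloc (c := -c k) (d := d (k+1)) (c' := - c (k+1))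
      ((hI k).1.trans (hI (k+1)).2) (by linarith) (by
        intro y hy
        have := cU (k+1) (show -y ∈ _ from ⟨by linarith [hy.2, cx k], by linarith [hy.1]⟩)
        simpa using this) f1 h2
    exact ⟨⟨f2, h4⟩, fun t ht => (h3 t ht.1).trans (h1 t ht.2)⟩
  choose S hS using step
  obtain ⟨f0, hf0⟩ := hloc x hx
  have h0 : ∃ f : T 0, True := by
    obtain ⟨f1, h1, h2⟩ := extR h hloc (c := x) (d := x) (d' := d 0) le_rfl (dx 0)
      (dU 0) f0 (by intro t ht; rw [Icc_self] at ht; rw [ht]; exact hf0.self_of_nhds)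
    obtain ⟨f2, h3, h4⟩ := extL h hloc (c := x) (d := d 0) (c' := - c 0) (dx 0)
      (hI 0).1 (by
        intro y hy
        have := cU 0 (show -y ∈ _ from ⟨by linarith [hy.2], by linarith [hy.1]⟩)
        simpa using this) f1 h2
    exact ⟨⟨f2, h4⟩, trivial⟩
  obtain ⟨F0, -⟩ := h0
  let F : (k : ℕ) → T k := fun k => Nat.rec F0 (fun k f => S k f) k
  have hF : ∀ k, F (k+1) = S k (F k) := fun k => rfl
  have hImono : Monotone I := by
    intro k l hkl
    exact Icc_subset_Icc (by linarith [cm hkl]) (dm hkl)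
  have hcomp : ∀ k l, k ≤ l → ∀ t ∈ I k, (F l).1 t = (F k).1 t := by
    intro k l hkl
    induction l, hkl using Nat.le_induction with
    | base => intros; rfl
    | succ l hkl ih =>
      intro t ht
      rw [hF, hS l (F l) t (hImono hkl ht), ih t ht]
  let f : ℝ → Fin n → ℝ := fun t => if hk : ∃ k, t ∈ I k then (F (Nat.find hk)).1 t else 0
  have hf : ∀ k, ∀ t ∈ I k, f t = (F k).1 t := by
    intro k t ht
    have hk : ∃ k, t ∈ I k := ⟨k, ht⟩
    simp only [f, dif_pos hk]
    exact (hcomp _ _ (Nat.find_min' hk ht) t (Nat.find_spec hk)).symm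
  refine ⟨f, fun t ht => ?_⟩
  have hk : ∃ k, t ∈ Ioo (-c k) (d k) := by
    rcases le_total x t with hxt | hxt
    · rw [uIcc_of_le hxt] at ht
      obtain ⟨k, hk⟩ := dex t ht hxt
      obtain ⟨l, hl⟩ := cex (-x) (by simpa using hx) le_rfl
      exact ⟨max k l, by linarith [cm (le_max_right k l)],
        lt_of_lt_of_le hk (dm (le_max_left k l))⟩
    · rw [uIcc_of_ge hxt] at ht
      obtain ⟨k, hk⟩ := cex (-t) (by
        intro y hy; exact ht ⟨by linarith [hy.2], by linarith [hy.1]⟩) (by linarith)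
      obtain ⟨l, hl⟩ := dex x (by simpa using hx) le_rfl
      exact ⟨max k l, by linarith [cm (le_max_left k l)],
        lt_of_lt_of_le (hxt.trans_lt hl) (dm (le_max_right k l))⟩
  obtain ⟨k, hk⟩ := hk
  refine h.germ (F k).1 f t ?_ ((F k).2 t ⟨hk.1.le, hk.2.le⟩)
  filter_upwards [Ioo_mem_nhds hk.1 hk.2] with u hu
  exact (hf k u ⟨hu.1.le, hu.2.le⟩).symm

/-- Local solutions on an open subset of the line can be glued. -/
theorem glue_open {G : (ℝ → Fin n → ℝ) → ℝ → Prop} (h : GlueHyp G) {U : Set ℝ}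
    (hU : IsOpen U) (hloc : ∀ t ∈ U, ∃ f, ∀ᶠ u in 𝓝 t, G f u) :
    ∃ f, ∀ t ∈ U, G f t := by
  classical
  let s : Setoid U := 
    { r := fun x y => uIcc (x : ℝ) y ⊆ U
      iseqv := 
        { refl := fun x => by simp
          symm := fun {x y} hxy => by rw [uIcc_comm]; exact hxy
          trans := fun {x y z} hxy hyz => (uIcc_subset_uIcc_union_uIcc).trans (union_subset hxy hyz) } }
  have hc : ∀ x : U, ∃ f, ∀ t, uIcc (x : ℝ) t ⊆ U → G f t := fun x => glue_component h hU hloc x.2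
  choose F hF using hc
  let rep : U → U := fun x => Quotient.out (Quotient.mk s x)
  refine ⟨fun t => if ht : t ∈ U then F (rep ⟨t, ht⟩) t else 0, fun t ht => ?_⟩
  have hrel : ∀ x : U, uIcc (rep x : ℝ) x ⊆ U := fun x => Quotient.exact (s := s) (Quotient.out_eq _)
  refine h.germ (F (rep ⟨t, ht⟩)) _ t ?_ (hF _ _ (hrel ⟨t, ht⟩))
  obtain ⟨ε, hε, hb⟩ := Metric.isOpen_iff.1 hU t ht
  filter_upwards [Metric.ball_mem_nhds t hε] with u hu
  have huU : u ∈ U := hb hu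
  rw [dif_pos huU]
  have : Quotient.mk s ⟨t, ht⟩ = Quotient.mk s ⟨u, huU⟩ := by
    apply Quotient.sound
    show uIcc t u ⊆ U
    refine Subset.trans ?_ hb
    exact (convex_ball t ε).ordConnected.uIcc_subset (Metric.mem_ball_self hε) hu
  simp only [rep, this]

end GlueAbstract


open Set Filter Topology Polynomial

section GlueJets

/-- The monic polynomial with roots `y`. -/
noncomputable def pr {n : ℕ} (y : Fin n → ℝ) : ℝ[X] := ∏ i, (X - C (y i))

theorem pr_roots {n : ℕ} (y : Fin n → ℝ) : (pr y).roots = Finset.univ.val.map y := by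
  have : pr y = ((Finset.univ.val.map y).map fun a => X - C a).prod := by
    simp [pr, Finset.prod, Multiset.map_map, Function.comp_def]
  rw [this, roots_multiset_prod_X_sub_C]

theorem pr_perm {n : ℕ} {x y : Fin n → ℝ} (h : pr x = pr y) :
    ∃ σ : Equiv.Perm (Fin n), x = y ∘ σ := by
  have h2 := congrArg Polynomial.roots h
  rw [pr_roots, pr_roots] at h2
  rw [Fin.univ_val_map, Fin.univ_val_map, Multiset.coe_eq_coe] at h2
  have h3 : x ∘ Tuple.sort x = y ∘ Tuple.sort y :=
    List.ofFn_injective ((((Tuple.sort x).ofFn_comp_perm x).trans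
      (h2.trans ((Tuple.sort y).ofFn_comp_perm y).symm)).eq_of_pairwise'
        (Tuple.monotone_sort x).sortedLE_ofFn.pairwise
        (Tuple.monotone_sort y).sortedLE_ofFn.pairwise)
  refine ⟨(Tuple.sort x)⁻¹.trans (Tuple.sort y), ?_⟩
  ext i
  have := congrFun h3 ((Tuple.sort x)⁻¹ i)
  simpa using this

theorem pr_comp {n : ℕ} (y : Fin n → ℝ) (σ : Equiv.Perm (Fin n)) : pr (y ∘ σ) = pr y := by
  unfold pr
  exact Equiv.prod_comp σ (fun i => X - C (y i))

/-- `lam` is a twice differentiable (at `t`) parametrization of the roots of `P` near `t`. -/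
def TD {n : ℕ} (P : ℝ → ℝ[X]) (lam : ℝ → Fin n → ℝ) (t : ℝ) : Prop :=
  (∀ᶠ u in 𝓝 t, P u = pr (lam u) ∧ ∀ i, DifferentiableAt ℝ (fun v => lam v i) u) ∧
    ∀ i, DifferentiableAt ℝ (deriv fun v => lam v i) t

theorem freq_finite {ι α : Type*} [Finite ι] {l : Filter α} {p : ι → α → Prop}
    (h : ∃ᶠ u in l, ∃ i, p i u) : ∃ i, ∃ᶠ u in l, p i u := by
  by_contra hcon
  push Not at hcon
  apply h
  have : ∀ᶠ u in l, ∀ i, ¬ p i u := eventually_all.2 fun i => by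
    simpa [not_frequently] using hcon i
  filter_upwards [this] with u hu
  push Not
  exact hu

theorem jet_zero_aux {h : ℝ → ℝ} {t : ℝ} (hd : ∀ᶠ u in 𝓝 t, DifferentiableAt ℝ h u)
    (hdd : DifferentiableAt ℝ (deriv h) t) (h0 : h t = 0) (h1 : deriv h t = 0)
    (hz : ∃ᶠ u in 𝓝[≠] t, h u = 0) : ¬ 0 < deriv (deriv h) t := by
  intro hpos
  set c := deriv (deriv h) t with hc
  let g : ℝ → ℝ := fun u => h u - c / 4 * (u - t) ^ 2
  have hder : ∀ u, HasDerivAt (fun u : ℝ => c / 4 * (u - t) ^ 2) (c / 2 * (u - t)) u := by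
    intro u
    have h := (((hasDerivAt_id u).sub_const t).pow 2).const_mul (c/4)
    refine HasDerivAt.congr_deriv (f := fun u : ℝ => c / 4 * (u - t) ^ 2) h ?_
    simp only [id, Nat.cast_ofNat]
    norm_num
    ring
  have hg1 : deriv g =ᶠ[𝓝 t] fun u => deriv h u - c / 2 * (u - t) := by
    filter_upwards [hd] with u hu
    exact (hu.hasDerivAt.sub (hder u)).deriv
  have hg2 : deriv (deriv g) t = c / 2 := by
    rw [hg1.deriv_eq]
    have := (hdd.hasDerivAt.sub (((hasDerivAt_id t).sub_const t).const_mul (c/2))).deriv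
    simp only [id, mul_one] at this
    rw [show (fun u => deriv h u - c / 2 * (u - t)) = (deriv h - fun u => c/2 * (u - t)) from rfl, this,
      ← hc]; ring
  have hmin := isLocalMin_of_deriv_deriv_pos (f := g) (x₀ := t) (by rw [hg2]; linarith)
    (by rw [hg1.self_of_nhds]; simp [h1])
    (hd.self_of_nhds.continuousAt.sub (hder t).continuousAt)
  have hmin' : ∀ᶠ u in 𝓝[≠] t, g t ≤ g u := hmin.filter_mono nhdsWithin_le_nhds
  obtain ⟨u, hu, hu2, hne⟩ := (hz.and_eventually (hmin'.and self_mem_nhdsWithin)).exists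
  have hne' : u ≠ t := hne
  simp only [g, h0, hu] at hu2
  have : 0 < (u - t)^2 := by
    have := sub_ne_zero.2 hne'
    positivity
  nlinarith

theorem jet_zero {h : ℝ → ℝ} {t : ℝ} (hd : ∀ᶠ u in 𝓝 t, DifferentiableAt ℝ h u)
    (hdd : DifferentiableAt ℝ (deriv h) t)
    (hz : ∃ᶠ u in 𝓝[≠] t, h u = 0) : h t = 0 ∧ deriv h t = 0 ∧ deriv (deriv h) t = 0 := by
  have h0 : h t = 0 := by
    by_contra hne
    have := hd.self_of_nhds.continuousAt.eventually_ne hne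
    exact hz ((this.filter_mono nhdsWithin_le_nhds).mono fun u hu => hu)
  have h1 : deriv h t = 0 := by
    by_contra hne
    have := hasDerivAt_iff_tendsto_slope.1 hd.self_of_nhds.hasDerivAt
    have := this.eventually_ne hne
    apply hz
    filter_upwards [this] with u hu h3
    apply hu
    simp [slope_def_field, h3, h0]
  refine ⟨h0, h1, ?_⟩
  rcases lt_trichotomy (deriv (deriv h) t) 0 with h2 | h2 | h2
  · exfalso
    have hn : deriv (fun u => - h u) = fun u => - deriv h u := by
      ext u; exact deriv.fun_neg
    refine jet_zero_aux (h := fun u => - h u) (t := t) ?_ ?_ ?_ ?_ ?_ ?_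
    · filter_upwards [hd] with u hu using hu.neg
    · rw [hn]; exact hdd.neg
    · simp [h0]
    · rw [hn]; simp [h1]
    · exact hz.mono fun u hu => by simp [hu]
    · rw [hn, show deriv (fun u => - deriv h u) t = - deriv (deriv h) t from deriv.fun_neg]; linarith
  · exact h2
  · exact absurd h2 (jet_zero_aux hd hdd h0 h1 hz)

theorem piecewise_hasDerivAt {f g : ℝ → ℝ} {t c : ℝ} (hf : HasDerivAt f c t)
    (hg : HasDerivAt g c t) (h : f t = g t) :
    HasDerivAt (fun u => if u ≤ t then f u else g u) c t := by
  have h1 : HasDerivWithinAt (fun u => if u ≤ t then f u else g u) c (Iic t) t :=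
    hf.hasDerivWithinAt.congr (fun x hx => if_pos hx) (if_pos le_rfl)
  have h2 : HasDerivWithinAt (fun u => if u ≤ t then f u else g u) c (Ici t) t := by
    refine hg.hasDerivWithinAt.congr (fun x hx => ?_) (by simp [h])
    rcases eq_or_lt_of_le (show t ≤ x from hx) with rfl | hx
    · simp [h]
    · exact if_neg (not_le.2 hx)
  have := h1.union h2
  rwa [Iic_union_Ici, hasDerivWithinAt_univ] at this

theorem piecewise_TD {f g : ℝ → ℝ} {t : ℝ} (hf : ∀ᶠ u in 𝓝 t, DifferentiableAt ℝ f u)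
    (hf2 : DifferentiableAt ℝ (deriv f) t) (hg : ∀ᶠ u in 𝓝 t, DifferentiableAt ℝ g u)
    (hg2 : DifferentiableAt ℝ (deriv g) t) (h0 : f t = g t) (h1 : deriv f t = deriv g t)
    (h2 : deriv (deriv f) t = deriv (deriv g) t) :
    (∀ᶠ u in 𝓝 t, DifferentiableAt ℝ (fun u => if u ≤ t then f u else g u) u) ∧
      DifferentiableAt ℝ (deriv (fun u => if u ≤ t then f u else g u)) t := by
  have key : ∀ᶠ u in 𝓝 t, HasDerivAt (fun u => if u ≤ t then f u else g u)
      (if u ≤ t then deriv f u else deriv g u) u := by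
    filter_upwards [hf, hg] with u hu hu'
    rcases lt_trichotomy u t with hlt | rfl | hgt
    · rw [if_pos hlt.le]
      refine hu.hasDerivAt.congr_of_eventuallyEq ?_
      filter_upwards [Iio_mem_nhds hlt] with v hv
      exact if_pos (le_of_lt hv)
    · rw [if_pos le_rfl]
      exact piecewise_hasDerivAt hu.hasDerivAt (h1 ▸ hu'.hasDerivAt) h0
    · rw [if_neg (not_le.2 hgt)]
      refine hu'.hasDerivAt.congr_of_eventuallyEq ?_
      filter_upwards [Ioi_mem_nhds hgt] with v hv
      exact if_neg (not_le.2 hv)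
  refine ⟨key.mono fun u hu => hu.differentiableAt, ?_⟩
  have h3 : deriv (fun u => if u ≤ t then f u else g u) =ᶠ[𝓝 t]
      fun u => if u ≤ t then deriv f u else deriv g u := key.mono fun u hu => hu.deriv
  refine DifferentiableAt.congr_of_eventuallyEq ?_ h3
  exact (piecewise_hasDerivAt hf2.hasDerivAt (h2 ▸ hg2.hasDerivAt) h1).differentiableAt

theorem TD_glueHyp {n : ℕ} (P : ℝ → ℝ[X]) : GlueHyp (TD (n := n) P) where
  germ := by
    intro f g t hfg hf
    refine ⟨?_, fun i => ?_⟩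
    · filter_upwards [hf.1, hfg.eventuallyEq_nhds] with u hu hu2
      refine ⟨by rw [hu.1, hu2.self_of_nhds], fun i => ?_⟩
      exact (hu.2 i).congr_of_eventuallyEq (hu2.symm.fun_comp (fun w : Fin n → ℝ => w i))
    · refine (hf.2 i).congr_of_eventuallyEq ?_
      have : (fun v => g v i) =ᶠ[𝓝 t] fun v => f v i := hfg.symm.fun_comp (fun w : Fin n → ℝ => w i)
      exact this.deriv
  perm := by
    intro f t σ hf
    refine ⟨?_, fun i => hf.2 (σ i)⟩
    filter_upwards [hf.1] with u hu
    exact ⟨by rw [hu.1, pr_comp], fun i => hu.2 (σ i)⟩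
  glue := by
    intro f g t hf hg
    have h1 : ∀ᶠ u in 𝓝[≠] t, ∃ σ : Equiv.Perm (Fin n), f u = g u ∘ σ := by
      refine Eventually.filter_mono nhdsWithin_le_nhds ?_
      filter_upwards [hf.1, hg.1] with u hu hu'
      exact pr_perm (hu.1.symm.trans hu'.1)
    obtain ⟨σ, hσ⟩ := freq_finite h1.frequently
    have hfd : ∀ i, ∀ᶠ u in 𝓝 t, DifferentiableAt ℝ (fun v => f v i) u :=
      fun i => hf.1.mono fun u hu => hu.2 i
    have hgd : ∀ i, ∀ᶠ u in 𝓝 t, DifferentiableAt ℝ (fun v => g v i) u :=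
      fun i => hg.1.mono fun u hu => hu.2 i
    have hj : ∀ i, f t i = g t (σ i) ∧ deriv (fun v => f v i) t = deriv (fun v => g v (σ i)) t ∧
        deriv (deriv (fun v => f v i)) t = deriv (deriv (fun v => g v (σ i))) t := by
      intro i
      have hdd : deriv (fun v => f v i - g v (σ i)) =ᶠ[𝓝 t]
          fun v => deriv (fun v => f v i) v - deriv (fun v => g v (σ i)) v := by
        filter_upwards [hfd i, hgd (σ i)] with u hu hu'
        exact (hu.hasDerivAt.sub hu'.hasDerivAt).deriv
      have := jet_zero (h := fun v => f v i - g v (σ i)) (t := t)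
        (by filter_upwards [hfd i, hgd (σ i)] with u hu hu' using hu.sub hu')
        (((hf.2 i).sub (hg.2 (σ i))).congr_of_eventuallyEq hdd)
        (hσ.mono fun u hu => by rw [hu]; simp)
      refine ⟨by linarith [this.1], ?_, ?_⟩
      · have h3 := this.2.1
        rw [hdd.self_of_nhds] at h3
        linarith
      · have h3 := this.2.2
        rw [hdd.deriv_eq, ((hf.2 i).hasDerivAt.fun_sub (hg.2 (σ i)).hasDerivAt).deriv] at h3
        linarith
    have hpw : ∀ i, (fun v => (fun u => if u ≤ t then f u else g u ∘ σ) v i) =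
        fun v => if v ≤ t then f v i else g v (σ i) := by
      intro i; ext v; dsimp only; split_ifs <;> rfl
    have hT := fun i => piecewise_TD (hfd i) (hf.2 i) (hgd (σ i)) (hg.2 (σ i)) (hj i).1
      (hj i).2.1 (hj i).2.2
    refine ⟨σ, by ext i; exact (hj i).1, ?_, ?_⟩
    · filter_upwards [hf.1, hg.1, eventually_all.2 fun i => (hT i).1] with u hu hu' hu2
      refine ⟨?_, fun i => ?_⟩
      · split_ifs
        · exact hu.1
        · rw [pr_comp]; exact hu'.1
      · rw [hpw]; exact hu2 i
    · intro i; rw [hpw]; exact (hT i).2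

end GlueJets


open Set Filter Topology Polynomial

section Splitting

/-- The polynomial with all real roots. -/
def Hyp (n : ℕ) (p : ℝ[X]) : Prop := ∃ y : Fin n → ℝ, p = pr y

/-- lower order part -/
noncomputable def lk (n : ℕ) : (Fin n → ℝ) →ₗ[ℝ] ℝ[X] :=
  ∑ i : Fin n, (Polynomial.monomial (i : ℕ)).comp (LinearMap.proj i)

theorem lk_apply {n : ℕ} (v : Fin n → ℝ) : lk n v = ∑ i : Fin n, monomial (i : ℕ) (v i) := by
  simp [lk]

theorem lk_coeff {n : ℕ} (v : Fin n → ℝ) (i : Fin n) : (lk n v).coeff i = v i := by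
  rw [lk_apply, finsetSum_coeff]
  simp only [coeff_monomial, Fin.val_inj]
  simp

theorem lk_degree {n : ℕ} (v : Fin n → ℝ) : (lk n v).degree < n := by
  rw [lk_apply]
  rw [degree_lt_iff_coeff_zero]
  intro m hm
  rw [finsetSum_coeff]
  refine Finset.sum_eq_zero fun i _ => ?_
  rw [coeff_monomial, if_neg]
  have := i.2
  omega

/-- The monic polynomial with given lower coefficients. -/
noncomputable def mkp {n : ℕ} (v : Fin n → ℝ) : ℝ[X] := X ^ n + lk n v

/-- The lower coefficients. -/
def cf (n : ℕ) (p : ℝ[X]) : Fin n → ℝ := fun i => p.coeff i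

theorem mkp_monic {n : ℕ} (v : Fin n → ℝ) : (mkp v).Monic := monic_X_pow_add (lk_degree v)

theorem mkp_natDegree {n : ℕ} (v : Fin n → ℝ) : (mkp v).natDegree = n :=
  natDegree_eq_of_degree_eq_some (by
    unfold mkp
    rw [degree_add_eq_left_of_degree_lt, degree_X_pow]
    rw [degree_X_pow]; exact lk_degree v)

theorem mkp_coeff {n : ℕ} (v : Fin n → ℝ) (i : Fin n) : (mkp v).coeff i = v i := by
  have := i.2.ne
  simp [mkp, lk_coeff, coeff_X_pow, this]

theorem cf_mkp {n : ℕ} (v : Fin n → ℝ) : cf n (mkp v) = v := by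
  ext i; exact mkp_coeff v i

theorem poly_ext_of_cf {n : ℕ} {p q : ℝ[X]} (hp : p.Monic) (hq : q.Monic) (hpn : p.natDegree = n)
    (hqn : q.natDegree = n) (h : cf n p = cf n q) : p = q := by
  ext i
  rcases lt_trichotomy i n with hi | hi | hi
  · exact congrFun h ⟨i, hi⟩
  · subst hi
    conv_lhs => rw [← hpn, hp.coeff_natDegree]
    conv_rhs => rw [← hqn, hq.coeff_natDegree]
  · rw [coeff_eq_zero_of_natDegree_lt (by omega), coeff_eq_zero_of_natDegree_lt (by omega)]

theorem mkp_cf {n : ℕ} {p : ℝ[X]} (hp : p.Monic) (hpn : p.natDegree = n) : mkp (cf n p) = p :=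
  poly_ext_of_cf (mkp_monic _) hp (mkp_natDegree _) hpn (cf_mkp _)

theorem pr_monic {n : ℕ} (y : Fin n → ℝ) : (pr y).Monic :=
  monic_prod_of_monic _ _ fun i _ => monic_X_sub_C _

theorem pr_natDegree {n : ℕ} (y : Fin n → ℝ) : (pr y).natDegree = n := by
  unfold pr
  rw [natDegree_prod_of_monic _ _ fun i _ => monic_X_sub_C _]
  simp

theorem pr_splits {n : ℕ} (y : Fin n → ℝ) : (pr y).Splits :=
  Splits.prod fun i _ => Splits.X_sub_C _

theorem Hyp.of_splits {n : ℕ} {p : ℝ[X]} (hp : p.Monic) (hn : p.natDegree = n) (hs : p.Splits) :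
    Hyp n p := by
  have hc : p.roots.toList.length = n := by
    rw [Multiset.length_toList, ← hs.natDegree_eq_card_roots, hn]
  subst hc
  refine ⟨fun i => p.roots.toList.get i, ?_⟩
  conv_lhs => rw [hs.eq_prod_roots_of_monic hp]
  unfold pr
  conv_lhs => rw [← Multiset.coe_toList p.roots, Multiset.map_coe, Multiset.prod_coe]
  rw [← List.prod_ofFn]
  congr 1
  conv_lhs => rw [← List.ofFn_get p.roots.toList]
  rw [List.map_ofFn]
  simp [Function.comp_def]

theorem Hyp.monic {n : ℕ} {p : ℝ[X]} (h : Hyp n p) : p.Monic := by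
  obtain ⟨y, rfl⟩ := h; exact pr_monic y

theorem Hyp.natDegree {n : ℕ} {p : ℝ[X]} (h : Hyp n p) : p.natDegree = n := by
  obtain ⟨y, rfl⟩ := h; exact pr_natDegree y

theorem Hyp.splits {n : ℕ} {p : ℝ[X]} (h : Hyp n p) : p.Splits := by
  obtain ⟨y, rfl⟩ := h; exact pr_splits y

theorem Hyp.of_dvd {n k : ℕ} {p q : ℝ[X]} (h : Hyp n p) (hq : q.Monic) (hk : q.natDegree = k)
    (hd : q ∣ p) : Hyp k q :=
  Hyp.of_splits hq hk (h.splits.of_dvd h.monic.ne_zero hd)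

theorem contDiff_mkp_coeff {k : ℕ} (i : ℕ) {N : WithTop ℕ∞} :
    ContDiff ℝ N fun a : Fin k → ℝ => (mkp a).coeff i := by
  simp only [mkp, coeff_add]
  refine contDiff_const.add ?_
  exact (LinearMap.toContinuousLinearMap ((Polynomial.lcoeff ℝ i).comp (lk k))).contDiff

theorem hasFDerivAt_mkp_coeff {k : ℕ} (i : ℕ) (a : Fin k → ℝ) :
    HasFDerivAt (fun a : Fin k → ℝ => (mkp a).coeff i)
      (LinearMap.toContinuousLinearMap ((Polynomial.lcoeff ℝ i).comp (lk k))) a := by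
  simp only [mkp, coeff_add]
  exact (LinearMap.toContinuousLinearMap ((Polynomial.lcoeff ℝ i).comp (lk k))).hasFDerivAt.const_add _

theorem split_factor {k l : ℕ} (A : Fin k → ℝ) (B : Fin l → ℝ)
    (hcop : IsCoprime (mkp A) (mkp B)) (N : ℕ) :
    ∃ (φ : (Fin (k + l) → ℝ) → Fin k → ℝ) (ψ : (Fin (k + l) → ℝ) → Fin l → ℝ)
      (W : Set (Fin (k + l) → ℝ)), IsOpen W ∧ cf (k + l) (mkp A * mkp B) ∈ W ∧
      ContDiffOn ℝ N φ W ∧ ContDiffOn ℝ N ψ W ∧ ∀ v ∈ W, mkp v = mkp (φ v) * mkp (ψ v) := by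
  let M : (Fin k → ℝ) × (Fin l → ℝ) → Fin (k + l) → ℝ := fun x => cf (k + l) (mkp x.1 * mkp x.2)
  let D : (Fin k → ℝ) × (Fin l → ℝ) →ₗ[ℝ] (Fin (k + l) → ℝ) :=
    LinearMap.pi fun i => (Polynomial.lcoeff ℝ (i : ℕ)).comp
      ((((LinearMap.mulRight ℝ (mkp B)).comp (lk k)).comp (LinearMap.fst ℝ _ _)) +
      (((LinearMap.mulLeft ℝ (mkp A)).comp (lk l)).comp (LinearMap.snd ℝ _ _)))
  have hD : ∀ u v i, D (u, v) i = (lk k u * mkp B + mkp A * lk l v).coeff i := by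
    intro u v i; simp [D]
  have hinj : Function.Injective D := by
    rw [injective_iff_map_eq_zero]
    rintro ⟨u, v⟩ h
    have h0 : lk k u * mkp B + mkp A * lk l v = 0 := by
      ext i
      by_cases hi : i < k + l
      · have := congrFun h ⟨i, hi⟩
        rw [hD] at this
        simpa using this
      · rw [coeff_zero]
        apply coeff_eq_zero_of_degree_lt
        have hA : (mkp A).degree = k := by
          rw [degree_eq_natDegree (mkp_monic A).ne_zero, mkp_natDegree]
        have hB : (mkp B).degree = l := by
          rw [degree_eq_natDegree (mkp_monic B).ne_zero, mkp_natDegree]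
        refine lt_of_lt_of_le (b := ((k + l : ℕ) : WithBot ℕ)) ?_ (by exact_mod_cast not_lt.1 hi)
        refine (degree_add_le _ _).trans_lt (max_lt ?_ ?_)
        · rw [degree_mul, hB]
          push_cast
          exact WithBot.add_lt_add_right (by simp) (lk_degree u)
        · rw [degree_mul, hA]
          push_cast
          exact WithBot.add_lt_add_left (by simp) (lk_degree v)
    have hdvd : mkp A ∣ lk k u := by
      refine hcop.dvd_of_dvd_mul_right ?_
      refine ⟨- lk l v, ?_⟩
      linear_combination h0
    have hu : lk k u = 0 := by
      apply eq_zero_of_dvd_of_degree_lt hdvd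
      rw [degree_eq_natDegree (mkp_monic A).ne_zero, mkp_natDegree]
      exact lk_degree u
    have hv : lk l v = 0 := by
      rw [hu, zero_mul, zero_add] at h0
      exact (mul_eq_zero.1 h0).resolve_left (mkp_monic A).ne_zero
    ext i
    · change u i = 0
      rw [← lk_coeff u i, hu]; simp
    · change v i = 0
      rw [← lk_coeff v i, hv]; simp
  let e := (LinearMap.linearEquivOfInjective D hinj (by simp)).toContinuousLinearEquiv
  have hMc : ContDiff ℝ (N + 1 : ℕ) M := by
    rw [contDiff_pi]
    intro i
    simp only [M, cf, coeff_mul]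
    refine ContDiff.sum fun p _ => ?_
    exact ((contDiff_mkp_coeff p.1).comp contDiff_fst).mul ((contDiff_mkp_coeff p.2).comp contDiff_snd)
  have hMd : HasFDerivAt M (e : _ →L[ℝ] _) (A, B) := by
    rw [hasFDerivAt_pi']
    intro i
    simp only [M, cf, coeff_mul]
    have hp : ∀ p : ℕ × ℕ, HasFDerivAt
        (fun x : (Fin k → ℝ) × (Fin l → ℝ) => (mkp x.1).coeff p.1 * (mkp x.2).coeff p.2) _ (A, B) :=
      fun p => HasFDerivAt.mul
        (HasFDerivAt.comp (f := Prod.fst) (A, B) (hasFDerivAt_mkp_coeff p.1 A) hasFDerivAt_fst)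
        (HasFDerivAt.comp (f := Prod.snd) (A, B) (hasFDerivAt_mkp_coeff p.2 B) hasFDerivAt_snd)
    have h := HasFDerivAt.fun_sum (u := Finset.HasAntidiagonal.antidiagonal (i : ℕ)) (x := (A, B))
      (fun p _ => hp p)
    refine h.congr_fderiv ?_
    refine ContinuousLinearMap.ext ?_
    rintro ⟨u, v⟩
    have h3 : (ContinuousLinearMap.proj i : (Fin (k + l) → ℝ) →L[ℝ] ℝ) ((e : _ →L[ℝ] _) (u, v)) =
      D (u, v) i := rfl
    rw [ContinuousLinearMap.comp_apply, h3, hD, coeff_add, coeff_mul, coeff_mul,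
      ← Finset.sum_add_distrib, ContinuousLinearMap.sum_apply]
    refine Finset.sum_congr rfl fun p _ => ?_
    simp
    ring
  have hA := hMc.contDiffAt (x := (A, B))
  have hs := hA.hasStrictFDerivAt' hMd (by simp)
  let g := hA.localInverse hMd (by simp)
  have hg : ContDiffAt ℝ (N + 1 : ℕ) g (M (A, B)) := hA.to_localInverse hMd (by simp)
  have hr : ∀ᶠ v in 𝓝 (M (A, B)), M (g v) = v := hs.eventually_right_inverse
  have hg' := (hg.of_le (m := (N : ℕ)) (by exact_mod_cast Nat.le_succ N)).eventually (by simp)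
  obtain ⟨W, hW, hWo, hWm⟩ := eventually_nhds_iff.1 (hr.and hg')
  refine ⟨fun v => (g v).1, fun v => (g v).2, W, hWo, hWm, ?_, ?_, ?_⟩
  · exact fun v hv => (contDiffAt_fst.comp v (hW v hv).2).contDiffWithinAt
  · exact fun v hv => (contDiffAt_snd.comp v (hW v hv).2).contDiffWithinAt
  · intro v hv
    refine poly_ext_of_cf (mkp_monic _) ((mkp_monic _).mul (mkp_monic _)) (mkp_natDegree v) ?_ ?_
    · rw [(mkp_monic _).natDegree_mul (mkp_monic _), mkp_natDegree, mkp_natDegree]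
    · rw [cf_mkp]; exact (hW v hv).1.symm

theorem coprime_pr {k l : ℕ} (y : Fin k → ℝ) (z : Fin l → ℝ) (h : ∀ i j, y i ≠ z j) :
    IsCoprime (pr y) (pr z) :=
  IsCoprime.prod_left fun i _ => IsCoprime.prod_right fun j _ =>
    isCoprime_X_sub_C_of_isUnit_sub (sub_ne_zero.2 (h i j)).isUnit

theorem split_exists {n : ℕ} (y : Fin n → ℝ) (i j : Fin n) (hy : y i ≠ y j) (N : ℕ) :
    ∃ k l : ℕ, k + l = n ∧ k < n ∧ l < n ∧ ∃ (φ : (Fin n → ℝ) → Fin k → ℝ)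
      (ψ : (Fin n → ℝ) → Fin l → ℝ) (W : Set (Fin n → ℝ)), IsOpen W ∧ cf n (pr y) ∈ W ∧
      ContDiffOn ℝ N φ W ∧ ContDiffOn ℝ N ψ W ∧ ∀ v ∈ W, mkp v = mkp (φ v) * mkp (ψ v) := by
  classical
  let S : Finset (Fin n) := Finset.univ.filter fun m => y m = y i
  let A : ℝ[X] := ∏ m ∈ S, (X - C (y m))
  let B : ℝ[X] := ∏ m ∈ Sᶜ, (X - C (y m))
  have hAB : A * B = pr y := Finset.prod_mul_prod_compl S _
  have hcard : S.card + Sᶜ.card = n := by simp [Finset.card_add_card_compl]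
  have hA : A.Monic := monic_prod_of_monic _ _ fun i _ => monic_X_sub_C _
  have hB : B.Monic := monic_prod_of_monic _ _ fun i _ => monic_X_sub_C _
  have hAn : A.natDegree = S.card := by
    rw [natDegree_prod_of_monic _ _ fun i _ => monic_X_sub_C _]; simp
  have hBn : B.natDegree = Sᶜ.card := by
    rw [natDegree_prod_of_monic _ _ fun i _ => monic_X_sub_C _]; simp
  have hi : 0 < S.card := Finset.card_pos.2 ⟨i, by simp [S]⟩
  have hj : 0 < Sᶜ.card := Finset.card_pos.2 ⟨j, by simp [S, hy.symm]⟩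
  have hcop : IsCoprime A B :=
    IsCoprime.prod_left fun a ha => IsCoprime.prod_right fun b hb =>
      isCoprime_X_sub_C_of_isUnit_sub (sub_ne_zero.2 (by
        simp only [S, Finset.mem_filter, Finset.mem_univ, true_and, Finset.mem_compl] at ha hb
        rw [ha]; exact fun h => hb h.symm)).isUnit
  have key := split_factor (cf _ A) (cf _ B) (by rw [mkp_cf hA hAn, mkp_cf hB hBn]; exact hcop) N
  rw [mkp_cf hA hAn, mkp_cf hB hBn, hAB] at key
  refine ⟨S.card, Sᶜ.card, hcard, by omega, by omega, ?_⟩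
  revert key
  generalize S.card = k at *
  generalize Sᶜ.card = l at *
  clear_value A B
  clear S hA hB hAB hAn hBn hcop A B
  intro key
  revert key
  revert y i j
  subst hcard
  intros
  assumption

end Splitting


open Set Filter Topology Polynomial

section BDsec

theorem iteratedDeriv_hasDerivAt {N : ℕ} {f : ℝ → ℝ} {U : Set ℝ} (hU : IsOpen U)
    (hf : ContDiffOn ℝ N f U) {i : ℕ} (hi : i < N) {t : ℝ} (ht : t ∈ U) :
    HasDerivAt (iteratedDeriv i f) (iteratedDeriv (i + 1) f t) t := by
  have h1 := hf.differentiableOn_iteratedDerivWithin (m := i) (by exact_mod_cast hi)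
    hU.uniqueDiffOn
  have h2 : DifferentiableAt ℝ (iteratedDeriv i f) t := by
    refine (h1.differentiableAt (hU.mem_nhds ht)).congr_of_eventuallyEq ?_
    filter_upwards [hU.mem_nhds ht] with u hu
    exact (iteratedDerivWithin_of_isOpen hU hu).symm
  rw [iteratedDeriv_succ]
  exact h2.hasDerivAt

theorem iteratedDeriv_comp_affine (f : ℝ → ℝ) (a c : ℝ) (i : ℕ) :
    iteratedDeriv i (fun τ => f (a + c * τ)) = fun τ => c ^ i * iteratedDeriv i f (a + c * τ) := by
  induction i with
  | zero => simp
  | succ i ih =>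
    rw [iteratedDeriv_succ, ih]
    ext τ
    rw [deriv_const_mul_field]
    have h1 := deriv_comp_mul_left c (fun u => iteratedDeriv i f (a + u)) τ
    rw [h1, deriv_comp_const_add, iteratedDeriv_succ, smul_eq_mul]
    ring

/-- Uniform boundedness of derivatives up to order `N` on `(-1,1)`. -/
def BD {ι : Type} (N : ℕ) (f : ι → ℝ → ℝ) : Prop :=
  (∀ k, ContDiffOn ℝ N (f k) (Ioo (-1) 1)) ∧
    ∃ C, ∀ k, ∀ i ≤ N, ∀ t ∈ Ioo (-1 : ℝ) 1, |iteratedDeriv i (f k) t| ≤ C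

theorem BD.mono {ι : Type} {N M : ℕ} {f : ι → ℝ → ℝ} (h : BD N f) (hM : M ≤ N) : BD M f :=
  ⟨fun k => (h.1 k).of_le (by exact_mod_cast hM), by
    obtain ⟨C, hC⟩ := h.2
    exact ⟨C, fun k i hi => hC k i (hi.trans hM)⟩⟩

theorem BD.reindex {ι κ : Type} {N : ℕ} {f : ι → ℝ → ℝ} (h : BD N f) (e : κ → ι) :
    BD N (fun k => f (e k)) :=
  ⟨fun k => h.1 _, by
    obtain ⟨C, hC⟩ := h.2
    exact ⟨C, fun k i hi => hC _ i hi⟩⟩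

/-- a bound that is at least one -/
theorem BD.bound {ι : Type} {N : ℕ} {f : ι → ℝ → ℝ} (h : BD N f) :
    ∃ C, 1 ≤ C ∧ ∀ k, ∀ i ≤ N, ∀ t ∈ Ioo (-1 : ℝ) 1, |iteratedDeriv i (f k) t| ≤ C := by
  obtain ⟨C, hC⟩ := h.2
  exact ⟨max C 1, le_max_right _ _, fun k i hi t ht => (hC k i hi t ht).trans (le_max_left _ _)⟩

theorem BD.bound_fin {ι : Type} {N n : ℕ} {f : Fin n → ι → ℝ → ℝ} (h : ∀ j, BD N (f j)) :
    ∃ C, 1 ≤ C ∧ ∀ j k, ∀ i ≤ N, ∀ t ∈ Ioo (-1 : ℝ) 1, |iteratedDeriv i (f j k) t| ≤ C := by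
  choose C h1 hC using fun j => (h j).bound
  refine ⟨1 + ∑ j, C j, ?_, ?_⟩
  · have : 0 ≤ ∑ j, C j := Finset.sum_nonneg fun j _ => by linarith [h1 j]
    linarith
  · intro j k i hi t ht
    have : C j ≤ ∑ j, C j := Finset.single_le_sum (f := C) (fun j _ => by linarith [h1 j])
      (Finset.mem_univ j)
    linarith [hC j k i hi t ht]

theorem BD.comp {ι : Type} {N n : ℕ} {f : Fin n → ι → ℝ → ℝ} (hf : ∀ j, BD N (f j))
    {φ : (Fin n → ℝ) → ℝ} {W K : Set (Fin n → ℝ)} (hW : IsOpen W) (hφ : ContDiffOn ℝ N φ W)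
    (hK : IsCompact K) (hKW : K ⊆ W) (hfK : ∀ k, ∀ t ∈ Ioo (-1 : ℝ) 1, (fun j => f j k t) ∈ K) :
    BD N (fun k t => φ (fun j => f j k t)) := by
  obtain ⟨C, hC1, hC⟩ := BD.bound_fin hf
  have hF : ∀ k, ContDiffOn ℝ N (fun t j => f j k t) (Ioo (-1) 1) := fun k =>
    contDiffOn_pi.2 fun j => (hf j).1 k
  refine ⟨fun k => hφ.comp (hF k) fun t ht => hKW (hfK k t ht), ?_⟩
  have hCK : ∃ C', ∀ i ≤ N, ∀ v ∈ K, ‖iteratedFDerivWithin ℝ i φ W v‖ ≤ C' := by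
    have h1 : ∀ i, ∃ C', i ≤ N → ∀ v ∈ K, ‖iteratedFDerivWithin ℝ i φ W v‖ ≤ C' := by
      intro i
      by_cases hi : i ≤ N
      · have := (hφ.continuousOn_iteratedFDerivWithin (m := i) (by exact_mod_cast hi)
          hW.uniqueDiffOn).mono hKW
        obtain ⟨C', hC'⟩ := hK.exists_bound_of_continuousOn this
        exact ⟨C', fun _ => hC'⟩
      · exact ⟨0, fun h => absurd h hi⟩
    choose C' hC' using h1
    refine ⟨∑ i ∈ Finset.range (N + 1), |C' i|, fun i hi v hv => ?_⟩
    have : |C' i| ≤ ∑ i ∈ Finset.range (N + 1), |C' i| :=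
      Finset.single_le_sum (f := fun i => |C' i|) (fun j _ => abs_nonneg _) (by simp; omega)
    exact ((hC' i hi v hv).trans (le_abs_self _)).trans this
  obtain ⟨C', hC'⟩ := hCK
  have hFb : ∃ D, 1 ≤ D ∧ ∀ k, ∀ i ≤ N, ∀ t ∈ Ioo (-1 : ℝ) 1,
      ‖iteratedFDerivWithin ℝ i (fun t j => f j k t) (Ioo (-1) 1) t‖ ≤ D := by
    refine ⟨1 + ∑ j, ‖ContinuousLinearMap.single ℝ (fun _ : Fin n => ℝ) j‖ * C, ?_, ?_⟩
    · have : 0 ≤ ∑ j, ‖ContinuousLinearMap.single ℝ (fun _ : Fin n => ℝ) j‖ * C :=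
        Finset.sum_nonneg fun j _ => by positivity
      linarith
    intro k i hi t ht
    have hs : (fun t j => f j k t) = fun t => ∑ j,
        ((ContinuousLinearMap.single ℝ (fun _ : Fin n => ℝ) j) ∘ f j k) t := by
      ext t j
      simp [Finset.sum_apply, Pi.single_apply]
    have huniq : UniqueDiffOn ℝ (Ioo (-1 : ℝ) 1) := isOpen_Ioo.uniqueDiffOn
    have hcd : ∀ j, ContDiffWithinAt ℝ i (f j k) (Ioo (-1 : ℝ) 1) t := fun j =>
      (((hf j).1 k) t ht).of_le (by exact_mod_cast hi)
    rw [hs, iteratedFDerivWithin_fun_sum_apply huniq ht]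
    · refine (norm_sum_le _ _).trans ?_
      refine (Finset.sum_le_sum (g := fun j =>
        ‖ContinuousLinearMap.single ℝ (fun _ : Fin n => ℝ) j‖ * C) fun j _ => ?_).trans (by linarith)
      refine ((ContinuousLinearMap.norm_iteratedFDerivWithin_comp_left _ (hcd j) huniq ht
        le_rfl)).trans ?_
      gcongr
      rw [norm_iteratedFDerivWithin_eq_norm_iteratedDerivWithin,
        iteratedDerivWithin_of_isOpen isOpen_Ioo ht]
      exact hC j k i hi t ht
    · intro j _
      exact (ContinuousLinearMap.contDiff _).contDiffAt.comp_contDiffWithinAt t (hcd j)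
  obtain ⟨D, hD1, hD⟩ := hFb
  refine ⟨(N.factorial : ℝ) * |C'| * D ^ N, fun k i hi t ht => ?_⟩
  have h := norm_iteratedFDerivWithin_comp_le (g := φ) (f := fun t j => f j k t) (n := i)
    (N := (i : ℕ)) (s := Ioo (-1 : ℝ) 1) (t := W) (x := t) (C := |C'|) (D := D)
    (hφ.of_le (by exact_mod_cast hi)) ((hF k).of_le (by exact_mod_cast hi)) le_rfl hW.uniqueDiffOn
    isOpen_Ioo.uniqueDiffOn (fun t ht => hKW (hfK k t ht)) ht
    (fun m hm => (hC' m (hm.trans hi) _ (hfK k t ht)).trans (le_abs_self _))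
    (fun m hm1 hm => (hD k m (hm.trans hi) t ht).trans (le_self_pow₀ hD1 (by omega)))
  rw [norm_iteratedFDerivWithin_eq_norm_iteratedDerivWithin,
        iteratedDerivWithin_of_isOpen isOpen_Ioo ht] at h
  refine h.trans ?_
  gcongr

/-- Landau type inequality -/
theorem landau_point (m : ℕ) : ∀ ℓ : ℝ, 0 < ℓ → ∃ C : ℝ, ∀ (F : ℕ → ℝ → ℝ) (a : ℝ) (M : ℝ),
    (∀ i < m, ∀ t ∈ Icc a (a + ℓ), HasDerivAt (F i) (F (i + 1) t) t) →
    (∀ t ∈ Icc a (a + ℓ), |F 0 t| ≤ M) → ∃ ξ ∈ Icc a (a + ℓ), |F m ξ| ≤ C * M := by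
  induction m with
  | zero =>
    intro ℓ hℓ
    exact ⟨1, fun F a M _ h => ⟨a, by simp [hℓ.le], by simpa using h a (by simp [hℓ.le])⟩⟩
  | succ m ih =>
    intro ℓ hℓ
    obtain ⟨C, hC⟩ := ih (ℓ / 3) (by positivity)
    refine ⟨2 * C / (ℓ / 3), fun F a M hd hb => ?_⟩
    obtain ⟨x, hx, hx'⟩ := hC F a M (fun i hi t ht => hd i (by omega) t ⟨ht.1, by linarith [ht.2]⟩)
      (fun t ht => hb t ⟨ht.1, by linarith [ht.2]⟩)
    obtain ⟨y, hy, hy'⟩ := hC F (a + 2 * ℓ / 3) M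
      (fun i hi t ht => hd i (by omega) t ⟨by linarith [ht.1], by linarith [ht.2]⟩)
      (fun t ht => hb t ⟨by linarith [ht.1], by linarith [ht.2]⟩)
    have hxy : ℓ / 3 ≤ y - x := by linarith [hx.2, hy.1]
    obtain ⟨ξ, hξ, hξ'⟩ := exists_hasDerivAt_eq_slope (F m) (F (m + 1)) (a := x) (b := y)
      (by linarith)
      (fun t ht => (hd m (by omega) t ⟨by linarith [ht.1, hx.1], by linarith [ht.2, hy.2]⟩).continuousAt.continuousWithinAt)
      (fun t ht => hd m (by omega) t ⟨by linarith [ht.1, hx.1], by linarith [ht.2, hy.2]⟩)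
    refine ⟨ξ, ⟨by linarith [hξ.1, hx.1], by linarith [hξ.2, hy.2]⟩, ?_⟩
    rw [hξ', abs_div, abs_of_pos (show 0 < y - x by linarith), div_le_iff₀ (by linarith)]
    have h1 : |F m y - F m x| ≤ 2 * (C * M) := by
      rw [abs_le] at *; constructor <;> linarith [hx'.1, hx'.2, hy'.1, hy'.2]
    have h0 : 0 ≤ C * M := (abs_nonneg _).trans hx'
    calc _ ≤ 2 * (C * M) := h1
      _ = 2 * C / (ℓ / 3) * M * (ℓ / 3) := by field_simp
      _ ≤ _ := by
        gcongr
        rw [div_mul_eq_mul_div]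
        exact div_nonneg (by linarith) (by linarith)

theorem landau (m : ℕ) : ∀ d ≤ m, ∀ A : ℝ, ∃ C : ℝ, ∀ (F : ℕ → ℝ → ℝ),
    (∀ i < m, ∀ t ∈ Ioo (-1 : ℝ) 1, HasDerivAt (F i) (F (i + 1) t) t) →
    (∀ t ∈ Ioo (-1 : ℝ) 1, |F 0 t| ≤ A) → (∀ t ∈ Ioo (-1 : ℝ) 1, |F m t| ≤ A) →
    ∀ t ∈ Ioo (-1 : ℝ) 1, |F (m - d) t| ≤ C := by
  intro d
  induction d with
  | zero => exact fun _ A => ⟨A, fun F _ _ h => h⟩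
  | succ d ih =>
    intro hd A
    obtain ⟨C, hC⟩ := ih (by omega) A
    obtain ⟨C', hC'⟩ := landau_point (m - (d + 1)) 1 one_pos
    refine ⟨C' * A + 2 * C, fun F h1 h2 h3 t ht => ?_⟩
    have hC2 := hC F h1 h2 h3
    have hC0 : 0 ≤ C := (abs_nonneg _).trans (hC2 t ht)
    obtain ⟨ξ, hξ, hξ'⟩ := hC' F (-1/2) A
      (fun i hi t ht => h1 i (by omega) t ⟨by linarith [ht.1], by linarith [ht.2]⟩)
      (fun t ht => h2 t ⟨by linarith [ht.1], by linarith [ht.2]⟩)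
    have hξI : ξ ∈ Ioo (-1 : ℝ) 1 := ⟨by linarith [hξ.1], by linarith [hξ.2]⟩
    have hmm : m - (d + 1) + 1 = m - d := by omega
    have := (convex_Ioo (-1 : ℝ) 1).norm_image_sub_le_of_norm_hasDerivWithin_le
      (f := F (m - (d + 1))) (f' := F (m - d)) (C := C)
      (fun x hx => by
        have := h1 (m - (d + 1)) (by omega) x hx
        rw [hmm] at this
        exact this.hasDerivWithinAt)
      (fun x hx => hC2 x hx) hξI ht
    simp only [Real.norm_eq_abs] at this
    have h4 : |t - ξ| ≤ 2 := by
      rw [abs_le]; constructor <;> linarith [ht.1, ht.2, hξI.1, hξI.2]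
    have h5 : C * |t - ξ| ≤ C * 2 := by gcongr
    have h6 := abs_sub_abs_le_abs_sub (F (m - (d+1)) t) (F (m - (d+1)) ξ)
    linarith

theorem BD.scale {ι : Type} {N : ℕ} {f : ι → ℝ → ℝ} (h : BD N f) {c : ℝ} (hc : 0 < c)
    (hc1 : c ≤ 1) : BD N (fun k t => f k (c * t)) := by
  have hmap : ∀ t ∈ Ioo (-1 : ℝ) 1, c * t ∈ Ioo (-1 : ℝ) 1 := by
    intro t ht
    constructor <;> nlinarith [ht.1, ht.2]
  refine ⟨fun k => (h.1 k).comp (contDiff_const.mul contDiff_id).contDiffOn hmap, ?_⟩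
  obtain ⟨C, h1, hC⟩ := h.bound
  refine ⟨C, fun k i hi t ht => ?_⟩
  have := congrFun (iteratedDeriv_comp_affine (f k) 0 c i) t
  simp only [zero_add] at this
  rw [this, abs_mul, abs_of_nonneg (by positivity)]
  calc _ ≤ 1 * C := mul_le_mul (pow_le_one₀ hc.le hc1) (hC k i hi _ (hmap t ht)) (abs_nonneg _)
          zero_le_one
    _ = C := one_mul C

end BDsec


open Set Filter Topology Polynomial

section PolyFacts

theorem sums_aux {n : ℕ} (y : Fin n → ℝ) (s : Finset (Fin n)) :
    let q : ℝ[X] := X ^ 2 * ∏ i ∈ s, (X - C (y i))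
    (∀ j, s.card + 3 ≤ j → q.coeff j = 0) ∧ q.coeff (s.card + 2) = 1 ∧
    q.coeff (s.card + 1) = - ∑ i ∈ s, y i ∧
    (q.coeff (s.card + 1)) ^ 2 - 2 * q.coeff s.card = ∑ i ∈ s, (y i) ^ 2 := by
  classical
  induction s using Finset.induction_on with
  | empty =>
    simp only [Finset.prod_empty, mul_one, Finset.card_empty, coeff_X_pow]
    norm_num
    intro j hj; omega
  | insert a s ha ih =>
    intro q
    simp only at ih
    obtain ⟨h1, h2, h3, h4⟩ := ih
    set q0 : ℝ[X] := X ^ 2 * ∏ i ∈ s, (X - C (y i)) with hq0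
    have hq : q = (X - C (y a)) * q0 := by
      simp only [q, hq0]
      rw [Finset.prod_insert ha]; ring
    have hc : ∀ j, q.coeff (j + 1) = q0.coeff j - y a * q0.coeff (j + 1) := by
      intro j
      rw [hq, sub_mul, coeff_sub, coeff_X_mul, coeff_C_mul]
    rw [Finset.card_insert_of_notMem ha, Finset.sum_insert ha, Finset.sum_insert ha]
    refine ⟨?_, ?_, ?_, ?_⟩
    · intro j hj
      obtain ⟨j, rfl⟩ : ∃ i, j = i + 1 := ⟨j - 1, by omega⟩
      rw [hc, h1 j (by omega), h1 (j + 1) (by omega)]; simp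
    · rw [show s.card + 1 + 2 = (s.card + 2) + 1 by ring, hc, h2, h1 _ (by omega)]; simp
    · rw [hc, h3, h2]; ring
    · rw [hc (s.card + 1), hc s.card, h2, ← h4]; ring

theorem pr_coeff_one {n : ℕ} (y : Fin (n + 1) → ℝ) : (pr y).coeff n = - ∑ i, y i := by
  have h := (sums_aux y Finset.univ).2.2.1
  simp only [Finset.card_univ, Fintype.card_fin] at h
  rw [show n + 1 + 1 = n + 2 by ring, coeff_X_pow_mul] at h
  exact h

theorem pr_sum_sq {n : ℕ} (y : Fin (n + 2) → ℝ) :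
    ∑ i, (y i) ^ 2 = ((pr y).coeff (n + 1)) ^ 2 - 2 * (pr y).coeff n := by
  have h := (sums_aux y Finset.univ).2.2.2
  simp only [Finset.card_univ, Fintype.card_fin] at h
  rw [show n + 2 + 1 = (n + 1) + 2 by ring, coeff_X_pow_mul, coeff_X_pow_mul] at h
  exact h.symm

theorem prod_coeff_continuous {n : ℕ} (s : Finset (Fin n)) (j : ℕ) :
    Continuous fun y : Fin n → ℝ => (∏ i ∈ s, (X - C (y i))).coeff j := by
  classical
  induction s using Finset.induction_on generalizing j with
  | empty => simp only [Finset.prod_empty]; exact continuous_const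
  | insert a s ha ih =>
    simp only [Finset.prod_insert ha, coeff_mul]
    refine continuous_finset_sum _ fun p _ => Continuous.mul ?_ (ih _)
    simp only [coeff_sub, coeff_C]
    split_ifs
    · exact continuous_const.sub (continuous_apply a)
    · exact continuous_const

theorem pr_coeff_continuous {n : ℕ} (j : ℕ) : Continuous fun y : Fin n → ℝ => (pr y).coeff j :=
  prod_coeff_continuous _ j

theorem pr_coeff_bound (n : ℕ) (B : ℝ) : ∃ C, 1 ≤ C ∧ ∀ y : Fin n → ℝ, (∀ i, |y i| ≤ B) →
    ∀ j : Fin n, |(pr y).coeff j| ≤ C := by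
  have h : ∀ j : Fin n, ∃ C, ∀ y ∈ Set.pi Set.univ fun _ : Fin n => Icc (-B) B,
      ‖(pr y).coeff j‖ ≤ C := fun j =>
    (isCompact_univ_pi fun _ => isCompact_Icc).exists_bound_of_continuousOn
      (pr_coeff_continuous (j : ℕ)).continuousOn
  choose C hC using h
  refine ⟨1 + ∑ j, |C j|, by linarith [Finset.sum_nonneg fun j (_ : j ∈ Finset.univ) => abs_nonneg (C j)],
    fun y hy j => ?_⟩
  have h1 := hC j y fun i _ => abs_le.1 (hy i)
  have h2 : |C j| ≤ ∑ j, |C j| := Finset.single_le_sum (f := fun j => |C j|)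
    (fun j _ => abs_nonneg _) (Finset.mem_univ j)
  rw [Real.norm_eq_abs] at h1
  linarith [le_abs_self (C j)]

theorem scaleRoots_pr {n : ℕ} (y : Fin n → ℝ) (s : ℝ) :
    (pr y).scaleRoots s = pr (fun i => s * y i) := by
  classical
  unfold pr
  induction (Finset.univ : Finset (Fin n)) using Finset.induction_on with
  | empty => simp
  | insert a t ha ih =>
    rw [Finset.prod_insert ha, Finset.prod_insert ha, mul_scaleRoots_of_noZeroDivisors, ih,
      X_sub_C_scaleRoots, mul_comm (y a)]

theorem taylor_pr {n : ℕ} (y : Fin n → ℝ) (m : ℝ) :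
    taylor m (pr y) = pr (fun i => y i - m) := by
  unfold pr
  rw [← taylorAlgHom_apply, map_prod]
  refine Finset.prod_congr rfl fun i _ => ?_
  rw [taylorAlgHom_apply, map_sub, taylor_X, taylor_C, C_sub]
  ring

theorem pr_isRoot {n : ℕ} (y : Fin n → ℝ) (x : ℝ) : (pr y).IsRoot x ↔ ∃ i, x = y i := by
  unfold pr
  rw [IsRoot.def, eval_prod, Finset.prod_eq_zero_iff]
  simp [sub_eq_zero]

/-- mean of the roots -/
noncomputable def mn (n : ℕ) (p : ℝ[X]) : ℝ := - p.coeff (n - 1) / n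

/-- centred polynomial -/
noncomputable def cen (n : ℕ) (p : ℝ[X]) : ℝ[X] := taylor (mn n p) p

theorem Hyp.cen {n : ℕ} {p : ℝ[X]} (h : Hyp n p) : Hyp n (cen n p) := by
  obtain ⟨y, rfl⟩ := h
  exact ⟨_, taylor_pr _ _⟩

theorem cen_pr {n : ℕ} (y : Fin n → ℝ) : cen n (pr y) = pr fun i => y i - mn n (pr y) :=
  taylor_pr _ _

theorem cen_coeff {n : ℕ} (hn : 1 ≤ n) {p : ℝ[X]} (h : Hyp n p) : (_root_.cen n p).coeff (n - 1) = 0 := by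
  obtain ⟨n, rfl⟩ : ∃ m, n = m + 1 := ⟨n - 1, by omega⟩
  obtain ⟨y, rfl⟩ := h
  rw [cen_pr]
  simp only [Nat.add_sub_cancel]
  rw [pr_coeff_one]
  simp only [Finset.sum_sub_distrib, mn, Nat.add_sub_cancel, pr_coeff_one]
  simp
  field_simp
  simp

theorem cen_isRoot {n : ℕ} {p : ℝ[X]} {x : ℝ} :
    (cen n p).IsRoot (x - mn n p) ↔ p.IsRoot x := by
  unfold cen
  rw [IsRoot.def, taylor_eval, sub_add_cancel, IsRoot.def]

theorem taylor_coeff_sum {n : ℕ} {p : ℝ[X]} (hp : p.natDegree ≤ n) (r : ℝ) (j : ℕ) :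
    (taylor r p).coeff j =
      ∑ i ∈ Finset.range (n + 1), ((i + j).choose j : ℝ) * p.coeff (i + j) * r ^ i := by
  rw [taylor_coeff, eval_eq_sum_range' (n := n + 1)]
  · simp only [hasseDeriv_coeff]
  · have := natDegree_hasseDeriv_le p j
    omega

theorem cen_contDiff {n : ℕ} (j : ℕ) {N : WithTop ℕ∞} :
    ContDiff ℝ N fun v : Fin n → ℝ => (cen n (mkp v)).coeff j := by
  unfold cen
  simp only [taylor_coeff_sum (n := n) (mkp_natDegree _).le, mn]
  refine ContDiff.sum fun i _ => ?_
  refine (contDiff_const.mul (contDiff_mkp_coeff _)).mul (ContDiff.pow ?_ _)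
  exact (contDiff_mkp_coeff _).neg.div_const _

end PolyFacts


open Set Filter Topology Polynomial

section Bronshtein

theorem slope_bound {x : ℝ → ℝ} {x' C : ℝ} (hx : HasDerivAt x x' 0)
    (h : ∃ᶠ t in 𝓝[≠] (0 : ℝ), |x t| ≤ C * |t|) : |x'| ≤ C := by
  have h0 : x 0 = 0 := by
    have h1 : Tendsto (fun t => |x t| - C * |t|) (𝓝[≠] 0) (𝓝 (|x 0| - C * |0|)) :=
      ((hx.continuousAt.abs.tendsto).sub
        ((continuous_const.mul continuous_abs).tendsto 0)).mono_left nhdsWithin_le_nhds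
    have h2 := le_of_tendsto_of_frequently h1 (b := 0) (h.mono fun t ht => by linarith)
    simp only [abs_zero, mul_zero, sub_zero] at h2
    exact abs_nonpos_iff.1 h2
  have h1 := (hasDerivAt_iff_tendsto_slope.1 hx).abs
  refine le_of_tendsto_of_frequently h1 ?_
  refine (h.and_eventually self_mem_nhdsWithin).mono fun t ht => ?_
  have hne : t ≠ 0 := ht.2
  rw [slope_def_field, h0, sub_zero, sub_zero, abs_div, div_le_iff₀ (abs_pos.2 hne)]
  exact ht.1

def Br (n : ℕ) : Prop := ∀ (ι : Type) (P : ι → ℝ → ℝ[X]),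
  (∀ k, ∀ t ∈ Ioo (-1 : ℝ) 1, Hyp n (P k t)) → (∀ j : Fin n, BD n fun k t => (P k t).coeff j) →
  ∃ L, ∀ k (x : ℝ → ℝ) (x' : ℝ), (∃ᶠ t in 𝓝[≠] (0 : ℝ), (P k t).IsRoot (x t)) →
    HasDerivAt x x' 0 → |x'| ≤ L

theorem tendsto_mul_punctured {c : ℝ} (hc : c ≠ 0) :
    Tendsto (fun t : ℝ => c⁻¹ * t) (𝓝[≠] 0) (𝓝[≠] 0) := by
  refine tendsto_nhdsWithin_iff.2 ⟨?_, ?_⟩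
  · have : Tendsto (fun t : ℝ => c⁻¹ * t) (𝓝 0) (𝓝 (c⁻¹ * 0)) :=
      (continuous_const.mul continuous_id).tendsto 0
    rw [mul_zero] at this
    exact this.mono_left nhdsWithin_le_nhds
  · filter_upwards [self_mem_nhdsWithin] with t ht
    have : t ≠ 0 := ht
    simp [hc, this]

theorem freq_scale {c : ℝ} (hc : c ≠ 0) {p : ℝ → Prop} (h : ∃ᶠ t in 𝓝[≠] (0 : ℝ), p t) :
    ∃ᶠ t in 𝓝[≠] (0 : ℝ), p (c * t) := by
  refine (tendsto_mul_punctured hc).frequently (p := fun t => p (c * t)) ?_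
  refine h.mono fun t ht => ?_
  rwa [← mul_assoc, mul_inv_cancel₀ hc, one_mul]

theorem br_local {n : ℕ} (IH : ∀ m < n, Br m) {ι : Type} (Q : ι → ℝ → ℝ[X])
    (hQ : ∀ k, ∀ t ∈ Ioo (-1 : ℝ) 1, Hyp n (Q k t)) (hB : ∀ j : Fin n, BD n fun k t => (Q k t).coeff j)
    (w : Fin n → ℝ) (i j : Fin n) (hw : w i ≠ w j) :
    ∃ s ∈ 𝓝 w, ∃ L, ∀ k, (∃ v ∈ s, Q k 0 = pr v) → ∀ (x : ℝ → ℝ) (x' : ℝ),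
      (∃ᶠ t in 𝓝[≠] (0 : ℝ), (Q k t).IsRoot (x t)) → HasDerivAt x x' 0 → |x'| ≤ L := by
  have hn : 1 ≤ n := by have := i.2; omega
  obtain ⟨k, l, hkl, hk, hl, φ, ψ, W, hW, hwW, hφ, hψ, hfac⟩ := split_exists w i j hw n
  obtain ⟨δ, hδ, hδW⟩ := Metric.nhds_basis_closedBall.mem_iff.1 (hW.mem_nhds hwW)
  obtain ⟨C, hC1, hC⟩ := BD.bound_fin hB
  have hcont : Continuous fun v : Fin n → ℝ => cf n (pr v) :=
    continuous_pi fun j => pr_coeff_continuous (j : ℕ)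
  refine ⟨{v | cf n (pr v) ∈ Metric.ball (cf n (pr w)) (δ / 2)},
    hcont.continuousAt.preimage_mem_nhds (Metric.ball_mem_nhds _ (by positivity)), ?_⟩
  set s := {v | cf n (pr v) ∈ Metric.ball (cf n (pr w)) (δ / 2)}
  set c : ℝ := min 1 (δ / 2 / C) with hc
  have hc0 : 0 < c := lt_min one_pos (by positivity)
  have hc1 : c ≤ 1 := min_le_left _ _
  have hcC : C * c ≤ δ / 2 := by
    have : c ≤ δ / 2 / C := min_le_right _ _
    rw [le_div_iff₀ (by linarith)] at this; linarith
  have hmap : ∀ t ∈ Ioo (-1 : ℝ) 1, c * t ∈ Ioo (-1 : ℝ) 1 := by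
    intro t ht
    constructor <;> nlinarith [ht.1, ht.2]
  let κ := {k : ι // ∃ v ∈ s, Q k 0 = pr v}
  have hB' : ∀ j : Fin n, BD n fun (k : κ) t => (Q k.1 (c * t)).coeff j := fun j =>
    ((hB j).scale hc0 hc1).reindex Subtype.val
  have hK : ∀ (k : κ), ∀ t ∈ Ioo (-1 : ℝ) 1, cf n (Q k.1 (c * t)) ∈
      Metric.closedBall (cf n (pr w)) δ := by
    rintro ⟨k, v, hv, hkv⟩ t ht
    rw [Metric.mem_closedBall, dist_pi_le_iff hδ.le]
    intro j
    have h1 : dist ((pr v).coeff j) ((pr w).coeff j) ≤ δ / 2 := by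
      have : dist (cf n (pr v)) (cf n (pr w)) < δ / 2 := hv
      exact ((dist_pi_lt_iff (by positivity)).1 this j).le
    have h2 : dist ((Q k (c * t)).coeff j) ((Q k 0).coeff j) ≤ δ / 2 := by
      have := (convex_Ioo (-1 : ℝ) 1).norm_image_sub_le_of_norm_hasDerivWithin_le
        (f := fun t => (Q k t).coeff j) (f' := iteratedDeriv 1 fun t => (Q k t).coeff j) (C := C)
        (x := 0) (y := c * t)
        (fun x hx => by
          have := iteratedDeriv_hasDerivAt isOpen_Ioo ((hB j).1 k) (i := 0) (by omega) hx
          rw [iteratedDeriv_zero] at this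
          exact this.hasDerivWithinAt)
        (fun x hx => hC j k 1 hn x hx) (by norm_num) (hmap t ht)
      rw [Real.dist_eq]
      refine (this.trans ?_)
      rw [Real.norm_eq_abs, sub_zero, abs_mul, abs_of_pos hc0]
      have : |t| ≤ 1 := abs_le.2 ⟨ht.1.le, ht.2.le⟩
      calc C * (c * |t|) ≤ C * (c * 1) := by gcongr
        _ ≤ δ / 2 := by linarith
    rw [hkv] at h2
    exact (dist_triangle _ ((pr v).coeff j) _).trans ((add_le_add h2 h1).trans (by linarith))
  have hfac' : ∀ (k : κ), ∀ t ∈ Ioo (-1 : ℝ) 1, Q k.1 (c * t) =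
      mkp (φ (cf n (Q k.1 (c * t)))) * mkp (ψ (cf n (Q k.1 (c * t)))) := by
    intro k t ht
    have h1 := hQ k.1 _ (hmap t ht)
    have h2 := hfac _ (hδW (hK k t ht))
    rwa [mkp_cf h1.monic h1.natDegree] at h2
  obtain ⟨L1, hL1⟩ := IH k hk κ (fun k t => mkp (φ (cf n (Q k.1 (c * t)))))
    (fun k t ht => (hQ k.1 _ (hmap t ht)).of_dvd (mkp_monic _) (mkp_natDegree _)
      ⟨_, hfac' k t ht⟩)
    (fun j => by
      simp only [mkp_coeff]
      exact (BD.comp hB' hW (contDiffOn_pi.1 hφ j) (isCompact_closedBall _ _) hδW hK).mono hk.le)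
  obtain ⟨L2, hL2⟩ := IH l hl κ (fun k t => mkp (ψ (cf n (Q k.1 (c * t)))))
    (fun k t ht => (hQ k.1 _ (hmap t ht)).of_dvd (mkp_monic _) (mkp_natDegree _)
      ⟨_, (hfac' k t ht).trans (mul_comm _ _)⟩)
    (fun j => by
      simp only [mkp_coeff]
      exact (BD.comp hB' hW (contDiffOn_pi.1 hψ j) (isCompact_closedBall _ _) hδW hK).mono hl.le)
  refine ⟨max L1 L2 / c, fun k hk x x' hx hx' => ?_⟩
  have hf := freq_scale hc0.ne' hx
  have hI : ∀ᶠ t in 𝓝[≠] (0 : ℝ), t ∈ Ioo (-1 : ℝ) 1 :=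
    nhdsWithin_le_nhds (Ioo_mem_nhds (by norm_num) (by norm_num))
  have hf2 : ∃ᶠ t in 𝓝[≠] (0 : ℝ), (mkp (φ (cf n (Q k (c * t))))).IsRoot (x (c * t)) ∨
      (mkp (ψ (cf n (Q k (c * t))))).IsRoot (x (c * t)) := by
    refine (hf.and_eventually hI).mono fun t ht => ?_
    have h1 := ht.1
    rw [hfac' ⟨k, hk⟩ t ht.2, IsRoot.def, eval_mul, mul_eq_zero] at h1
    exact h1
  have hd : HasDerivAt (fun t => x (c * t)) (x' * c) 0 := by
    have h1 : HasDerivAt (fun t : ℝ => c * t) c 0 := by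
      simpa using (hasDerivAt_id (0 : ℝ)).const_mul c
    refine HasDerivAt.comp (h₂ := x) 0 ?_ h1
    simpa using hx'
  have key : |x' * c| ≤ max L1 L2 := by
    rcases frequently_or_distrib.1 hf2 with h | h
    · exact (hL1 ⟨k, hk⟩ _ _ h hd).trans (le_max_left _ _)
    · exact (hL2 ⟨k, hk⟩ _ _ h hd).trans (le_max_right _ _)
  rw [abs_mul, abs_of_pos hc0] at key
  rwa [le_div_iff₀ hc0]

end Bronshtein


open Set Filter Topology Polynomial

section Bronshtein2

theorem second_diff {F F1 F2 : ℝ → ℝ} {A : ℝ}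
    (h0 : ∀ t ∈ Ioo (-1 : ℝ) 1, HasDerivAt F (F1 t) t)
    (h1 : ∀ t ∈ Ioo (-1 : ℝ) 1, HasDerivAt F1 (F2 t) t)
    (h2 : ∀ t ∈ Ioo (-1 : ℝ) 1, |F2 t| ≤ A) {t : ℝ} (ht : t ∈ Ioo (-1 : ℝ) 1) :
    |F t + F (-t) - 2 * F 0| ≤ 2 * A * t ^ 2 := by
  have hA : 0 ≤ A := (abs_nonneg _).trans (h2 t ht)
  have habs : |t| < 1 := abs_lt.2 ⟨ht.1, ht.2⟩
  have hI : ∀ u ∈ Icc (-|t|) |t|, u ∈ Ioo (-1 : ℝ) 1 := fun u hu =>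
    ⟨by linarith [hu.1], by linarith [hu.2]⟩
  have hI' : ∀ u ∈ Icc (-|t|) |t|, -u ∈ Ioo (-1 : ℝ) 1 := fun u hu =>
    ⟨by linarith [hu.2], by linarith [hu.1]⟩
  have hb : ∀ u ∈ Icc (-|t|) |t|, ‖F1 u - F1 (-u)‖ ≤ 2 * A * |t| := by
    intro u hu
    have := (convex_Ioo (-1 : ℝ) 1).norm_image_sub_le_of_norm_hasDerivWithin_le
      (f := F1) (f' := F2) (C := A) (fun x hx => (h1 x hx).hasDerivWithinAt)
      (fun x hx => h2 x hx) (hI' u hu) (hI u hu)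
    refine this.trans ?_
    have h3 : ‖u - -u‖ ≤ 2 * |t| := by
      rw [Real.norm_eq_abs, abs_le]; constructor <;> linarith [hu.1, hu.2]
    calc A * ‖u - -u‖ ≤ A * (2 * |t|) := by gcongr
      _ = _ := by ring
  have := (convex_Icc (-|t|) |t|).norm_image_sub_le_of_norm_hasDerivWithin_le
    (f := fun u => F u + F (-u)) (f' := fun u => F1 u - F1 (-u)) (C := 2 * A * |t|)
    (x := 0) (y := t)
    (fun x hx => by
      have e1 := h0 x (hI x hx)
      have e2 : HasDerivAt (fun u => F (-u)) (F1 (-x) * (-1)) x :=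
        HasDerivAt.comp (h₂ := F) x (h0 (-x) (hI' x hx)) (hasDerivAt_neg x)
      refine ((e1.add e2).congr_deriv ?_).hasDerivWithinAt
      ring)
    hb (by simp) ⟨neg_abs_le t, le_abs_self t⟩
  simp only [neg_zero, sub_zero, Real.norm_eq_abs] at this
  have e : F t + F (-t) - (F 0 + F 0) = F t + F (-t) - 2 * F 0 := by ring
  rw [e] at this
  refine this.trans (le_of_eq ?_)
  rw [mul_assoc, ← sq, sq_abs]

theorem BD.of {ι : Type} {N : ℕ} {f : ι → ℝ → ℝ} (h : ∀ k, ContDiffOn ℝ N (f k) (Ioo (-1) 1))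
    (h2 : ∀ i ≤ N, ∃ C, ∀ k, ∀ t ∈ Ioo (-1 : ℝ) 1, |iteratedDeriv i (f k) t| ≤ C) : BD N f := by
  refine ⟨h, ?_⟩
  have h3 : ∀ i, ∃ C, i ≤ N → ∀ k, ∀ t ∈ Ioo (-1 : ℝ) 1, |iteratedDeriv i (f k) t| ≤ C := by
    intro i
    by_cases hi : i ≤ N
    · obtain ⟨C, hC⟩ := h2 i hi
      exact ⟨C, fun _ => hC⟩
    · exact ⟨0, fun h => absurd h hi⟩
  choose C hC using h3
  refine ⟨∑ i ∈ Finset.range (N + 1), |C i|, fun k i hi t ht => ?_⟩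
  have : |C i| ≤ ∑ i ∈ Finset.range (N + 1), |C i| :=
    Finset.single_le_sum (f := fun i => |C i|) (fun j _ => abs_nonneg _) (by simp; omega)
  exact ((hC i hi k t ht).trans (le_abs_self _)).trans this

theorem exists_ne_of_sphere {n : ℕ} (w : Fin n → ℝ) (h1 : ∑ i, w i = 0) (h2 : ∑ i, w i ^ 2 = 1) :
    ∃ i j, w i ≠ w j := by
  by_contra hcon
  push Not at hcon
  have hz : ∀ i, w i = 0 := by
    intro i
    have h3 : ∑ j, w j = n * w i := by
      rw [Finset.sum_congr rfl fun j _ => hcon j i]; simp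
    rw [h1] at h3
    have hn : (n : ℝ) ≠ 0 := by
      have := i.2
      have : n ≠ 0 := by omega
      exact_mod_cast this
    have := (mul_eq_zero.1 h3.symm).resolve_left hn
    exact this
  simp [hz] at h2

theorem sphere_compact (n : ℕ) : IsCompact {w : Fin n → ℝ | ∑ i, w i = 0 ∧ ∑ i, w i ^ 2 = 1} := by
  refine IsCompact.of_isClosed_subset (isCompact_univ_pi fun _ : Fin n => isCompact_Icc (a := (-1 : ℝ))
    (b := 1)) ?_ ?_
  · refine IsClosed.inter ?_ ?_
    · exact isClosed_eq (by fun_prop) continuous_const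
    · exact isClosed_eq (by fun_prop) continuous_const
  · intro w hw i _
    have : w i ^ 2 ≤ 1 := hw.2 ▸ Finset.single_le_sum (f := fun i => w i ^ 2)
      (fun j _ => sq_nonneg _) (Finset.mem_univ i)
    exact abs_le.1 (abs_le_one_iff_mul_self_le_one.2 (by nlinarith))

theorem br_centred {m : ℕ} (IH : ∀ k < m + 2, Br k) (ι : Type) (P : ι → ℝ → ℝ[X])
    (hP : ∀ k, ∀ t ∈ Ioo (-1 : ℝ) 1, Hyp (m + 2) (P k t))
    (hB : ∀ j : Fin (m + 2), BD (m + 2) fun k t => (P k t).coeff j)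
    (hcen : ∀ k, ∀ t ∈ Ioo (-1 : ℝ) 1, (P k t).coeff (m + 1) = 0) :
    ∃ L, ∀ k (x : ℝ → ℝ) (x' : ℝ), (∃ᶠ t in 𝓝[≠] (0 : ℝ), (P k t).IsRoot (x t)) →
      HasDerivAt x x' 0 → |x'| ≤ L := by
  obtain ⟨C, hC1, hC⟩ := BD.bound_fin hB
  let f : ι → ℝ → ℝ := fun k t => -2 * (P k t).coeff m
  have hf : ∀ k, ∀ t ∈ Ioo (-1 : ℝ) 1, ∀ y : Fin (m + 2) → ℝ, P k t = pr y →
      ∑ i, y i ^ 2 = f k t := by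
    intro k t ht y hy
    rw [pr_sum_sq, ← hy, hcen k t ht]
    simp only [f]; ring
  have hf0 : ∀ k, ∀ t ∈ Ioo (-1 : ℝ) 1, 0 ≤ f k t := by
    intro k t ht
    obtain ⟨y, hy⟩ := hP k t ht
    rw [← hf k t ht y hy]
    exact Finset.sum_nonneg fun i _ => sq_nonneg _
  set A : ℝ := 2 * C with hA
  have hzero : (0 : ℝ) ∈ Ioo (-1 : ℝ) 1 := by norm_num
  have hfA : ∀ k, f k 0 ≤ A := by
    intro k
    have := hC ⟨m, by omega⟩ k 0 (by omega) 0 hzero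
    simp only [iteratedDeriv_zero] at this
    have := (abs_le.1 this).1
    simp only [f]; linarith
  have hsd : ∀ k, ∀ t ∈ Ioo (-1 : ℝ) 1, f k t ≤ 2 * f k 0 + 2 * A * t ^ 2 := by
    intro k t ht
    have := second_diff (F := fun t => (P k t).coeff m)
      (F1 := iteratedDeriv 1 fun t => (P k t).coeff m)
      (F2 := iteratedDeriv 2 fun t => (P k t).coeff m) (A := C)
      (fun u hu => by
        have := iteratedDeriv_hasDerivAt isOpen_Ioo ((hB ⟨m, by omega⟩).1 k) (i := 0) (by omega) hu
        rwa [iteratedDeriv_zero] at this)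
      (fun u hu => iteratedDeriv_hasDerivAt isOpen_Ioo ((hB ⟨m, by omega⟩).1 k) (i := 1) (by omega) hu)
      (fun u hu => hC ⟨m, by omega⟩ k 2 (by omega) u hu) ht
    have h1 := (abs_le.1 this).1
    have h2 := hf0 k (-t) ⟨by linarith [ht.2], by linarith [ht.1]⟩
    simp only [f] at *
    nlinarith
  let r : ι → ℝ := fun k => √(f k 0)
  have hr2 : ∀ k, r k ^ 2 = f k 0 := fun k => Real.sq_sqrt (hf0 k 0 hzero)
  have hr0 : ∀ k, 0 ≤ r k := fun k => Real.sqrt_nonneg _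
  have hrA : ∀ k, r k ≤ A := by
    intro k
    have := hr2 k; have := hfA k; have := hr0 k
    by_contra hcon
    push Not at hcon
    nlinarith
  set c : ℝ := 1 / (1 + A) with hc
  have hc0 : 0 < c := by positivity
  have hc1 : c ≤ 1 := by rw [hc, div_le_one (by linarith)]; linarith
  have hcA : c * (1 + A) = 1 := by
    rw [hc, one_div, inv_mul_cancel₀ (by linarith)]
  have hcr : ∀ k, c * r k ≤ 1 := fun k => by
    have := hrA k
    nlinarith
  have hmap : ∀ k, 0 < r k → ∀ t ∈ Ioo (-1 : ℝ) 1, c * r k * t ∈ Ioo (-1 : ℝ) 1 := by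
    intro k hk t ht
    have h1 := hcr k
    have h2 : 0 < c * r k := by positivity
    constructor <;> nlinarith [ht.1, ht.2]
  let κ := {k : ι // 0 < r k}
  let Q : κ → ℝ → ℝ[X] := fun k t => (P k.1 (c * r k.1 * t)).scaleRoots (r k.1)⁻¹
  have hQ : ∀ k, ∀ t ∈ Ioo (-1 : ℝ) 1, Hyp (m + 2) (Q k t) := by
    intro k t ht
    obtain ⟨y, hy⟩ := hP k.1 _ (hmap k.1 k.2 t ht)
    exact ⟨_, by simp only [Q]; rw [hy, scaleRoots_pr]⟩
  have hQc : ∀ (k : κ) (j : Fin (m + 2)), EqOn (fun t => (Q k t).coeff j)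
      (fun t => (r k.1)⁻¹ ^ (m + 2 - j : ℕ) * (P k.1 (0 + c * r k.1 * t)).coeff j) (Ioo (-1) 1) := by
    intro k j t ht
    simp only [Q]
    rw [coeff_scaleRoots, (hP k.1 _ (hmap k.1 k.2 t ht)).natDegree, mul_comm, zero_add]
  have hQB : ∀ j : Fin (m + 2), BD (m + 2) fun k t => (Q k t).coeff j := by
    intro j
    have hcd : ∀ k : κ, ContDiffOn ℝ (m + 2 : ℕ) (fun t => (Q k t).coeff j) (Ioo (-1) 1) := by
      intro k
      refine ContDiffOn.congr ?_ (hQc k j)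
      refine contDiffOn_const.mul ?_
      refine ((hB j).1 k.1).comp (contDiff_const.add (contDiff_const.mul contDiff_id)).contDiffOn ?_
      intro t ht
      simpa using hmap k.1 k.2 t ht
    have hit : ∀ (k : κ) (i : ℕ), ∀ t ∈ Ioo (-1 : ℝ) 1, iteratedDeriv i (fun t => (Q k t).coeff j) t =
        (r k.1)⁻¹ ^ (m + 2 - j : ℕ) * ((c * r k.1) ^ i *
          iteratedDeriv i (fun t => (P k.1 t).coeff j) (c * r k.1 * t)) := by
      intro k i t ht
      rw [(hQc k j).iteratedDeriv_of_isOpen isOpen_Ioo i ht, iteratedDeriv_const_mul_field,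
        iteratedDeriv_comp_affine (fun t => (P k.1 t).coeff j) 0 (c * r k.1) i]
      simp only [zero_add]
    set d : ℕ := m + 2 - j with hd
    -- order zero
    obtain ⟨C1, hC11, hC1b⟩ := pr_coeff_bound (m + 2) 2
    have hz : ∀ (k : κ), ∀ t ∈ Ioo (-1 : ℝ) 1, |(Q k t).coeff j| ≤ C1 := by
      intro k t ht
      have hk := k.2
      have ht' := hmap k.1 k.2 t ht
      obtain ⟨y, hy⟩ := hP k.1 _ ht'
      have : Q k t = pr fun i => (r k.1)⁻¹ * y i := by simp only [Q]; rw [hy, scaleRoots_pr]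
      rw [this]
      refine hC1b _ (fun i => ?_) j
      have h1 : y i ^ 2 ≤ f k.1 (c * r k.1 * t) := by
        rw [← hf _ _ ht' y hy]
        exact Finset.single_le_sum (f := fun i => y i ^ 2) (fun j _ => sq_nonneg _) (Finset.mem_univ i)
      have h2 := hsd k.1 _ ht'
      rw [← hr2] at h2
      have h3 : A * (c * r k.1 * t) ^ 2 ≤ r k.1 ^ 2 := by
        have e1 : A * c ^ 2 ≤ 1 := by nlinarith
        have e2 : t ^ 2 ≤ 1 := by nlinarith [ht.1, ht.2]
        calc A * (c * r k.1 * t) ^ 2 = (A * c ^ 2) * (r k.1 ^ 2 * t ^ 2) := by ring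
          _ ≤ 1 * (r k.1 ^ 2 * 1) := by gcongr
          _ = _ := by ring
      have h4 : |y i| ≤ 2 * r k.1 := abs_le_of_sq_le_sq (by nlinarith) (by positivity)
      rw [abs_mul, abs_of_pos (inv_pos.2 hk), inv_mul_le_iff₀ hk]
      linarith
    have hhigh : ∀ i, d ≤ i → i ≤ m + 2 → ∀ (k : κ), ∀ t ∈ Ioo (-1 : ℝ) 1,
        |iteratedDeriv i (fun t => (Q k t).coeff j) t| ≤ (1 + A) ^ (m + 2) * C := by
      intro i hdi hi k t ht
      have hk := k.2
      rw [hit k i t ht]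
      have h1 := hC j k.1 i hi _ (hmap k.1 k.2 t ht)
      have e : (r k.1)⁻¹ ^ d * ((c * r k.1) ^ i *
          iteratedDeriv i (fun t => (P k.1 t).coeff j) (c * r k.1 * t)) =
          c ^ i * r k.1 ^ (i - d) * iteratedDeriv i (fun t => (P k.1 t).coeff j) (c * r k.1 * t) := by
        have : r k.1 ^ i = r k.1 ^ d * r k.1 ^ (i - d) := by rw [← pow_add]; congr 1; omega
        rw [mul_pow, this, inv_pow]
        field_simp
      rw [e, abs_mul, abs_of_nonneg (by positivity)]
      have e1 : c ^ i ≤ 1 := pow_le_one₀ hc0.le hc1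
      have e2 : r k.1 ^ (i - d) ≤ (1 + A) ^ (m + 2) := by
        calc r k.1 ^ (i - d) ≤ (1 + A) ^ (i - d) := by
              gcongr; linarith [hrA k.1]
          _ ≤ (1 + A) ^ (m + 2) := pow_le_pow_right₀ (by linarith) (by omega)
      calc _ ≤ 1 * (1 + A) ^ (m + 2) * C := by gcongr
        _ = _ := by ring
    refine BD.of hcd fun i hi => ?_
    rcases le_total d i with hdi | hdi
    · exact ⟨_, hhigh i hdi hi⟩
    · obtain ⟨C3, hC3⟩ := landau d (d - i) (by omega) (max C1 ((1 + A) ^ (m + 2) * C))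
      refine ⟨C3, fun k t ht => ?_⟩
      have := hC3 (fun i => iteratedDeriv i (fun t => (Q k t).coeff j))
        (fun i hi t ht => iteratedDeriv_hasDerivAt isOpen_Ioo (hcd k) (by omega) ht)
        (fun t ht => by
          simp only [iteratedDeriv_zero]
          exact (hz k t ht).trans (le_max_left _ _))
        (fun t ht => (hhigh d le_rfl (by omega) k t ht).trans (le_max_right _ _)) t ht
      rwa [show d - (d - i) = i by omega] at this
  have hcomp := (sphere_compact (m + 2)).induction_on
    (p := fun s => ∃ L, ∀ k : κ, (∃ v ∈ s, Q k 0 = pr v) → ∀ (x : ℝ → ℝ) (x' : ℝ),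
      (∃ᶠ t in 𝓝[≠] (0 : ℝ), (Q k t).IsRoot (x t)) → HasDerivAt x x' 0 → |x'| ≤ L)
    ⟨0, fun k h => by obtain ⟨v, hv, _⟩ := h; exact absurd hv (by simp)⟩
    (fun s t hst ⟨L, hL⟩ => ⟨L, fun k ⟨v, hv, hv'⟩ => hL k ⟨v, hst hv, hv'⟩⟩)
    (fun s t ⟨L, hL⟩ ⟨L', hL'⟩ => ⟨max L L', fun k ⟨v, hv, hv'⟩ x x' h h' => by
      rcases hv with hv | hv
      · exact (hL k ⟨v, hv, hv'⟩ x x' h h').trans (le_max_left _ _)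
      · exact (hL' k ⟨v, hv, hv'⟩ x x' h h').trans (le_max_right _ _)⟩)
    (fun w hw => by
      obtain ⟨i, j, hij⟩ := exists_ne_of_sphere w hw.1 hw.2
      obtain ⟨s, hs, hL⟩ := br_local IH Q hQ hQB w i j hij
      exact ⟨s, mem_nhdsWithin_of_mem_nhds hs, hL⟩)
  obtain ⟨L, hL⟩ := hcomp
  refine ⟨max (L / c) (2 * A), fun k x x' hx hx' => ?_⟩
  have hI : ∀ᶠ t in 𝓝[≠] (0 : ℝ), t ∈ Ioo (-1 : ℝ) 1 :=
    nhdsWithin_le_nhds (Ioo_mem_nhds (by norm_num) (by norm_num))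
  rcases (hr0 k).eq_or_lt with hk | hk
  · refine le_trans ?_ (le_max_right _ _)
    refine slope_bound hx' ((hx.and_eventually hI).mono fun t ht => ?_)
    obtain ⟨y, hy⟩ := hP k t ht.2
    have h1 := ht.1
    rw [hy, pr_isRoot] at h1
    obtain ⟨i, hi⟩ := h1
    have h2 : y i ^ 2 ≤ f k t := by
      rw [← hf _ _ ht.2 y hy]
      exact Finset.single_le_sum (f := fun i => y i ^ 2) (fun j _ => sq_nonneg _) (Finset.mem_univ i)
    have h3 := hsd k t ht.2
    rw [← hr2, ← hk] at h3
    rw [hi]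
    refine abs_le_of_sq_le_sq ?_ (by positivity)
    rw [mul_pow, sq_abs]
    have : 2 * A * t ^ 2 ≤ (2 * A) ^ 2 * t ^ 2 := by
      gcongr
      nlinarith
    nlinarith
  · refine le_trans ?_ (le_max_left _ _)
    have hck : c * r k ≠ 0 := by positivity
    obtain ⟨y, hy⟩ := hP k 0 hzero
    have hyf := hf k 0 hzero y hy
    have hQ0 : Q ⟨k, hk⟩ 0 = pr fun i => (r k)⁻¹ * y i := by
      simp only [Q]; rw [mul_zero, hy, scaleRoots_pr]
    have h1 := hL ⟨k, hk⟩ ⟨_, ⟨?_, ?_⟩, hQ0⟩ (fun t => (r k)⁻¹ * x (c * r k * t))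
      ((r k)⁻¹ * (x' * (c * r k))) ?_ ?_
    · have e : (r k)⁻¹ * (x' * (c * r k)) = x' * c := by field_simp
      rw [e, abs_mul, abs_of_pos hc0] at h1
      rwa [le_div_iff₀ hc0]
    · rw [← Finset.mul_sum]
      have := hcen k 0 hzero
      rw [hy, pr_coeff_one] at this
      rw [neg_eq_zero.1 this, mul_zero]
    · simp only [mul_pow]
      rw [← Finset.mul_sum, hyf, ← hr2]
      field_simp
    · refine (freq_scale hck (hx.and_eventually hI)).mono fun t ht => ?_
      obtain ⟨z, hz⟩ := hP k _ ht.2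
      have h2 := ht.1
      rw [hz, pr_isRoot] at h2
      obtain ⟨i, hi⟩ := h2
      simp only [Q]
      rw [hz, scaleRoots_pr, pr_isRoot]
      exact ⟨i, by rw [hi]⟩
    · have h3 : HasDerivAt (fun t : ℝ => c * r k * t) (c * r k) 0 := by
        simpa using (hasDerivAt_id (0 : ℝ)).const_mul (c * r k)
      refine (HasDerivAt.comp (h₂ := x) 0 ?_ h3).const_mul _
      simpa using hx'

theorem br_all (n : ℕ) : Br n := by
  induction n using Nat.strong_induction_on with
  | _ n IH =>
  intro ι P hP hB
  have hI : ∀ᶠ t in 𝓝[≠] (0 : ℝ), t ∈ Ioo (-1 : ℝ) 1 :=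
    nhdsWithin_le_nhds (Ioo_mem_nhds (by norm_num) (by norm_num))
  have hzero : (0 : ℝ) ∈ Ioo (-1 : ℝ) 1 := by norm_num
  rcases Nat.eq_zero_or_pos n with rfl | hn
  · refine ⟨0, fun k x x' hx _ => ?_⟩
    obtain ⟨t, ht, ht'⟩ := (hx.and_eventually hI).exists
    obtain ⟨y, hy⟩ := hP k t ht'
    rw [hy, pr_isRoot] at ht
    obtain ⟨i, _⟩ := ht
    exact i.elim0
  obtain ⟨C, hC1, hC⟩ := BD.bound_fin hB
  -- centred family
  let R : ι → ℝ → ℝ[X] := fun k t => cen n (P k t)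
  have hR : ∀ k, ∀ t ∈ Ioo (-1 : ℝ) 1, Hyp n (R k t) := fun k t ht => (hP k t ht).cen
  have hRB : ∀ j : Fin n, BD n fun k t => (R k t).coeff j := by
    intro j
    have h1 := BD.comp hB isOpen_univ (cen_contDiff (n := n) j).contDiffOn
      (isCompact_closedBall (0 : Fin n → ℝ) C) (subset_univ _) (fun k t ht => by
        rw [mem_closedBall_zero_iff, pi_norm_le_iff_of_nonneg (by linarith)]
        intro j
        have := hC j k 0 (by omega) t ht
        simpa [iteratedDeriv_zero] using this)
    have heq : ∀ k, EqOn (fun t => (R k t).coeff j) (fun t => (cen n (mkp fun i : Fin n =>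
        (P k t).coeff i)).coeff j) (Ioo (-1) 1) := by
      intro k t ht
      have h2 := hP k t ht
      have := mkp_cf h2.monic h2.natDegree
      simp only [R]
      conv_lhs => rw [← this]
      rfl
    refine ⟨fun k => (h1.1 k).congr (heq k), ?_⟩
    obtain ⟨C', hC'⟩ := h1.2
    refine ⟨C', fun k i hi t ht => ?_⟩
    rw [(heq k).iteratedDeriv_of_isOpen isOpen_Ioo i ht]
    exact hC' k i hi t ht
  have hcen : ∀ k, ∀ t ∈ Ioo (-1 : ℝ) 1, (R k t).coeff (n - 1) = 0 := fun k t ht =>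
    cen_coeff hn (hP k t ht)
  have key : ∃ L, ∀ k (x : ℝ → ℝ) (x' : ℝ), (∃ᶠ t in 𝓝[≠] (0 : ℝ), (R k t).IsRoot (x t)) →
      HasDerivAt x x' 0 → |x'| ≤ L := by
    rcases Nat.lt_or_ge n 2 with h2 | h2
    · obtain rfl : n = 1 := by omega
      refine ⟨0, fun k x x' hx hx' => ?_⟩
      refine slope_bound hx' ((hx.and_eventually hI).mono fun t ht => ?_)
      obtain ⟨y, hy⟩ := hR k t ht.2
      have h3 := hcen k t ht.2
      have h4 := ht.1
      rw [hy] at h3 h4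
      rw [pr_coeff_one (n := 0)] at h3
      obtain ⟨i, hi⟩ := (pr_isRoot _ _).1 h4
      simp at h3
      rw [hi, Subsingleton.elim i 0, h3]; simp
    · obtain ⟨m, rfl⟩ : ∃ m, n = m + 2 := ⟨n - 2, by omega⟩
      exact br_centred IH ι R hR hRB hcen
  obtain ⟨L, hL⟩ := key
  refine ⟨L + C, fun k x x' hx hx' => ?_⟩
  have hm : HasDerivAt (fun t => mn n (P k t))
      (-(iteratedDeriv 1 (fun t => (P k t).coeff (n - 1)) 0) / n) 0 := by
    have := iteratedDeriv_hasDerivAt isOpen_Ioo ((hB ⟨n - 1, by omega⟩).1 k) (i := 0) (by omega) hzero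
    rw [iteratedDeriv_zero] at this
    exact this.neg.div_const _
  have hb : |-(iteratedDeriv 1 (fun t => (P k t).coeff (n - 1)) 0) / n| ≤ C := by
    rw [abs_div, abs_neg, Nat.abs_cast]
    have h1 := hC ⟨n - 1, by omega⟩ k 1 (by omega) 0 hzero
    have h2 : (1 : ℝ) ≤ n := by exact_mod_cast hn
    exact (div_le_self (abs_nonneg _) h2).trans h1
  have := hL k (fun t => x t - mn n (P k t)) _ (hx.mono fun t ht => cen_isRoot.2 ht) (hx'.sub hm)
  have h3 := abs_sub_abs_le_abs_sub x' (-(iteratedDeriv 1 (fun t => (P k t).coeff (n - 1)) 0) / n)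
  linarith

end Bronshtein2


open Set Filter Topology Polynomial

section Jets

theorem lh_tower (p : ℕ) (F : ℕ → ℝ → ℝ)
    (hd : ∀ i < p, ∀ᶠ s in 𝓝 (0 : ℝ), HasDerivAt (F i) (F (i + 1) s) s)
    (hc : ContinuousAt (F p) 0) (h0 : ∀ i < p, F i 0 = 0) :
    ∀ k ≤ p, Tendsto (fun s => F (p - k) s / s ^ k) (𝓝[≠] 0) (𝓝 (F p 0 / k.factorial)) := by
  intro k
  induction k with
  | zero => intro _; simpa using hc.tendsto.mono_left nhdsWithin_le_nhds
  | succ k ih =>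
    intro hk
    have h1 := ih (by omega)
    have e : p - (k + 1) + 1 = p - k := by omega
    have hd1 := hd (p - (k + 1)) (by omega)
    rw [e] at hd1
    refine HasDerivAt.lhopital_zero_nhdsNE (f' := F (p - k)) (g' := fun s => ((k + 1 : ℕ) : ℝ) * s ^ k)
      (hd1.filter_mono nhdsWithin_le_nhds) (Eventually.of_forall fun s => by
        simpa using hasDerivAt_pow (k + 1) s) ?_ ?_ ?_ ?_
    · filter_upwards [self_mem_nhdsWithin] with s hs
      have : s ≠ 0 := hs
      positivity
    · have := hd1.self_of_nhds.continuousAt.tendsto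
      rw [h0 _ (by omega)] at this
      exact this.mono_left nhdsWithin_le_nhds
    · have : Tendsto (fun s : ℝ => s ^ (k + 1)) (𝓝 0) (𝓝 (0 ^ (k + 1))) := (continuous_pow _).tendsto 0
      rw [zero_pow (by omega)] at this
      exact this.mono_left nhdsWithin_le_nhds
    · have h2 := h1.div_const ((k + 1 : ℕ) : ℝ)
      rw [Nat.factorial_succ]
      push_cast at h2 ⊢
      convert h2 using 2 with s
      · rw [div_div, mul_comm]
      · rw [div_div, mul_comm]

theorem tower_zero (p : ℕ) (F : ℕ → ℝ → ℝ)
    (hd : ∀ i < p, ∀ᶠ s in 𝓝 (0 : ℝ), HasDerivAt (F i) (F (i + 1) s) s)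
    (hO : F 0 =O[𝓝 0] fun s => s ^ p) : ∀ i < p, F i 0 = 0 := by
  intro i
  induction i using Nat.strong_induction_on with
  | _ i ih =>
    intro hi
    have h1 := lh_tower i F (fun l hl => hd l (by omega)) (hd i hi).self_of_nhds.continuousAt
      (fun l hl => ih l hl (by omega)) i le_rfl
    have h2 : Tendsto (fun s => F 0 s / s ^ i) (𝓝[≠] 0) (𝓝 0) := by
      have hO' : (fun s => F 0 s / s ^ i) =O[𝓝[≠] 0] fun s => s ^ (p - i) := by
        have h3 := (hO.mono nhdsWithin_le_nhds).mul
          (Asymptotics.isBigO_refl (fun s : ℝ => (s ^ i)⁻¹) (𝓝[≠] 0))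
        refine h3.congr' (Eventually.of_forall fun s => (div_eq_mul_inv _ _).symm) ?_
        filter_upwards [self_mem_nhdsWithin] with s hs
        have : s ≠ 0 := hs
        rw [← div_eq_mul_inv, div_eq_iff (by positivity), ← pow_add]
        congr 1; omega
      refine hO'.trans_tendsto ?_
      have : Tendsto (fun s : ℝ => s ^ (p - i)) (𝓝 0) (𝓝 (0 ^ (p - i))) := (continuous_pow _).tendsto 0
      rw [zero_pow (by omega)] at this
      exact this.mono_left nhdsWithin_le_nhds
    rw [Nat.sub_self] at h1
    have h3 := tendsto_nhds_unique h1 h2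
    have := i.factorial_pos
    have h4 : (i.factorial : ℝ) ≠ 0 := by positivity
    rcases div_eq_zero_iff.1 h3 with h | h
    · exact h
    · exact absurd h h4

theorem contDiffAt_tower {N : ℕ} {f : ℝ → ℝ} {t : ℝ} (hf : ContDiffAt ℝ N f t) :
    ∃ U, IsOpen U ∧ t ∈ U ∧ ContDiffOn ℝ N f U ∧
      (∀ i < N, ∀ s ∈ U, HasDerivAt (iteratedDeriv i f) (iteratedDeriv (i + 1) f s) s) ∧
      ∀ i ≤ N, ∀ s ∈ U, ContinuousAt (iteratedDeriv i f) s := by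
  obtain ⟨u, hu, hfu⟩ := hf.contDiffOn (m := N) le_rfl (by simp)
  obtain ⟨U, hUu, hU, htU⟩ := mem_nhds_iff.1 hu
  refine ⟨U, hU, htU, hfu.mono hUu, fun i hi s hs => iteratedDeriv_hasDerivAt hU (hfu.mono hUu) hi hs,
    fun i hi s hs => ?_⟩
  have h1 := (hfu.mono hUu).continuousOn_iteratedDerivWithin (m := i) (by exact_mod_cast hi)
    hU.uniqueDiffOn
  refine (h1.continuousAt (hU.mem_nhds hs)).congr ?_
  filter_upwards [hU.mem_nhds hs] with v hv
  exact iteratedDerivWithin_of_isOpen hU hv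

/-- the scaled derivatives converge -/
theorem scaled_limit {N j : ℕ} (hj : j ≤ N) {f : ℝ → ℝ} (hf : ContDiffAt ℝ N f 0)
    (hO : f =O[𝓝 0] fun s => s ^ j) :
    ∀ l ≤ N, ∃ c, Tendsto (fun s => s ^ (l : ℤ) / s ^ (j : ℤ) * iteratedDeriv l f s) (𝓝[≠] 0) (𝓝 c) := by
  intro l hl
  obtain ⟨U, hU, h0U, -, hd, hc⟩ := contDiffAt_tower hf
  have hU0 := hU.mem_nhds h0U
  have hd' : ∀ i < j, ∀ᶠ s in 𝓝 (0 : ℝ), HasDerivAt (iteratedDeriv i f) (iteratedDeriv (i + 1) f s) s := by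
    intro i hi
    filter_upwards [hU0] with s hs using hd i (by omega) s hs
  by_cases hlj : j ≤ l
  · refine ⟨0 ^ (l - j) * iteratedDeriv l f 0, ?_⟩
    have h1 : Tendsto (fun s : ℝ => s ^ (l - j) * iteratedDeriv l f s) (𝓝[≠] 0)
        (𝓝 (0 ^ (l - j) * iteratedDeriv l f 0)) :=
      (((continuous_pow (l - j)).tendsto (0 : ℝ)).mul (hc l hl 0 h0U).tendsto).mono_left nhdsWithin_le_nhds
    refine h1.congr' ?_
    filter_upwards [self_mem_nhdsWithin] with s hs
    have hs' : s ≠ 0 := hs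
    congr 1
    rw [zpow_natCast, zpow_natCast, eq_div_iff (by positivity), ← pow_add]
    congr 1; omega
  · have h1 := lh_tower j (fun i => iteratedDeriv i f) hd' (hc j hj 0 h0U)
      (tower_zero j (fun i => iteratedDeriv i f) hd' (by simpa using hO)) (j - l) (by omega)
    refine ⟨_, h1.congr' ?_⟩
    filter_upwards [self_mem_nhdsWithin] with s hs
    have hs' : s ≠ 0 := hs
    have e : j - (j - l) = l := by omega
    have e2 : j = l + (j - l) := by omega
    rw [e, zpow_natCast, zpow_natCast, div_mul_eq_mul_div, div_eq_div_iff (by positivity) (by positivity)]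
    nth_rewrite 1 [e2]
    rw [pow_add]; ring

/-- Euler-type tower. -/
noncomputable def eul (j : ℕ) (f : ℝ → ℝ) : ℕ → ℕ → ℝ → ℝ
  | 0, l => fun u => Real.exp u ^ (l : ℤ) / Real.exp u ^ (j : ℤ) * iteratedDeriv l f (Real.exp u)
  | i + 1, l => fun u => ((l : ℝ) - j) * eul j f i l u + eul j f i (l + 1) u

theorem eul_deriv {N j : ℕ} {f : ℝ → ℝ} {U : Set ℝ}
    (hd : ∀ i < N, ∀ s ∈ U, HasDerivAt (iteratedDeriv i f) (iteratedDeriv (i + 1) f s) s) :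
    ∀ i l, i + l < N → ∀ u, Real.exp u ∈ U → HasDerivAt (eul j f i l) (eul j f (i + 1) l u) u := by
  intro i
  induction i with
  | zero =>
    intro l hl u hu
    have h1 : HasDerivAt (fun u => Real.exp u ^ (l : ℤ) / Real.exp u ^ (j : ℤ))
        (((l : ℝ) - j) * (Real.exp u ^ (l : ℤ) / Real.exp u ^ (j : ℤ))) u := by
      have h2 : HasDerivAt (fun u : ℝ => Real.exp (((l : ℝ) - j) * u))
          (Real.exp (((l : ℝ) - j) * u) * (((l : ℝ) - j) * 1)) u :=
        ((hasDerivAt_id u).const_mul _).exp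
      have e : ∀ u : ℝ, Real.exp u ^ (l : ℤ) / Real.exp u ^ (j : ℤ) = Real.exp (((l : ℝ) - j) * u) := by
        intro u
        rw [zpow_natCast, zpow_natCast, ← Real.exp_nat_mul, ← Real.exp_nat_mul, ← Real.exp_sub]
        congr 1; ring
      simp_rw [e]
      convert h2 using 1
      ring
    have h3 := h1.mul ((hd l (by omega) _ hu).comp u (Real.hasDerivAt_exp u))
    refine h3.congr_deriv ?_
    simp only [eul, Function.comp]
    have : Real.exp u ≠ 0 := (Real.exp_pos u).ne'
    push_cast
    rw [zpow_add₀ this, zpow_one]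
    ring
  | succ i ih =>
    intro l hl u hu
    exact ((ih l (by omega) u hu).const_mul _).add (ih (l + 1) (by omega) u hu)

theorem eul_limit {N j : ℕ} (hj : j ≤ N) {f : ℝ → ℝ} (hf : ContDiffAt ℝ N f 0)
    (hO : f =O[𝓝 0] fun s => s ^ j) :
    ∀ i l, i + l ≤ N → ∃ c, Tendsto (eul j f i l) atBot (𝓝 c) := by
  intro i
  induction i with
  | zero =>
    intro l hl
    obtain ⟨c, hc⟩ := scaled_limit hj hf hO l (by omega)
    refine ⟨c, ?_⟩
    refine hc.comp (tendsto_nhdsWithin_iff.2 ⟨Real.tendsto_exp_atBot, ?_⟩)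
    exact Eventually.of_forall fun u => (Real.exp_pos u).ne'
  | succ i ih =>
    intro l hl
    obtain ⟨c, hc⟩ := ih l (by omega)
    obtain ⟨c', hc'⟩ := ih (l + 1) (by omega)
    exact ⟨_, (hc.const_mul _).add hc'⟩

theorem limit_deriv_zero {g g' : ℝ → ℝ} {c c' : ℝ} (hd : ∀ᶠ u in atBot, HasDerivAt g (g' u) u)
    (hg : Tendsto g atBot (𝓝 c)) (hg' : Tendsto g' atBot (𝓝 c')) : c' = 0 := by
  have h1 : Tendsto (fun u => g u - g (u - 1)) atBot (𝓝 (c - c)) :=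
    hg.sub (hg.comp (tendsto_atBot_add_const_right atBot (-1) tendsto_id))
  rw [sub_self] at h1
  obtain ⟨u0, hu0⟩ := eventually_atBot.1 hd
  have h2 : ∀ u, ∃ ξ, u ≤ u0 → ξ ≤ u ∧ g u - g (u - 1) = g' ξ := by
    intro u
    by_cases hu : u ≤ u0
    · obtain ⟨ξ, hξ, h⟩ := exists_hasDerivAt_eq_slope g g' (show u - 1 < u by linarith)
        (fun v hv => (hu0 v (hv.2.trans hu)).continuousAt.continuousWithinAt)
        (fun v hv => hu0 v (hv.2.le.trans hu))
      refine ⟨ξ, fun _ => ⟨hξ.2.le, ?_⟩⟩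
      rw [h]; ring
    · exact ⟨0, fun h => absurd h hu⟩
  choose ξ hξ using h2
  have h3 : Tendsto ξ atBot atBot := by
    refine tendsto_atBot_mono' (atBot : Filter ℝ) (f₂ := ξ) (f₁ := fun u : ℝ => u) ?_ tendsto_id
    filter_upwards [eventually_le_atBot u0] with u hu using (hξ u hu).1
  refine tendsto_nhds_unique (hg'.comp h3) (h1.congr' ?_)
  filter_upwards [eventually_le_atBot u0] with u hu using (hξ u hu).2

end Jets


open Set Filter Topology Polynomial

section Dzero

theorem d0_pos {m : ℕ} (Q : ℝ → ℝ[X]) (hQ : ∀ᶠ s in 𝓝 (0 : ℝ), Hyp m (Q s))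
    (hc : ∀ j : Fin m, ContDiffAt ℝ m (fun s => (Q s).coeff j) 0)
    (hO : ∀ j : Fin m, (fun s => (Q s).coeff j) =O[𝓝 0] fun s => s ^ (m - j : ℕ)) {ε : ℝ} (hε : 0 < ε) :
    ∀ᶠ s in 𝓝[>] (0 : ℝ), ∀ (x : ℝ → ℝ) (x' : ℝ), (∃ᶠ t in 𝓝[≠] s, (Q t).IsRoot (x t)) →
      HasDerivAt x x' s → |x' - x s / s| ≤ ε := by
  -- the tower
  let H : Fin m → ℕ → ℝ → ℝ := fun j i => eul (m - j : ℕ) (fun s => (Q s).coeff j) i 0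
  choose U hU h0U hUc hUd hUk using fun j => contDiffAt_tower (hc j)
  have hV : ∀ᶠ s in 𝓝 (0 : ℝ), Hyp m (Q s) ∧ ∀ j, s ∈ U j :=
    hQ.and (eventually_all.2 fun j => (hU j).mem_nhds (h0U j))
  obtain ⟨δ, hδ, hδV⟩ := Metric.eventually_nhds_iff_ball.1 hV
  have hexp : ∀ u < Real.log δ, Hyp m (Q (Real.exp u)) ∧ ∀ j, Real.exp u ∈ U j := by
    intro u hu
    refine hδV _ ?_
    rw [mem_ball_zero_iff, Real.norm_eq_abs, abs_of_pos (Real.exp_pos u)]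
    exact (Real.lt_log_iff_exp_lt hδ).1 hu
  have hHd : ∀ j, ∀ i < m, ∀ u < Real.log δ, HasDerivAt (H j i) (H j (i + 1) u) u := fun j i hi u hu =>
    eul_deriv (hUd j) i 0 (by omega) u ((hexp u hu).2 j)
  have hHl : ∀ j, ∀ i ≤ m, ∃ c, Tendsto (H j i) atBot (𝓝 c) := fun j i hi =>
    eul_limit (by omega) (hc j) (hO j) i 0 (by omega)
  have hH0 : ∀ j, ∀ i ≤ m, 1 ≤ i → Tendsto (H j i) atBot (𝓝 0) := by
    intro j i hi h1
    obtain ⟨i, rfl⟩ : ∃ k, i = k + 1 := ⟨i - 1, by omega⟩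
    obtain ⟨c, hc⟩ := hHl j i (by omega)
    obtain ⟨c', hc'⟩ := hHl j (i + 1) hi
    have : c' = 0 := by
      refine limit_deriv_zero ?_ hc hc'
      filter_upwards [eventually_lt_atBot (Real.log δ)] with u hu using hHd j i (by omega) u hu
    rwa [this] at hc'
  -- coefficients of the rescaled polynomial
  let R : ℝ → ℝ[X] := fun u => (Q (Real.exp u)).scaleRoots (Real.exp u)⁻¹
  have hR : ∀ u < Real.log δ, Hyp m (R u) := by
    intro u hu
    obtain ⟨y, hy⟩ := (hexp u hu).1
    exact ⟨_, by simp only [R]; rw [hy, scaleRoots_pr]⟩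
  have hRc : ∀ (j : Fin m), ∀ u < Real.log δ, (R u).coeff j = H j 0 u := by
    intro j u hu
    simp only [R, H, eul]
    rw [coeff_scaleRoots, (hexp u hu).1.natDegree, iteratedDeriv_zero, zpow_natCast, zpow_natCast,
      inv_pow, pow_zero]
    ring
  have hRi : ∀ (j : Fin m), ∀ i ≤ m, ∀ u < Real.log δ, iteratedDeriv i (fun u => (R u).coeff j) u = H j i u := by
    intro j i
    induction i with
    | zero => intro _ u hu; rw [iteratedDeriv_zero]; exact hRc j u hu
    | succ i ih =>
      intro hi u hu
      rw [iteratedDeriv_succ]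
      have : iteratedDeriv i (fun u => (R u).coeff j) =ᶠ[𝓝 u] H j i := by
        filter_upwards [Iio_mem_nhds hu] with v hv using ih (by omega) v hv
      rw [this.deriv_eq]
      exact (hHd j i (by omega) u hu).deriv
  have hRcd : ∀ j : Fin m, ContDiffOn ℝ m (fun u => (R u).coeff j) (Iio (Real.log δ)) := by
    intro j
    have h1 : ContDiffOn ℝ m (fun u => (Q (Real.exp u)).coeff j * (Real.exp u)⁻¹ ^ (m - j : ℕ))
        (Iio (Real.log δ)) := by
      refine ContDiffOn.mul ((hUc j).comp Real.contDiff_exp.contDiffOn fun u hu => (hexp u hu).2 j) ?_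
      exact ((Real.contDiff_exp.inv fun u => (Real.exp_pos u).ne').pow _).contDiffOn
    refine h1.congr fun u hu => ?_
    simp only [R]
    rw [coeff_scaleRoots, (hexp u hu).1.natDegree]
  -- the bound
  have hB : ∃ C, 1 ≤ C ∧ ∀ j : Fin m, ∀ᶠ u in atBot, |H j 0 u| ≤ C := by
    choose c hc using fun j => hHl j 0 (by omega)
    refine ⟨1 + ∑ j, |c j|, le_add_of_nonneg_right (Finset.sum_nonneg fun j _ => abs_nonneg _), fun j => ?_⟩
    have h1 : |c j| ≤ ∑ j, |c j| :=
      Finset.single_le_sum (f := fun j => |c j|) (fun _ _ => abs_nonneg _) (Finset.mem_univ j)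
    exact ((hc j).abs.eventually_le_const (show |c j| < 1 + ∑ j, |c j| by linarith))
  obtain ⟨C, hC1, hC⟩ := hB
  let κ := {k : ℝ × ℝ // 1 ≤ k.1 ∧ k.2 + k.1 < Real.log δ ∧ ∀ u < k.2 + k.1,
    ∀ j : Fin m, |H j 0 u| ≤ C ∧ ∀ i ≤ m, 1 ≤ i → |H j i u| ≤ 1 / k.1 ^ i}
  let P : κ → ℝ → ℝ[X] := fun k τ => R (k.1.2 + k.1.1 * τ)
  have hlt : ∀ (k : κ), ∀ τ ∈ Ioo (-1 : ℝ) 1, k.1.2 + k.1.1 * τ < k.1.2 + k.1.1 := by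
    intro k τ hτ
    have := k.2.1
    nlinarith [hτ.2]
  have hlt2 : ∀ (k : κ), ∀ τ ∈ Ioo (-1 : ℝ) 1, k.1.2 + k.1.1 * τ < Real.log δ := fun k τ hτ =>
    (hlt k τ hτ).trans k.2.2.1
  obtain ⟨L, hL⟩ := br_all m κ P (fun k τ hτ => hR _ (hlt2 k τ hτ)) (fun j => by
    refine ⟨fun k => ?_, C, fun k i hi τ hτ => ?_⟩
    · exact (hRcd j).comp (contDiff_const.add (contDiff_const.mul contDiff_id)).contDiffOn
        fun τ hτ => hlt2 k τ hτ
    · have h1 := congrFun (iteratedDeriv_comp_affine (fun u => (R u).coeff j) k.1.2 k.1.1 i) τ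
      simp only [P]
      rw [h1, hRi j i hi _ (hlt2 k τ hτ)]
      have h2 := k.2.2.2 _ (hlt k τ hτ) j
      have hk := k.2.1
      rcases Nat.eq_zero_or_pos i with rfl | hi0
      · simpa using h2.1
      · rw [abs_mul, abs_of_pos (by positivity)]
        calc _ ≤ k.1.1 ^ i * (1 / k.1.1 ^ i) := by gcongr; exact h2.2 i hi hi0
          _ = 1 := by field_simp
          _ ≤ C := hC1)
  set K : ℝ := 1 + |L| / ε with hK
  have hK1 : 1 ≤ K := le_add_of_nonneg_right (by positivity)
  have hKL : L ≤ ε * K := by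
    rw [hK, mul_add, mul_div_cancel₀ _ hε.ne']
    linarith [le_abs_self L]
  have hev : ∀ᶠ u in atBot, u < Real.log δ ∧ ∀ j : Fin m, |H j 0 u| ≤ C ∧ ∀ i ≤ m, 1 ≤ i →
      |H j i u| ≤ 1 / K ^ i := by
    refine (eventually_lt_atBot _).and (eventually_all.2 fun j => (hC j).and ?_)
    have : ∀ i ∈ Finset.range (m + 1), ∀ᶠ u in atBot, 1 ≤ i → |H j i u| ≤ 1 / K ^ i := by
      intro i hi
      by_cases h1 : 1 ≤ i
      · have h2 := (hH0 j i (by simp at hi; omega) h1).abs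
        rw [abs_zero] at h2
        filter_upwards [h2.eventually_le_const (show 0 < 1 / K ^ i by positivity)] with u hu _ using hu
      · exact Eventually.of_forall fun u h => absurd h h1
    filter_upwards [(Finset.eventually_all _).2 this] with u hu i hi h1
    exact hu i (by simp; omega) h1
  obtain ⟨u0, hu0⟩ := eventually_atBot.1 hev
  filter_upwards [Ioo_mem_nhdsGT (show (0 : ℝ) < Real.exp (u0 - K) from Real.exp_pos _)] with s hs x x' hx hd
  have hs0 : 0 < s := hs.1
  have hsu : Real.log s + K < u0 := by
    have := (Real.log_lt_iff_lt_exp hs0).2 hs.2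
    linarith
  let k : κ := ⟨(K, Real.log s), hK1, (hu0 _ hsu.le).1, fun u hu => (hu0 u (hu.le.trans hsu.le)).2⟩
  have hK0 : K ≠ 0 := by linarith
  let w : ℝ → ℝ := fun τ => (Real.exp (Real.log s + K * τ))⁻¹ * x (Real.exp (Real.log s + K * τ))
  have he0 : Real.exp (Real.log s + K * 0) = s := by rw [mul_zero, add_zero, Real.exp_log hs0]
  have hed : HasDerivAt (fun τ => Real.exp (Real.log s + K * τ)) (s * K) 0 := by
    have := (((hasDerivAt_id (0 : ℝ)).const_mul K).const_add (Real.log s)).exp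
    simp only [id, he0, mul_one] at this
    exact this
  have hwd : HasDerivAt w (K * (x' - x s / s)) 0 := by
    have h1 : HasDerivAt (fun τ => x (Real.exp (Real.log s + K * τ))) (x' * (s * K)) 0 := by
      have hd' : HasDerivAt x x' (Real.exp (Real.log s + K * 0)) := by rwa [he0]
      exact hd'.comp (0 : ℝ) hed
    have h2 := (hed.inv (by rw [he0]; exact hs0.ne')).mul h1
    refine h2.congr_deriv ?_
    simp only [Pi.inv_apply, he0]
    field_simp
    ring
  have hfr : ∃ᶠ τ in 𝓝[≠] (0 : ℝ), (P k τ).IsRoot (w τ) := by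
    have h1 : Tendsto (fun t => (Real.log t - Real.log s) / K) (𝓝[≠] s) (𝓝[≠] 0) := by
      refine tendsto_nhdsWithin_iff.2 ⟨?_, ?_⟩
      · have h2 : ContinuousAt (fun t => (Real.log t - Real.log s) / K) s :=
          ((Real.continuousAt_log hs0.ne').sub continuousAt_const).div_const K
        have h3 := h2.tendsto
        simp only [sub_self, zero_div] at h3
        exact h3.mono_left nhdsWithin_le_nhds
      · filter_upwards [self_mem_nhdsWithin, nhdsWithin_le_nhds (Ioi_mem_nhds hs0)] with t ht ht0
        have h3 : Real.log t ≠ Real.log s := fun h => ht (Real.log_injOn_pos ht0 hs0 h)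
        exact div_ne_zero (sub_ne_zero.2 h3) hK0
    refine h1.frequently (p := fun τ => (P k τ).IsRoot (w τ)) ?_
    have hHy : ∀ᶠ t in 𝓝[≠] s, 0 < t ∧ Hyp m (Q t) := by
      have hsδ : s < δ := by
        have : Real.log s < Real.log δ := by linarith [(hu0 u0 le_rfl).1]
        exact (Real.log_lt_log_iff hs0 hδ).1 this
      filter_upwards [nhdsWithin_le_nhds (Ioo_mem_nhds hs0 hsδ)] with t ht
      exact ⟨ht.1, (hδV t (by rw [mem_ball_zero_iff, Real.norm_eq_abs, abs_of_pos ht.1]; exact ht.2)).1⟩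
    refine (hx.and_eventually hHy).mono fun t ht => ?_
    obtain ⟨hr, ht0, y, hy⟩ := ht
    have e1 : Real.log s + K * ((Real.log t - Real.log s) / K) = Real.log t := by field_simp; ring
    simp only [P, R, w, k, e1, Real.exp_log ht0]
    rw [hy, pr_isRoot] at hr
    obtain ⟨i, hi⟩ := hr
    rw [hy, scaleRoots_pr, pr_isRoot]
    exact ⟨i, by rw [hi]⟩
  have := hL k w _ hfr hwd
  rw [abs_mul, abs_of_pos (by linarith)] at this
  have hKp : 0 < K := by linarith
  nlinarith

theorem d0 {m : ℕ} (Q : ℝ → ℝ[X]) (hQ : ∀ᶠ s in 𝓝 (0 : ℝ), Hyp m (Q s))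
    (hc : ∀ j : Fin m, ContDiffAt ℝ m (fun s => (Q s).coeff j) 0)
    (hO : ∀ j : Fin m, (fun s => (Q s).coeff j) =O[𝓝 0] fun s => s ^ (m - j : ℕ)) {ε : ℝ} (hε : 0 < ε) :
    ∀ᶠ s in 𝓝[≠] (0 : ℝ), ∀ (x : ℝ → ℝ) (x' : ℝ), (∃ᶠ t in 𝓝[≠] s, (Q t).IsRoot (x t)) →
      HasDerivAt x x' s → |x' - x s / s| ≤ ε := by
  rw [← nhdsLT_sup_nhdsGT, eventually_sup]
  refine ⟨?_, d0_pos Q hQ hc hO hε⟩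
  have hneg : Tendsto (fun s : ℝ => -s) (𝓝 0) (𝓝 0) := by
    simpa using (continuous_neg.tendsto (0 : ℝ))
  have h1 := d0_pos (fun s => Q (-s)) (hneg.eventually hQ) (fun j => by
      have h2 : ContDiffAt ℝ m (fun s => (Q s).coeff j) (-0) := by rw [neg_zero]; exact hc j
      exact h2.comp (0 : ℝ) contDiff_neg.contDiffAt) (fun j => by
      refine ((hO j).comp_tendsto hneg).trans ?_
      refine Asymptotics.IsBigO.of_bound 1 (Eventually.of_forall fun s => ?_)
      simp) hε
  have h2 : Tendsto (fun s : ℝ => -s) (𝓝[<] 0) (𝓝[>] 0) := by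
    have := tendsto_neg_nhdsLT (a := (0 : ℝ))
    simpa using this
  filter_upwards [h2.eventually h1] with s hs x x' hx hd
  have h3 := hs (fun t => x (-t)) (-x') (by
    have h4 : Tendsto (fun t : ℝ => -t) (𝓝[≠] s) (𝓝[≠] (-s)) := by
      refine tendsto_nhdsWithin_iff.2 ⟨(continuous_neg.tendsto s).mono_left nhdsWithin_le_nhds, ?_⟩
      filter_upwards [self_mem_nhdsWithin] with t ht
      simpa using ht
    refine h4.frequently (p := fun t => (Q (-t)).IsRoot (x (-t))) ?_
    simpa using hx) (by
    have hd' : HasDerivAt x x' (- -s) := by rwa [neg_neg]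
    have := hd'.comp (-s) (hasDerivAt_neg (-s))
    rw [mul_neg_one] at this
    exact this)
  rw [← abs_neg]
  simp only [neg_neg] at h3
  convert h3 using 2
  rw [div_neg]; ring

end Dzero


open Set Filter Topology Polynomial

section RootsCont

theorem root_bound {m : ℕ} {C : ℝ} (y : Fin m → ℝ) (h : ∀ j : Fin m, |(pr y).coeff j| ≤ C) (i : Fin m) :
    |y i| ≤ C + 1 := by
  have hC : 0 ≤ C := (abs_nonneg _).trans (h i)
  have h1 : (pr y).IsRoot (y i) := (pr_isRoot y _).2 ⟨i, rfl⟩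
  have h2 := (h1.norm_lt_cauchyBound (pr_monic y).ne_zero).le
  have h3 : cauchyBound (pr y) ≤ C.toNNReal + 1 := by
    unfold cauchyBound
    rw [(pr_monic y).leadingCoeff]
    simp only [nnnorm_one, div_one]
    gcongr
    refine Finset.sup_le fun j hj => ?_
    rw [pr_natDegree, Finset.mem_range] at hj
    rw [← NNReal.coe_le_coe, Real.coe_toNNReal _ hC]
    exact h ⟨j, hj⟩
  have h4 := NNReal.coe_le_coe.2 (h2.trans h3)
  push_cast at h4
  rwa [Real.coe_toNNReal _ hC] at h4

theorem cf_pr_continuous (m : ℕ) : Continuous fun y : Fin m → ℝ => cf m (pr y) :=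
  continuous_pi fun j => pr_coeff_continuous (j : ℕ)

theorem roots_cont {m : ℕ} {l : Filter ℝ} [l.NeBot] {R : ℝ → ℝ[X]} (hR : ∀ᶠ s in l, Hyp m (R s))
    {v : Fin m → ℝ} (hv : ∀ j : Fin m, Tendsto (fun s => (R s).coeff j) l (𝓝 (v j))) :
    ∃ ρ : Fin m → ℝ, mkp v = pr ρ ∧ ∀ ε > 0, ∀ᶠ s in l, ∃ y, R s = pr y ∧ ∀ i, |y i - ρ i| ≤ ε := by
  have hv' : Tendsto (fun s => cf m (R s)) l (𝓝 v) := tendsto_pi_nhds.2 hv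
  let Φ : (Fin m → ℝ) → (Fin m → ℝ) := fun y => cf m (pr y)
  have hΦ : Continuous Φ := cf_pr_continuous m
  set C : ℝ := 1 + ∑ j, |v j| with hC
  have hCv : ∀ j, |v j| < C := fun j => by
    have := Finset.single_le_sum (f := fun j => |v j|) (fun _ _ => abs_nonneg _) (Finset.mem_univ j)
    linarith
  have hb : ∀ᶠ s in l, ∀ j : Fin m, |(R s).coeff j| ≤ C :=
    eventually_all.2 fun j => (hv j).abs.eventually_le_const (hCv j)
  let B : Set (Fin m → ℝ) := Set.pi Set.univ fun _ => Icc (-(C + 1)) (C + 1)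
  have hBc : IsCompact B := isCompact_univ_pi fun _ => isCompact_Icc
  have hmem : ∀ᶠ s in l, ∀ y, R s = pr y → y ∈ B := by
    filter_upwards [hb] with s hs y hy i _
    rw [hy] at hs
    exact abs_le.1 (root_bound y hs i)
  have hvim : v ∈ Φ '' B := by
    refine (hBc.image hΦ).isClosed.mem_of_tendsto hv' ?_
    filter_upwards [hR, hmem] with s ⟨y, hy⟩ h2
    exact ⟨y, h2 y hy, by simp only [Φ]; rw [hy]⟩
  obtain ⟨ρ, -, hρ⟩ := hvim
  have hρ' : mkp v = pr ρ := by rw [← hρ]; exact mkp_cf (pr_monic ρ) (pr_natDegree ρ)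
  refine ⟨ρ, hρ', fun ε hε => ?_⟩
  let B' : Set (Fin m → ℝ) := B ∩ {y | ∀ σ : Equiv.Perm (Fin m), ∃ i, ε ≤ |y (σ i) - ρ i|}
  have hB' : IsCompact B' := by
    refine hBc.inter_right ?_
    have : {y : Fin m → ℝ | ∀ σ : Equiv.Perm (Fin m), ∃ i, ε ≤ |y (σ i) - ρ i|} =
      ⋂ σ : Equiv.Perm (Fin m), ⋃ i, {y | ε ≤ |y (σ i) - ρ i|} := by ext; simp
    rw [this]
    refine isClosed_iInter fun σ => isClosed_iUnion_of_finite fun i => ?_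
    exact isClosed_le continuous_const (by fun_prop)
  have hvn : v ∉ Φ '' B' := by
    rintro ⟨y, hy, hyv⟩
    have : pr y = pr ρ := by
      rw [← hρ', ← hyv]; exact (mkp_cf (pr_monic y) (pr_natDegree y)).symm
    obtain ⟨σ, hσ⟩ := pr_perm this
    obtain ⟨i, hi⟩ := hy.2 σ⁻¹
    rw [hσ] at hi
    simp at hi
    linarith
  have hop := (hB'.image hΦ).isClosed.isOpen_compl.mem_nhds hvn
  filter_upwards [hR, hmem, hv'.eventually hop] with s ⟨y, hy⟩ h2 h3
  have hyB' : y ∉ B' := fun hyB => h3 ⟨y, hyB, by simp only [Φ]; rw [hy]⟩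
  have : ∃ σ : Equiv.Perm (Fin m), ∀ i, |y (σ i) - ρ i| < ε := by
    by_contra hcon
    push Not at hcon
    exact hyB' ⟨h2 y hy, hcon⟩
  obtain ⟨σ, hσ⟩ := this
  exact ⟨y ∘ σ, by rw [hy, pr_comp], fun i => (hσ i).le⟩

theorem isRoot_of_freq {m : ℕ} {Q : ℝ → ℝ[X]} {s : ℝ} (hQ : ∀ᶠ t in 𝓝 s, Hyp m (Q t))
    (hc : ∀ j : Fin m, ContinuousAt (fun t => (Q t).coeff j) s) {x : ℝ → ℝ} (hx : ContinuousAt x s)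
    (h : ∃ᶠ t in 𝓝[≠] s, (Q t).IsRoot (x t)) : (Q s).IsRoot (x s) := by
  have hev : ∀ {p : ℝ[X]}, Hyp m p → ∀ x, p.eval x = x ^ m + ∑ j : Fin m, p.coeff j * x ^ (j : ℕ) := by
    intro p hp x
    have h1 := hp.monic.coeff_natDegree
    rw [hp.natDegree] at h1
    rw [eval_eq_sum_range, hp.natDegree, Finset.sum_range_succ, h1, one_mul, add_comm,
      Finset.sum_range]
  have hcont : ContinuousAt (fun t => x t ^ m + ∑ j : Fin m, (Q t).coeff j * x t ^ (j : ℕ)) s := by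
    refine (hx.pow m).add ?_
    exact tendsto_finsetSum _ fun j _ => ((hc j).mul (hx.pow _))
  have h1 : ∃ᶠ t in 𝓝[≠] s, x t ^ m + ∑ j : Fin m, (Q t).coeff j * x t ^ (j : ℕ) ∈ ({0} : Set ℝ) := by
    refine (h.and_eventually (hQ.filter_mono nhdsWithin_le_nhds)).mono fun t ht => ?_
    rw [← hev ht.2]
    exact ht.1
  have h2 := isClosed_singleton.mem_of_frequently_of_tendsto h1
    (hcont.tendsto.mono_left nhdsWithin_le_nhds)
  rw [IsRoot.def, hev hQ.self_of_nhds]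
  exact h2

theorem contDiffAt_mn {m N : ℕ} {Q : ℝ → ℝ[X]} {s : ℝ} (hm : 1 ≤ m)
    (hc : ∀ j : Fin m, ContDiffAt ℝ N (fun s => (Q s).coeff j) s) :
    ContDiffAt ℝ N (fun s => mn m (Q s)) s := by
  unfold mn
  exact ((hc ⟨m - 1, by omega⟩).neg).div_const _

theorem contDiffAt_cen {m N : ℕ} {Q : ℝ → ℝ[X]} {s : ℝ} (hQ : ∀ᶠ t in 𝓝 s, Hyp m (Q t))
    (hc : ∀ j : Fin m, ContDiffAt ℝ N (fun s => (Q s).coeff j) s) (j : ℕ) :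
    ContDiffAt ℝ N (fun s => (cen m (Q s)).coeff j) s := by
  have h1 : ContDiffAt ℝ N (fun t => (cen m (mkp (cf m (Q t)))).coeff j) s :=
    (cen_contDiff j).contDiffAt.comp s (contDiffAt_pi.2 hc)
  refine h1.congr_of_eventuallyEq ?_
  filter_upwards [hQ] with t ht
  rw [mkp_cf ht.monic ht.natDegree]

theorem cen_bigO {m : ℕ} (hm : 1 ≤ m) {Q : ℝ → ℝ[X]} (hQ : ∀ᶠ t in 𝓝 (0 : ℝ), Hyp m (Q t))
    (hc : ∀ j : Fin m, ContDiffAt ℝ m (fun s => (Q s).coeff j) 0)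
    {y0 : Fin m → ℝ} (hy0 : Q 0 = pr y0) (heq : ∀ i j, y0 i = y0 j) (j : Fin m) :
    (fun s => (cen m (Q s)).coeff j) =O[𝓝 0] fun s => s ^ (m - j : ℕ) := by
  have hyp : ∀ᶠ t in 𝓝 (0 : ℝ), Hyp m (cen m (Q t)) := hQ.mono fun t h => h.cen
  have hroot : ∃ C, ∀ᶠ s in 𝓝 (0 : ℝ), ∀ y : Fin m → ℝ, cen m (Q s) = pr y → ∀ i, |y i| ≤ C * |s| := by
    obtain ⟨m, rfl⟩ : ∃ k, m = k + 1 := ⟨m - 1, by omega⟩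
    rcases m with _ | m
    · refine ⟨0, hQ.mono fun s hs y hy i => ?_⟩
      have h1 := cen_coeff le_rfl hs
      rw [hy] at h1
      have h2 := pr_coeff_one y
      have h1 : (pr y).coeff 0 = 0 := h1
      rw [h1, Fin.sum_univ_one] at h2
      rw [show i = 0 from Fin.ext (by have := i.2; simp only [Fin.val_zero]; omega)]
      have : y 0 = 0 := by linarith
      simp [this]
    · let f : ℝ → ℝ := fun s => -2 * (cen (m + 2) (Q s)).coeff m
      have hsum : ∀ᶠ s in 𝓝 (0 : ℝ), ∀ y : Fin (m + 2) → ℝ, cen (m + 2) (Q s) = pr y → ∑ i, y i ^ 2 = f s := by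
        refine hQ.mono fun s hs y hy => ?_
        have h1 := cen_coeff hm hs
        rw [pr_sum_sq, ← hy]
        simp only [f]
        have h1' : (cen (m + 2) (Q s)).coeff (m + 1) = 0 := h1
        rw [h1']; ring
      have hf0 : f 0 = 0 := by
        have h1 := hsum.self_of_nhds (fun i => y0 i - mn (m + 2) (pr y0)) (by rw [hy0, cen_pr])
        rw [← h1]
        have h2 : ∀ i, y0 i - mn (m + 2) (pr y0) = 0 := by
          intro i
          unfold mn
          have h3 := pr_coeff_one (n := m + 1) y0
          have h4 : ∑ j, y0 j = ((m + 2 : ℕ) : ℝ) * y0 i := by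
            rw [Finset.sum_congr rfl fun j _ => heq j i]
            simp only [Finset.sum_const, Finset.card_univ, Fintype.card_fin, nsmul_eq_mul]
          have h5 : (pr y0).coeff (m + 2 - 1) = -(((m + 2 : ℕ) : ℝ) * y0 i) := by
            rw [← h4]; exact h3
          have h6 : ((m + 2 : ℕ) : ℝ) ≠ 0 := by positivity
          rw [h5]; field_simp; ring
        simp [h2]
      have hfpos : ∀ᶠ s in 𝓝 (0 : ℝ), 0 ≤ f s := by
        filter_upwards [hsum, hyp] with s h1 ⟨y, hy⟩
        rw [← h1 y hy]
        positivity
      have hfc : ContDiffAt ℝ (2 : ℕ) f 0 := by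
        have := contDiffAt_cen hQ hc m
        exact contDiffAt_const.mul (this.of_le (by norm_cast; omega))
      obtain ⟨U, hU, h0U, -, hd, hk⟩ := contDiffAt_tower hfc
      have hmin : IsLocalMin f 0 := by
        filter_upwards [hfpos] with s hs
        rwa [hf0]
      have hO : f =O[𝓝[≠] 0] fun s => s ^ 2 := by
        have h1 := lh_tower 2 (fun i => iteratedDeriv i f)
          (fun i hi => by filter_upwards [hU.mem_nhds h0U] with s hs using hd i hi s hs)
          (hk 2 le_rfl 0 h0U) (fun i hi => by
            interval_cases i
            · simpa using hf0
            · simpa [iteratedDeriv_one] using hmin.deriv_eq_zero) 2 le_rfl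
        have h2 := h1.isBigO_one ℝ
        simp only [Nat.sub_self, iteratedDeriv_zero] at h2
        have h3 := h2.mul (Asymptotics.isBigO_refl (fun s : ℝ => s ^ 2) (𝓝[≠] 0))
        refine h3.congr' ?_ (Eventually.of_forall fun s => by simp)
        filter_upwards [self_mem_nhdsWithin] with s hs
        have : s ≠ 0 := hs
        field_simp
      obtain ⟨C, hC⟩ := hO.bound
      rw [eventually_nhdsWithin_iff] at hC
      refine ⟨√ (|C|), ?_⟩
      filter_upwards [hC, hsum] with s h1 h2 y hy i
      have h3 : y i ^ 2 ≤ f s := by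
        rw [← h2 y hy]
        exact Finset.single_le_sum (f := fun i => y i ^ 2) (fun _ _ => sq_nonneg _) (Finset.mem_univ i)
      have h4 : f s ≤ |C| * s ^ 2 := by
        by_cases hs : s = 0
        · rw [hs, hf0]; simp
        · have := h1 hs
          rw [Real.norm_eq_abs, Real.norm_eq_abs, abs_of_nonneg (sq_nonneg s)] at this
          calc f s ≤ |f s| := le_abs_self _
            _ ≤ C * s ^ 2 := this
            _ ≤ _ := by gcongr; exact le_abs_self C
      refine abs_le_of_sq_le_sq (a := y i) (b := √|C| * |s|) ?_ (by positivity)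
      rw [mul_pow, Real.sq_sqrt (abs_nonneg C), sq_abs]
      linarith
  obtain ⟨C, hC⟩ := hroot
  obtain ⟨C', hC'1, hC'⟩ := pr_coeff_bound m |C|
  refine Asymptotics.IsBigO.of_bound C' ?_
  filter_upwards [hC, hyp] with s h1 ⟨y, hy⟩
  have h2 := h1 y hy
  have h3 : pr y = (pr fun i => y i / s).scaleRoots s := by
    rw [scaleRoots_pr]
    congr 1
    ext i
    by_cases hs : s = 0
    · have := h2 i
      rw [hs] at this ⊢
      simp at this ⊢
      exact this
    · field_simp
  rw [hy, h3, coeff_scaleRoots, pr_natDegree, norm_mul]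
  gcongr
  refine hC' _ (fun i => ?_) j
  by_cases hs : s = 0
  · simp [hs]
  · rw [abs_div, div_le_iff₀ (abs_pos.2 hs)]
    refine (h2 i).trans ?_
    gcongr
    exact le_abs_self C

end RootsCont


open Set Filter Topology Polynomial

section JetOne

theorem pr_append {k l : ℕ} (y : Fin k → ℝ) (z : Fin l → ℝ) : pr (Fin.append y z) = pr y * pr z := by
  unfold pr
  rw [Fin.prod_univ_add]
  simp

theorem split_local {m N : ℕ} {Q : ℝ → ℝ[X]} {t0 : ℝ} (hQ : ∀ᶠ t in 𝓝 t0, Hyp m (Q t))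
    (hc : ∀ j : Fin m, ContDiffAt ℝ N (fun s => (Q s).coeff j) t0) {y : Fin m → ℝ} (hy : Q t0 = pr y)
    {i j : Fin m} (hij : y i ≠ y j) :
    ∃ k l, k + l = m ∧ k < m ∧ l < m ∧ ∃ A B : ℝ → ℝ[X],
      (∀ᶠ t in 𝓝 t0, Hyp k (A t)) ∧ (∀ᶠ t in 𝓝 t0, Hyp l (B t)) ∧ (∀ᶠ t in 𝓝 t0, Q t = A t * B t) ∧
      (∀ j : Fin k, ContDiffAt ℝ N (fun s => (A s).coeff j) t0) ∧
      (∀ j : Fin l, ContDiffAt ℝ N (fun s => (B s).coeff j) t0) := by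
  obtain ⟨k, l, hkl, hk, hl, φ, ψ, W, hW, hyW, hφ, hψ, hfac⟩ := split_exists y i j hij N
  rw [← hy] at hyW
  have hcf : ContDiffAt ℝ N (fun t => cf m (Q t)) t0 := contDiffAt_pi.2 hc
  have hmem : ∀ᶠ t in 𝓝 t0, cf m (Q t) ∈ W := hcf.continuousAt.eventually (hW.mem_nhds hyW)
  have hprod : ∀ᶠ t in 𝓝 t0, Q t = mkp (φ (cf m (Q t))) * mkp (ψ (cf m (Q t))) := by
    filter_upwards [hQ, hmem] with t h1 h2
    rw [← hfac _ h2, mkp_cf h1.monic h1.natDegree]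
  refine ⟨k, l, hkl, hk, hl, fun t => mkp (φ (cf m (Q t))), fun t => mkp (ψ (cf m (Q t))), ?_, ?_, hprod,
    ?_, ?_⟩
  · filter_upwards [hQ, hprod] with t h1 h2
    exact h1.of_dvd (mkp_monic _) (mkp_natDegree _) (Dvd.intro _ h2.symm)
  · filter_upwards [hQ, hprod] with t h1 h2
    exact h1.of_dvd (mkp_monic _) (mkp_natDegree _) (Dvd.intro_left _ h2.symm)
  · intro j
    exact (contDiff_mkp_coeff (j : ℕ)).contDiffAt.comp t0
      (((hφ.contDiffAt (hW.mem_nhds hyW))).comp t0 hcf)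
  · intro j
    exact (contDiff_mkp_coeff (j : ℕ)).contDiffAt.comp t0
      (((hψ.contDiffAt (hW.mem_nhds hyW))).comp t0 hcf)

def J1 (m : ℕ) (Q : ℝ → ℝ[X]) : Prop := ∃ α β : Fin m → ℝ, ∀ ε > 0, ∀ᶠ s in 𝓝[≠] (0 : ℝ),
  (∃ y : Fin m → ℝ, Q s = pr y ∧ ∀ i, |y i - (α i + β i * s)| ≤ ε * |s|) ∧
  ∀ (x : ℝ → ℝ) (x' : ℝ), (∃ᶠ t in 𝓝[≠] s, (Q t).IsRoot (x t)) → HasDerivAt x x' s →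
    ∃ i, |x s - (α i + β i * s)| ≤ ε * |s| ∧ |x' - β i| ≤ ε

theorem J1.mul {k l : ℕ} {A B Q : ℝ → ℝ[X]} (hA : J1 k A) (hB : J1 l B)
    (h : ∀ᶠ t in 𝓝 (0 : ℝ), Q t = A t * B t) : J1 (k + l) Q := by
  obtain ⟨α, β, h1⟩ := hA
  obtain ⟨α', β', h2⟩ := hB
  refine ⟨Fin.append α α', Fin.append β β', fun ε hε => ?_⟩
  filter_upwards [h1 ε hε, h2 ε hε, h.eventually_nhds.filter_mono nhdsWithin_le_nhds] with
    s ⟨⟨y, hy, hy'⟩, hD⟩ ⟨⟨z, hz, hz'⟩, hD'⟩ hs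
  refine ⟨⟨Fin.append y z, by rw [pr_append, hs.self_of_nhds, hy, hz], fun i => ?_⟩, fun x x' hx hd => ?_⟩
  · refine Fin.addCases (fun i => ?_) (fun i => ?_) i
    · simpa using hy' i
    · simpa using hz' i
  · have hx' : ∃ᶠ t in 𝓝[≠] s, (A t).IsRoot (x t) ∨ (B t).IsRoot (x t) := by
      refine (hx.and_eventually (hs.filter_mono nhdsWithin_le_nhds)).mono fun t ht => ?_
      have h3 := ht.1
      rw [ht.2] at h3
      exact root_mul.1 h3
    rcases frequently_or_distrib.1 hx' with h3 | h3
    · obtain ⟨i, hi⟩ := hD x x' h3 hd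
      exact ⟨Fin.castAdd l i, by simpa using hi⟩
    · obtain ⟨i, hi⟩ := hD' x x' h3 hd
      exact ⟨Fin.natAdd k i, by simpa using hi⟩

theorem eventually_root {m N : ℕ} {Q : ℝ → ℝ[X]} {t0 : ℝ} (hQ : ∀ᶠ t in 𝓝 t0, Hyp m (Q t))
    (hc : ∀ j : Fin m, ContDiffAt ℝ N (fun s => (Q s).coeff j) t0) :
    ∀ᶠ s in 𝓝 t0, ∀ (x : ℝ → ℝ), ContinuousAt x s → (∃ᶠ t in 𝓝[≠] s, (Q t).IsRoot (x t)) →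
      (Q s).IsRoot (x s) := by
  filter_upwards [hQ.eventually_nhds, eventually_all.2 fun j => (hc j).eventually (by simp)] with
    s h1 h2 x hx hf
  exact isRoot_of_freq h1 (fun j => (h2 j).continuousAt) hx hf

theorem j1_equal {m : ℕ} (hm : 1 ≤ m) {Q : ℝ → ℝ[X]} (hQ : ∀ᶠ t in 𝓝 (0 : ℝ), Hyp m (Q t))
    (hc : ∀ j : Fin m, ContDiffAt ℝ m (fun s => (Q s).coeff j) 0)
    {y0 : Fin m → ℝ} (hy0 : Q 0 = pr y0) (heq : ∀ i j, y0 i = y0 j) : J1 m Q := by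
  have hO := cen_bigO hm hQ hc hy0 heq
  have hcc := contDiffAt_cen hQ hc
  have hyp : ∀ᶠ t in 𝓝 (0 : ℝ), Hyp m (cen m (Q t)) := hQ.mono fun t h => h.cen
  have hM := contDiffAt_mn hm hc
  set M : ℝ → ℝ := fun s => mn m (Q s) with hMdef
  obtain ⟨U, hU, h0U, -, hd, hk⟩ := contDiffAt_tower hM
  have hMd : ∀ s ∈ U, HasDerivAt M (iteratedDeriv 1 M s) s := fun s hs => by
    have := hd 0 (by omega) s hs
    rwa [iteratedDeriv_zero] at this
  have hMc : ContinuousAt (iteratedDeriv 1 M) 0 := hk 1 hm 0 h0U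
  set b := iteratedDeriv 1 M 0 with hb
  -- limits of the rescaled coefficients
  let R : ℝ → ℝ[X] := fun s => (cen m (Q s)).scaleRoots s⁻¹
  have hRh : ∀ᶠ s in 𝓝[≠] (0 : ℝ), Hyp m (R s) := by
    filter_upwards [hyp.filter_mono nhdsWithin_le_nhds] with s ⟨y, hy⟩
    exact ⟨_, by simp only [R]; rw [hy, scaleRoots_pr]⟩
  have hlim : ∀ j : Fin m, ∃ c, Tendsto (fun s => (R s).coeff j) (𝓝[≠] 0) (𝓝 c) := by
    intro j
    obtain ⟨c, hc⟩ := scaled_limit (by omega) (hcc j) (hO j) 0 (by omega)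
    refine ⟨c, hc.congr' ?_⟩
    filter_upwards [hyp.filter_mono nhdsWithin_le_nhds] with s hs
    simp only [R]
    rw [coeff_scaleRoots, hs.natDegree, iteratedDeriv_zero, inv_pow]
    simp only [Nat.cast_zero, zpow_zero, zpow_natCast]
    ring
  choose v hv using hlim
  obtain ⟨ρ, -, hρ⟩ := roots_cont hRh hv
  refine ⟨fun _ => M 0, fun i => b + ρ i, fun ε hε => ?_⟩
  have hε4 : 0 < ε / 4 := by positivity
  have hMs : ∀ᶠ s in 𝓝[≠] (0 : ℝ), |M s - M 0 - b * s| ≤ ε / 4 * |s| := by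
    have h1 := (hasDerivAt_iff_isLittleO_nhds_zero.1 (hMd 0 h0U)).bound hε4
    filter_upwards [h1.filter_mono nhdsWithin_le_nhds] with s hs
    simp only [zero_add, smul_eq_mul, Real.norm_eq_abs] at hs
    rw [mul_comm b s]
    exact hs
  have hMs' : ∀ᶠ s in 𝓝[≠] (0 : ℝ), |iteratedDeriv 1 M s - b| ≤ ε / 4 := by
    have h1 := (Metric.tendsto_nhds.1 hMc.tendsto) (ε / 4) hε4
    filter_upwards [h1.filter_mono nhdsWithin_le_nhds] with s hs
    exact (Real.dist_eq _ _ ▸ hs).le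
  have hD := d0 (fun s => cen m (Q s)) hyp (fun j => hcc j) hO hε4
  filter_upwards [hMs, hMs', hD, hρ (ε / 4) hε4, self_mem_nhdsWithin,
    hQ.filter_mono nhdsWithin_le_nhds, nhdsWithin_le_nhds (hU.mem_nhds h0U),
    (eventually_root hQ hc).filter_mono nhdsWithin_le_nhds] with s h1 h2 h3 ⟨z, hz, hz'⟩ hs0 h4 h5 h6
  have hs0 : s ≠ 0 := hs0
  obtain ⟨y1, hy1⟩ := h4
  have hsp : 0 < |s| := abs_pos.2 hs0
  have hQs : Q s = pr fun i => s * z i + M s := by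
    have e1 : (pr fun i => s⁻¹ * (y1 i - M s)) = pr z := by
      rw [← hz]
      simp only [R, M]
      rw [hy1, cen_pr, scaleRoots_pr]
    obtain ⟨σ, hσ⟩ := pr_perm e1
    rw [hy1, ← pr_comp (fun i => s * z i + M s) σ]
    congr 1
    ext i
    have := congrFun hσ i
    simp only [Function.comp] at this ⊢
    rw [← this]
    field_simp
    ring
  have hV : ∀ i, |s * z i + M s - (M 0 + (b + ρ i) * s)| ≤ ε / 2 * |s| := by
    intro i
    have e : s * z i + M s - (M 0 + (b + ρ i) * s) = (M s - M 0 - b * s) + s * (z i - ρ i) := by ring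
    rw [e]
    refine (abs_add_le _ _).trans ?_
    rw [abs_mul]
    nlinarith [hz' i]
  refine ⟨⟨_, hQs, fun i => (hV i).trans (by nlinarith)⟩, fun x x' hx hd => ?_⟩
  have hr := h6 x hd.continuousAt hx
  rw [hQs, pr_isRoot] at hr
  obtain ⟨i, hi⟩ := hr
  refine ⟨i, by rw [hi]; exact (hV i).trans (by nlinarith), ?_⟩
  have h7 := h3 (fun t => x t - M t) (x' - iteratedDeriv 1 M s)
    (hx.mono fun t ht => cen_isRoot.2 ht) (hd.sub (hMd s h5))
  have e2 : (x s - M s) / s = z i := by rw [hi]; field_simp; ring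
  rw [e2] at h7
  have e3 : x' - (b + ρ i) = (x' - iteratedDeriv 1 M s - z i) + (iteratedDeriv 1 M s - b) + (z i - ρ i) := by
    ring
  rw [e3]
  refine (abs_add_three _ _ _).trans ?_
  linarith [hz' i]

theorem jm1 (m : ℕ) : ∀ Q : ℝ → ℝ[X], (∀ᶠ t in 𝓝 (0 : ℝ), Hyp m (Q t)) →
    (∀ j : Fin m, ContDiffAt ℝ m (fun s => (Q s).coeff j) 0) → J1 m Q := by
  induction m using Nat.strong_induction_on with
  | _ m ih =>
    intro Q hQ hc
    obtain ⟨y0, hy0⟩ := hQ.self_of_nhds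
    by_cases heq : ∀ i j, y0 i = y0 j
    · rcases Nat.eq_zero_or_pos m with rfl | hm
      · refine ⟨0, 0, fun ε hε => ?_⟩
        filter_upwards [hQ.eventually_nhds.filter_mono nhdsWithin_le_nhds] with s hs
        obtain ⟨y, hy⟩ := hs.self_of_nhds
        refine ⟨⟨y, hy, fun i => i.elim0⟩, fun x x' hx _ => ?_⟩
        obtain ⟨t, ht, y, hy⟩ := (hx.and_eventually (hs.filter_mono nhdsWithin_le_nhds)).exists
        rw [hy, pr_isRoot] at ht
        obtain ⟨i, -⟩ := ht
        exact i.elim0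
      · exact j1_equal hm hQ hc hy0 heq
    · push Not at heq
      obtain ⟨i, j, hij⟩ := heq
      obtain ⟨k, l, hkl, hk, hl, A, B, hA, hB, hAB, hAc, hBc⟩ := split_local hQ hc hy0 hij
      have h1 := ih k hk A hA fun j => (hAc j).of_le (by exact_mod_cast hk.le)
      have h2 := ih l hl B hB fun j => (hBc j).of_le (by exact_mod_cast hl.le)
      subst hkl
      exact h1.mul h2 hAB

end JetOne


open Set Filter Topology Polynomial

section Hadamard

theorem exists_global {N : ℕ} {f : ℝ → ℝ} (hf : ContDiffAt ℝ N f 0) :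
    ∃ g : ℝ → ℝ, ContDiff ℝ N g ∧ g =ᶠ[𝓝 0] f := by
  obtain ⟨U, hU, h0U, hc, -, -⟩ := contDiffAt_tower hf
  obtain ⟨δ, hδ, hδU⟩ := Metric.nhds_basis_closedBall.mem_iff.1 (hU.mem_nhds h0U)
  let χ : ContDiffBump (0 : ℝ) := ⟨δ / 2, δ, by positivity, by linarith⟩
  refine ⟨fun s => χ s * f s, contDiff_iff_contDiffAt.2 fun s => ?_, ?_⟩
  · by_cases hs : s ∈ U
    · exact χ.contDiffAt.mul (hc.contDiffAt (hU.mem_nhds hs))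
    · have h1 : s ∉ tsupport χ := by
        rw [χ.tsupport_eq]
        exact fun h => hs (hδU h)
      have h2 := notMem_tsupport_iff_eventuallyEq.1 h1
      refine (contDiffAt_const (c := (0 : ℝ))).congr_of_eventuallyEq ?_
      filter_upwards [h2] with t ht
      simp [ht]
  · filter_upwards [χ.eventuallyEq_one] with s hs
    simp [hs]

noncomputable def avg (k : ℕ) (f : ℝ → ℝ) : ℝ → ℝ := fun s => ∫ θ in (0 : ℝ)..1, θ ^ k * f (s * θ)

theorem avg_continuous (k : ℕ) {f : ℝ → ℝ} (hf : Continuous f) : Continuous (avg k f) := by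
  unfold avg
  exact intervalIntegral.continuous_parametric_intervalIntegral_of_continuous' (by
    simp only [Function.uncurry_def]
    fun_prop) 0 1

theorem avg_hasDerivAt (k : ℕ) {f : ℝ → ℝ} (hf : ContDiff ℝ 1 f) (s : ℝ) :
    HasDerivAt (avg k f) (avg (k + 1) (deriv f) s) s := by
  have hfc := hf.continuous
  have hf'c : Continuous (deriv f) := hf.continuous_deriv le_rfl
  obtain ⟨C, hC⟩ := (isCompact_Icc (a := -(|s| + 1)) (b := |s| + 1)).exists_bound_of_continuousOn
    hf'c.continuousOn
  have h := intervalIntegral.hasDerivAt_integral_of_dominated_loc_of_deriv_le (𝕜 := ℝ)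
    (μ := MeasureTheory.volume) (a := (0 : ℝ)) (b := 1)
    (F := fun s θ => θ ^ k * f (s * θ)) (F' := fun s θ => θ ^ (k + 1) * deriv f (s * θ)) (x₀ := s)
    (s := Metric.ball s 1) (bound := fun _ => C) (Metric.ball_mem_nhds s one_pos)
    (Eventually.of_forall fun u => (Continuous.aestronglyMeasurable (by fun_prop)))
    (Continuous.intervalIntegrable (by fun_prop) _ _)
    (Continuous.aestronglyMeasurable (by fun_prop))
    (Eventually.of_forall fun θ hθ u hu => ?_) (by simp)
    (Eventually.of_forall fun θ hθ u hu => ?_)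
  · exact h.2
  · rw [uIoc_of_le zero_le_one] at hθ
    have hu1 : |u| ≤ |s| + 1 := by
      have h1 : |u - s| < 1 := by simpa [Real.dist_eq] using hu
      have := abs_sub_abs_le_abs_sub u s
      linarith
    have h2 : |u * θ| ≤ |s| + 1 := by
      rw [abs_mul, abs_of_pos hθ.1]
      nlinarith [hθ.1, hθ.2, abs_nonneg u]
    have h3 := hC (u * θ) (abs_le.1 h2)
    rw [norm_mul, norm_pow, Real.norm_eq_abs, abs_of_pos hθ.1]
    calc _ ≤ 1 * C := mul_le_mul (pow_le_one₀ hθ.1.le hθ.2) h3 (norm_nonneg _) zero_le_one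
      _ = C := one_mul C
  · have hd : HasDerivAt f (deriv f (u * θ)) (u * θ) :=
      (hf.differentiable (by simp)).differentiableAt.hasDerivAt
    have h2 := (hd.comp u (hasDerivAt_mul_const θ)).const_mul (θ ^ k)
    refine h2.congr_deriv ?_
    ring

theorem avg_contDiff (N : ℕ) : ∀ (k : ℕ) {f : ℝ → ℝ}, ContDiff ℝ N f → ContDiff ℝ N (avg k f) := by
  induction N with
  | zero =>
    intro k f hf
    rw [Nat.cast_zero, contDiff_zero] at hf ⊢
    exact avg_continuous k hf
  | succ N ih =>
    intro k f hf
    have h1 : ContDiff ℝ 1 f := hf.of_le (by norm_cast; omega)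
    rw [Nat.cast_succ, contDiff_succ_iff_deriv] at hf ⊢
    refine ⟨fun s => (avg_hasDerivAt k h1 s).differentiableAt, by simp, ?_⟩
    have : deriv (avg k f) = avg (k + 1) (deriv f) := funext fun s => (avg_hasDerivAt k h1 s).deriv
    rw [this]
    exact ih (k + 1) hf.2.2

theorem hadamard_one {N : ℕ} {f : ℝ → ℝ} (hf : ContDiffAt ℝ (N + 1 : ℕ) f 0) (h0 : f 0 = 0) :
    ∃ g : ℝ → ℝ, ContDiffAt ℝ N g 0 ∧ ∀ᶠ s in 𝓝 (0 : ℝ), f s = s * g s := by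
  obtain ⟨F, hF, hFf⟩ := exists_global hf
  have hF1 : ContDiff ℝ 1 F := hF.of_le (by norm_cast; omega)
  have hF' : Continuous (deriv F) := hF1.continuous_deriv le_rfl
  have hF0 : F 0 = 0 := by rw [hFf.self_of_nhds, h0]
  refine ⟨avg 0 (deriv F), (avg_contDiff N 0 ?_).contDiffAt, ?_⟩
  · rw [Nat.cast_succ, contDiff_succ_iff_deriv] at hF
    exact hF.2.2
  · filter_upwards [hFf] with s hs
    rw [← hs]
    simp only [avg, pow_zero, one_mul]
    rw [← intervalIntegral.integral_const_mul]
    have h1 : ∀ θ ∈ uIcc (0 : ℝ) 1, HasDerivAt (fun θ => F (s * θ)) (s * deriv F (s * θ)) θ := by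
      intro θ _
      have hd : HasDerivAt F (deriv F (s * θ)) (s * θ) :=
        (hF1.differentiable (by simp)).differentiableAt.hasDerivAt
      have := hd.comp θ ((hasDerivAt_id θ).const_mul s)
      refine this.congr_deriv ?_
      ring
    rw [intervalIntegral.integral_eq_sub_of_hasDerivAt h1
      (Continuous.intervalIntegrable (by fun_prop) _ _)]
    simp [hF0]

theorem hadamard {N : ℕ} (j : ℕ) : ∀ {f : ℝ → ℝ}, ContDiffAt ℝ (N + j : ℕ) f 0 →
    (f =O[𝓝[≠] 0] fun s => s ^ j) →
    ∃ g : ℝ → ℝ, ContDiffAt ℝ N g 0 ∧ ∀ᶠ s in 𝓝 (0 : ℝ), f s = s ^ j * g s := by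
  induction j with
  | zero => exact fun {f} hf _ => ⟨f, hf, by simp⟩
  | succ j ih =>
    intro f hf hO
    have h0 : f 0 = 0 := by
      have h1 : Tendsto f (𝓝[≠] 0) (𝓝 0) := by
        refine hO.trans_tendsto ?_
        have : Tendsto (fun s : ℝ => s ^ (j + 1)) (𝓝 0) (𝓝 (0 ^ (j + 1))) := (continuous_pow _).tendsto 0
        rw [zero_pow (by omega)] at this
        exact this.mono_left nhdsWithin_le_nhds
      exact tendsto_nhds_unique (hf.continuousAt.tendsto.mono_left nhdsWithin_le_nhds) h1
    obtain ⟨g, hg, hfg⟩ := hadamard_one (N := N + j) hf h0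
    obtain ⟨g', hg', hgg'⟩ := ih hg (by
      have h1 := hO.mul (Asymptotics.isBigO_refl (fun s : ℝ => s⁻¹) (𝓝[≠] 0))
      refine h1.congr' ?_ ?_
      · filter_upwards [self_mem_nhdsWithin, hfg.filter_mono nhdsWithin_le_nhds] with s hs h2
        have : s ≠ 0 := hs
        rw [h2]; field_simp
      · filter_upwards [self_mem_nhdsWithin] with s hs
        have : s ≠ 0 := hs
        rw [pow_succ]; field_simp)
    refine ⟨g', hg', ?_⟩
    filter_upwards [hfg, hgg'] with s h1 h2
    rw [h1, h2]; ring

end Hadamard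

section JetTwo

theorem taylor_two {M : ℝ → ℝ} (hM : ContDiffAt ℝ (2 : ℕ) M 0) :
    ∃ b c : ℝ, ∃ M' : ℝ → ℝ, (∀ᶠ s in 𝓝 (0 : ℝ), HasDerivAt M (M' s) s) ∧ ∀ ε > 0, ∀ᶠ s in 𝓝[≠] (0 : ℝ),
      |M s - (M 0 + b * s + c * s ^ 2)| ≤ ε * s ^ 2 ∧ |M' s - (b + 2 * c * s)| ≤ ε * |s| := by
  obtain ⟨U, hU, h0U, -, hd, hk⟩ := contDiffAt_tower hM
  set D := fun i => iteratedDeriv i M with hD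
  have hd0 : ∀ s ∈ U, HasDerivAt M (D 1 s) s := fun s hs => by
    simpa [hD, iteratedDeriv_zero] using hd 0 (by omega) s hs
  have hd1 : ∀ s ∈ U, HasDerivAt (D 1) (D 2 s) s := fun s hs => hd 1 (by omega) s hs
  let F : ℕ → ℝ → ℝ := fun i s => match i with
    | 0 => M s - (M 0 + D 1 0 * s + D 2 0 / 2 * s ^ 2)
    | 1 => D 1 s - (D 1 0 + 2 * (D 2 0 / 2) * s)
    | _ => D 2 s - D 2 0
  have hlh := lh_tower 2 F (fun i hi => by
      filter_upwards [hU.mem_nhds h0U] with s hs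
      interval_cases i
      · have h1 : HasDerivAt (fun s => M 0 + D 1 0 * s + D 2 0 / 2 * s ^ 2)
            (D 1 0 + 2 * (D 2 0 / 2) * s) s := by
          have := (((hasDerivAt_id s).const_mul (D 1 0)).const_add (M 0)).add
            ((hasDerivAt_pow 2 s).const_mul (D 2 0 / 2))
          refine this.congr_deriv ?_
          push_cast; ring
        exact (hd0 s hs).sub h1
      · have h1 : HasDerivAt (fun s => D 1 0 + 2 * (D 2 0 / 2) * s) (D 2 0) s := by
          have := ((hasDerivAt_id s).const_mul (2 * (D 2 0 / 2))).const_add (D 1 0)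
          refine this.congr_deriv ?_
          ring
        exact (hd1 s hs).sub h1)
    ((hk 2 le_rfl 0 h0U).sub continuousAt_const) (fun i hi => by
      interval_cases i <;> simp [F])
  have hF2 : F 2 0 = 0 := sub_self _
  refine ⟨D 1 0, D 2 0 / 2, D 1, ?_, fun ε hε => ?_⟩
  · filter_upwards [hU.mem_nhds h0U] with s hs using hd0 s hs
  · have l2 := (hlh 2 le_rfl).abs
    have l1 := (hlh 1 (by omega)).abs
    rw [hF2, zero_div, abs_zero] at l1 l2
    filter_upwards [l1.eventually_le_const hε, l2.eventually_le_const hε, self_mem_nhdsWithin] with s h1 h2 hs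
    have hs0 : s ≠ 0 := hs
    constructor
    · rw [abs_div, div_le_iff₀ (by positivity), abs_of_pos (show 0 < s ^ 2 by positivity)] at h2
      exact h2
    · rw [abs_div, div_le_iff₀ (by positivity), pow_one] at h1
      exact h1

def J2 (n : ℕ) (P : ℝ → ℝ[X]) : Prop := ∃ (a : ℝ) (b c : Fin n → ℝ), (P 0 = pr fun _ : Fin n => a) ∧
  ∀ ε > 0, ∀ᶠ s in 𝓝[≠] (0 : ℝ),
  (∃ y : Fin n → ℝ, P s = pr y ∧ ∀ i, |y i - (a + b i * s + c i * s ^ 2)| ≤ ε * s ^ 2) ∧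
  ∀ (x : ℝ → ℝ) (x' : ℝ), (∃ᶠ t in 𝓝[≠] s, (P t).IsRoot (x t)) → HasDerivAt x x' s →
    ∃ i, |x s - (a + b i * s + c i * s ^ 2)| ≤ ε * s ^ 2 ∧ |x' - (b i + 2 * c i * s)| ≤ ε * |s|

theorem jm2 {n : ℕ} (hn : 1 ≤ n) {P : ℝ → ℝ[X]} (hP : ∀ᶠ t in 𝓝 (0 : ℝ), Hyp n (P t))
    (hc : ∀ j : Fin n, ContDiffAt ℝ (2 * n : ℕ) (fun s => (P s).coeff j) 0)
    {y0 : Fin n → ℝ} (hy0 : P 0 = pr y0) (heq : ∀ i j, y0 i = y0 j) : J2 n P := by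
  have hc1 : ∀ j : Fin n, ContDiffAt ℝ n (fun s => (P s).coeff j) 0 := fun j =>
    (hc j).of_le (by norm_cast; omega)
  have hO := cen_bigO hn hP hc1 hy0 heq
  have hcc := contDiffAt_cen hP hc
  have hyp : ∀ᶠ t in 𝓝 (0 : ℝ), Hyp n (cen n (P t)) := hP.mono fun t h => h.cen
  have hM := contDiffAt_mn hn hc
  set M : ℝ → ℝ := fun s => mn n (P s) with hMdef
  obtain ⟨b0, c0, M', hMd, hMT⟩ := taylor_two (hM.of_le (by norm_cast; omega))
  have hq : ∀ j : Fin n, ∃ g : ℝ → ℝ, ContDiffAt ℝ n g 0 ∧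
      ∀ᶠ s in 𝓝 (0 : ℝ), (cen n (P s)).coeff j = s ^ (n - j : ℕ) * g s := fun j =>
    hadamard (n - j) ((hcc j).of_le (by norm_cast; omega)) ((hO j).mono nhdsWithin_le_nhds)
  choose q hqc hq using hq
  let Q : ℝ → ℝ[X] := fun s => mkp fun j => q j s
  have hQR : ∀ᶠ s in 𝓝[≠] (0 : ℝ), Q s = (cen n (P s)).scaleRoots s⁻¹ := by
    filter_upwards [hyp.filter_mono nhdsWithin_le_nhds, self_mem_nhdsWithin,
      (eventually_all.2 hq).filter_mono nhdsWithin_le_nhds] with s ⟨y, hy⟩ hs h2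
    have hs0 : s ≠ 0 := hs
    refine poly_ext_of_cf (n := n) (mkp_monic _) ?_ (mkp_natDegree _) ?_ ?_
    · rw [hy, scaleRoots_pr]; exact pr_monic _
    · rw [hy, scaleRoots_pr]; exact pr_natDegree _
    · rw [cf_mkp]
      ext j
      simp only [cf]
      rw [coeff_scaleRoots, h2 j]
      have : (cen n (P s)).natDegree = n := by rw [hy]; exact pr_natDegree _
      rw [this, inv_pow, mul_comm (s ^ _), mul_assoc, mul_inv_cancel₀ (pow_ne_zero _ hs0), mul_one]
  have hQne : ∀ᶠ s in 𝓝[≠] (0 : ℝ), Hyp n (Q s) := by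
    filter_upwards [hQR, hyp.filter_mono nhdsWithin_le_nhds] with s h1 ⟨y, hy⟩
    rw [h1, hy, scaleRoots_pr]
    exact ⟨_, rfl⟩
  have hQ0 : Hyp n (Q 0) := by
    obtain ⟨ρ, hρ, -⟩ := roots_cont hQne (v := fun j => q j 0) (fun j => by
      simp only [Q, mkp_coeff]
      exact (hqc j).continuousAt.tendsto.mono_left nhdsWithin_le_nhds)
    exact ⟨ρ, hρ⟩
  have hQ : ∀ᶠ s in 𝓝 (0 : ℝ), Hyp n (Q s) := by
    rw [eventually_nhdsWithin_iff] at hQne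
    filter_upwards [hQne] with s hs
    by_cases h : s = 0
    · rw [h]; exact hQ0
    · exact hs h
  obtain ⟨α, β, hJ⟩ := jm1 n Q hQ (fun j => by simpa only [Q, mkp_coeff] using hqc j)
  refine ⟨M 0, fun i => b0 + α i, fun i => c0 + β i, ?_, fun ε hε => ?_⟩
  · rw [hy0]
    congr 1
    ext i
    have hn0 : (n : ℝ) ≠ 0 := by positivity
    simp only [M, mn]
    rw [hy0]
    obtain ⟨n, rfl⟩ : ∃ k, n = k + 1 := ⟨n - 1, by omega⟩
    rw [Nat.add_sub_cancel, pr_coeff_one, neg_neg, Finset.sum_congr rfl fun j _ => heq j i]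
    simp only [Finset.sum_const, Finset.card_univ, Fintype.card_fin, nsmul_eq_mul]
    field_simp
  have hQR' := hQR
  rw [eventually_nhdsWithin_iff] at hQR'
  have hε4 : 0 < ε / 4 := by positivity
  filter_upwards [hMT (ε / 4) hε4, hJ (ε / 4) hε4, hMd.filter_mono nhdsWithin_le_nhds, hQR,
    hQR'.eventually_nhds.filter_mono nhdsWithin_le_nhds, self_mem_nhdsWithin,
    hP.filter_mono nhdsWithin_le_nhds, hP.eventually_nhds.filter_mono nhdsWithin_le_nhds] with
    s ⟨h1, h2⟩ ⟨⟨z, hz, hz'⟩, hD⟩ h3 h4 h5 hs0 ⟨y1, hy1⟩ h6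
  have hs0 : s ≠ 0 := hs0
  have hsp : 0 < |s| := abs_pos.2 hs0
  have hsq : |s| * |s| = s ^ 2 := by rw [← sq, sq_abs]
  have key : ∀ (i : Fin n) (w : ℝ), |w - (α i + β i * s)| ≤ ε / 4 * |s| →
      |s * w + M s - (M 0 + (b0 + α i) * s + (c0 + β i) * s ^ 2)| ≤ ε * s ^ 2 := by
    intro i w hw
    have e : s * w + M s - (M 0 + (b0 + α i) * s + (c0 + β i) * s ^ 2) =
      (M s - (M 0 + b0 * s + c0 * s ^ 2)) + s * (w - (α i + β i * s)) := by ring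
    rw [e]
    refine (abs_add_le _ _).trans ?_
    rw [abs_mul]
    have : |s| * |w - (α i + β i * s)| ≤ |s| * (ε / 4 * |s|) := by gcongr
    nlinarith [sq_nonneg s]
  refine ⟨⟨fun i => s * z i + M s, ?_, fun i => key i _ (hz' i)⟩, fun x x' hx hd => ?_⟩
  · have e1 : (pr fun i => s⁻¹ * (y1 i - M s)) = pr z := by
      rw [← hz, h4, hy1, cen_pr, scaleRoots_pr, ← hy1]
    obtain ⟨σ, hσ⟩ := pr_perm e1
    rw [hy1, ← pr_comp (fun i => s * z i + M s) σ]
    congr 1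
    ext i
    have := congrFun hσ i
    simp only [Function.comp] at this ⊢
    rw [← this]
    field_simp
    ring
  · have hw : HasDerivAt (fun t => t⁻¹ * (x t - M t)) (s⁻¹ * (x' - M' s) - (s ^ 2)⁻¹ * (x s - M s)) s := by
      have := (hasDerivAt_inv hs0).mul (hd.sub h3)
      refine this.congr_deriv ?_
      simp only [Pi.sub_apply]
      ring
    obtain ⟨i, hi1, hi2⟩ := hD _ _ (by
      refine ((hx.and_eventually (h5.filter_mono nhdsWithin_le_nhds)).and_eventually
        ((h6.filter_mono nhdsWithin_le_nhds).and
        (nhdsWithin_le_nhds (isOpen_ne.mem_nhds hs0)))).mono fun t ht => ?_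
      obtain ⟨⟨ht1, ht2⟩, ⟨y, hy⟩, ht0⟩ := ht
      rw [ht2 ht0, hy, cen_pr, scaleRoots_pr, pr_isRoot]
      rw [hy, pr_isRoot] at ht1
      obtain ⟨i, hi⟩ := ht1
      exact ⟨i, by simp only [M]; rw [hi, hy]⟩) hw
    set w := s⁻¹ * (x s - M s) with hwdef
    set w' := s⁻¹ * (x' - M' s) - (s ^ 2)⁻¹ * (x s - M s) with hw'def
    have ex : x s = s * w + M s := by rw [hwdef]; field_simp; ring
    have ex' : x' = M' s + w + s * w' := by rw [hw'def, hwdef]; field_simp; ring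
    refine ⟨i, by rw [ex]; exact key i w hi1, ?_⟩
    have e : x' - (b0 + α i + 2 * (c0 + β i) * s) = (M' s - (b0 + 2 * c0 * s)) + (w - (α i + β i * s)) +
      s * (w' - β i) := by rw [ex']; ring
    rw [e]
    refine (abs_add_three _ _ _).trans ?_
    rw [abs_mul]
    have : |s| * |w' - β i| ≤ |s| * (ε / 4) := by gcongr
    nlinarith

end JetTwo

open Set Filter Topology Polynomial

section PartF

theorem tendsto_shift (t : ℝ) : Tendsto (fun s : ℝ => s - t) (𝓝[≠] t) (𝓝[≠] 0) := by
  refine tendsto_nhdsWithin_iff.2 ⟨?_, ?_⟩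
  · have : Tendsto (fun s : ℝ => s - t) (𝓝 t) (𝓝 (t - t)) := (continuous_sub_right t).tendsto t
    rw [sub_self] at this
    exact this.mono_left nhdsWithin_le_nhds
  · filter_upwards [self_mem_nhdsWithin] with s hs
    exact sub_ne_zero.2 hs

theorem tendsto_shift' (t s : ℝ) : Tendsto (fun u : ℝ => u - t) (𝓝[≠] s) (𝓝[≠] (s - t)) := by
  refine tendsto_nhdsWithin_iff.2 ⟨?_, ?_⟩
  · exact ((continuous_sub_right t).tendsto s).mono_left nhdsWithin_le_nhds
  · filter_upwards [self_mem_nhdsWithin] with u hu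
    intro h
    exact hu (by simpa using h)

/-- Second order jets of the roots at a point where all roots coincide. -/
def J2t (n : ℕ) (P : ℝ → ℝ[X]) (t a : ℝ) (b c : Fin n → ℝ) : Prop :=
  (P t = pr fun _ : Fin n => a) ∧ ∀ ε > 0, ∀ᶠ s in 𝓝[≠] t,
    (∃ y : Fin n → ℝ, P s = pr y ∧
      ∀ i, |y i - (a + b i * (s - t) + c i * (s - t) ^ 2)| ≤ ε * (s - t) ^ 2) ∧
    ∀ (x : ℝ → ℝ) (x' : ℝ), (∃ᶠ u in 𝓝[≠] s, (P u).IsRoot (x u)) → HasDerivAt x x' s →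
      ∃ i, |x s - (a + b i * (s - t) + c i * (s - t) ^ 2)| ≤ ε * (s - t) ^ 2 ∧
        |x' - (b i + 2 * c i * (s - t))| ≤ ε * |s - t|

theorem J2.translate {n : ℕ} {P : ℝ → ℝ[X]} {t : ℝ} (h : J2 n (fun s => P (s + t))) :
    ∃ a b c, J2t n P t a b c := by
  obtain ⟨a, b, c, h0, H⟩ := h
  refine ⟨a, b, c, by simpa using h0, fun ε hε => ?_⟩
  filter_upwards [(tendsto_shift t).eventually (H ε hε)] with s hs
  refine ⟨by simpa using hs.1, fun x x' hx hd => ?_⟩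
  have := hs.2 (fun u => x (u + t)) x' ?_ ?_
  · simpa using this
  · have h2 : ∃ᶠ u in 𝓝[≠] s, (P (u - t + t)).IsRoot (x (u - t + t)) := by simpa using hx
    exact (tendsto_shift' t s).frequently h2
  · have h3 : HasDerivAt x x' (s - t + t) := by simpa using hd
    exact h3.comp_add_const (s - t) t

/-- Distinct jets separate. -/
theorem jet_sep {a t : ℝ} {b c b' c' : ℝ} (h : ¬ (b = b' ∧ c = c')) :
    ∃ κ > 0, ∀ᶠ s in 𝓝[≠] t, κ * (s - t) ^ 2 ≤
      |(a + b * (s - t) + c * (s - t) ^ 2) - (a + b' * (s - t) + c' * (s - t) ^ 2)| := by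
  by_cases hb : b = b'
  · have hc : c ≠ c' := fun hc => h ⟨hb, hc⟩
    refine ⟨|c - c'|, abs_pos.2 (sub_ne_zero.2 hc), Eventually.of_forall fun s => ?_⟩
    rw [show (a + b * (s - t) + c * (s - t) ^ 2) - (a + b' * (s - t) + c' * (s - t) ^ 2) =
      (c - c') * (s - t) ^ 2 by rw [hb]; ring, abs_mul, abs_of_nonneg (sq_nonneg (s - t))]
  · have hb' : 0 < |b - b'| := abs_pos.2 (sub_ne_zero.2 hb)
    refine ⟨1, one_pos, ?_⟩
    have hev : ∀ᶠ s in 𝓝[≠] t, |s - t| * (1 + |c - c'|) < |b - b'| := by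
      refine Eventually.filter_mono nhdsWithin_le_nhds ?_
      have : ContinuousAt (fun s : ℝ => |s - t| * (1 + |c - c'|)) t := by fun_prop
      refine this.eventually_lt continuousAt_const ?_
      simpa using hb'
    filter_upwards [hev] with s hs
    rw [show (a + b * (s - t) + c * (s - t) ^ 2) - (a + b' * (s - t) + c' * (s - t) ^ 2) =
      (s - t) * ((b - b') + (c - c') * (s - t)) by ring, abs_mul, ← sq_abs (s - t)]
    have h1 : |b - b'| ≤ |(b - b') + (c - c') * (s - t)| + |c - c'| * |s - t| := by
      rw [← abs_mul]
      have := abs_sub_abs_le_abs_sub (b - b') (-((c - c') * (s - t)))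
      rw [abs_neg, sub_neg_eq_add] at this
      linarith
    have h2 : |s - t| ≤ |(b - b') + (c - c') * (s - t)| := by nlinarith
    have := abs_nonneg (s - t)
    nlinarith

/-- Value control gives a first derivative. -/
theorem jet_d1 {x : ℝ → ℝ} {t a b c : ℝ} (h0 : x t = a)
    (h : ∀ ε > 0, ∀ᶠ s in 𝓝[≠] t, |x s - (a + b * (s - t) + c * (s - t) ^ 2)| ≤ ε * (s - t) ^ 2) :
    HasDerivAt x b t := by
  rw [hasDerivAt_iff_isLittleO, Asymptotics.isLittleO_iff]
  intro ε hε
  have h1 : ∀ᶠ s in 𝓝 t, |s - t| * (1 + |c|) < ε := by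
    have : ContinuousAt (fun s : ℝ => |s - t| * (1 + |c|)) t := by fun_prop
    refine this.eventually_lt continuousAt_const ?_
    simpa using hε
  have h2 := eventually_nhdsWithin_iff.1 (h 1 one_pos)
  filter_upwards [h1, h2] with s hs1 hs2
  by_cases hst : s = t
  · simp [hst]
  have h3 := hs2 hst
  rw [h0, Real.norm_eq_abs, Real.norm_eq_abs, smul_eq_mul]
  have h4 : |x s - a - (s - t) * b| ≤ |x s - (a + b * (s - t) + c * (s - t) ^ 2)| +
      |c| * |s - t| ^ 2 := by
    rw [← abs_pow, ← abs_mul]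
    refine le_trans (le_of_eq ?_) (abs_add_le _ _)
    congr 1; ring
  have h5 := sq_abs (s - t)
  have h6 := abs_nonneg (s - t)
  have h7 : |s - t| * (|s - t| * (1 + |c|)) ≤ |s - t| * ε := mul_le_mul_of_nonneg_left hs1.le h6
  nlinarith

/-- Value and derivative control gives second differentiability. -/
theorem jet_d2 {x : ℝ → ℝ} {t a b c : ℝ} (h0 : x t = a)
    (h : ∀ ε > 0, ∀ᶠ s in 𝓝[≠] t, |x s - (a + b * (s - t) + c * (s - t) ^ 2)| ≤ ε * (s - t) ^ 2)
    (h' : ∀ ε > 0, ∀ᶠ s in 𝓝[≠] t, |deriv x s - (b + 2 * c * (s - t))| ≤ ε * |s - t|) :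
    DifferentiableAt ℝ (deriv x) t := by
  have hb := (jet_d1 h0 h).deriv
  have : HasDerivAt (deriv x) (2 * c) t := by
    rw [hasDerivAt_iff_isLittleO, Asymptotics.isLittleO_iff]
    intro ε hε
    filter_upwards [eventually_nhdsWithin_iff.1 (h' ε hε)] with s hs
    by_cases hst : s = t
    · simp [hst]
    rw [hb, Real.norm_eq_abs, Real.norm_eq_abs, smul_eq_mul]
    refine le_trans (le_of_eq ?_) (hs hst)
    congr 1; ring
  exact this.differentiableAt

/-- One sided consistency of the jets. -/
theorem jet_side {n : ℕ} {P : ℝ → ℝ[X]} {t a : ℝ} {b c : Fin n → ℝ} (H : J2t n P t a b c)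
    {f : ℝ → Fin n → ℝ} (hf : ∀ᶠ s in 𝓝[≠] t, TD P f s) {l : Filter ℝ} [l.NeBot]
    (hl : l ≤ 𝓝[≠] t) (hl2 : ∀ u ∈ l, ∃ v ∈ l, v ⊆ u ∧ IsPreconnected v) :
    ∃ σ : Equiv.Perm (Fin n), ∀ i, ∀ ε > 0, ∀ᶠ s in l,
      |f s i - (a + b (σ i) * (s - t) + c (σ i) * (s - t) ^ 2)| ≤ ε * (s - t) ^ 2 ∧
      |deriv (fun v => f v i) s - (b (σ i) + 2 * c (σ i) * (s - t))| ≤ ε * |s - t| := by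
  classical
  have hsep : ∃ κ > 0, ∀ i j, ¬ (b i = b j ∧ c i = c j) → ∀ᶠ s in 𝓝[≠] t, κ * (s - t) ^ 2 ≤
      |(a + b i * (s - t) + c i * (s - t) ^ 2) - (a + b j * (s - t) + c j * (s - t) ^ 2)| := by
    have : ∀ p : Fin n × Fin n, ∃ κ > 0, ¬ (b p.1 = b p.2 ∧ c p.1 = c p.2) →
      ∀ᶠ s in 𝓝[≠] t, κ * (s - t) ^ 2 ≤ |(a + b p.1 * (s - t) + c p.1 * (s - t) ^ 2) -
        (a + b p.2 * (s - t) + c p.2 * (s - t) ^ 2)| := by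
      intro p
      by_cases hp : b p.1 = b p.2 ∧ c p.1 = c p.2
      · exact ⟨1, one_pos, fun h => absurd hp h⟩
      · obtain ⟨κ, h1, h2⟩ := jet_sep (a := a) (t := t) hp
        exact ⟨κ, h1, fun _ => h2⟩
    choose κ hκ hκ2 using this
    obtain ⟨m, hm0, hm⟩ : ∃ m > 0, ∀ p, m ≤ κ p := by
      have := Finite.exists_min (α := Option (Fin n × Fin n)) (fun o => o.elim 1 κ)
      obtain ⟨o, ho⟩ := this
      refine ⟨o.elim 1 κ, ?_, fun p => ho (some p)⟩
      cases o with
      | none => exact one_pos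
      | some p => exact hκ p
    refine ⟨m, hm0, fun i j hij => ?_⟩
    filter_upwards [hκ2 (i, j) hij] with s hs
    exact le_trans (mul_le_mul_of_nonneg_right (hm _) (sq_nonneg _)) hs
  obtain ⟨κ, hκ, hsep⟩ := hsep
  have hsep' : ∀ᶠ s in 𝓝[≠] t, ∀ i j, ¬ (b i = b j ∧ c i = c j) → κ * (s - t) ^ 2 ≤
      |(a + b i * (s - t) + c i * (s - t) ^ 2) - (a + b j * (s - t) + c j * (s - t) ^ 2)| := by
    refine eventually_all.2 fun i => eventually_all.2 fun j => ?_
    by_cases hij : b i = b j ∧ c i = c j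
    · exact Eventually.of_forall fun s h => absurd hij h
    · exact (hsep i j hij).mono fun s hs _ => hs
  -- the good set for the value `κ / 4`
  have hperm : ∀ ε > 0, ∀ᶠ s in 𝓝[≠] t, ∃ σ : Equiv.Perm (Fin n), ∀ i,
      |f s i - (a + b (σ i) * (s - t) + c (σ i) * (s - t) ^ 2)| ≤ ε * (s - t) ^ 2 := by
    intro ε hε
    filter_upwards [H.2 ε hε, hf] with s ⟨⟨y, hy, hy2⟩, _⟩ hs
    obtain ⟨σ, hσ⟩ := pr_perm (hs.1.self_of_nhds.1.symm.trans hy)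
    refine ⟨σ, fun i => ?_⟩
    rw [hσ]; exact hy2 (σ i)
  have hcont : ∀ᶠ s in 𝓝[≠] t, ∀ i, ContinuousAt (fun v => f v i) s :=
    hf.mono fun s hs i => (hs.1.self_of_nhds.2 i).continuousAt
  have hgood := hl ((hsep'.and ((hperm (κ / 4) (by positivity)).and hcont)).and self_mem_nhdsWithin)
  obtain ⟨v, hvl, hvu, hvc⟩ := hl2 _ hgood
  obtain ⟨s0, hs0⟩ := Filter.nonempty_of_mem hvl
  obtain ⟨σ, hσ⟩ := (hvu hs0).1.2.1
  have hall : ∀ s ∈ v, ∀ i,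
      |f s i - (a + b (σ i) * (s - t) + c (σ i) * (s - t) ^ 2)| ≤ κ / 4 * (s - t) ^ 2 := by
    intro s hs i
    by_contra hcon
    push Not at hcon
    let h : ℝ → ℝ := fun s => |f s i - (a + b (σ i) * (s - t) + c (σ i) * (s - t) ^ 2)| -
      κ / 2 * (s - t) ^ 2
    have hhc : ContinuousOn h v := by
      intro u hu
      have := (hvu hu).1.2.2 i
      refine ContinuousAt.continuousWithinAt ?_
      fun_prop
    have hpos : ∀ u ∈ v, 0 < (u - t) ^ 2 := by
      intro u hu
      have h1 : u ≠ t := (hvu hu).2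
      have := sub_ne_zero.2 h1
      positivity
    have dich : ∀ u ∈ v, |f u i - (a + b (σ i) * (u - t) + c (σ i) * (u - t) ^ 2)| ≤
        κ / 4 * (u - t) ^ 2 ∨ 3 * κ / 4 * (u - t) ^ 2 ≤
        |f u i - (a + b (σ i) * (u - t) + c (σ i) * (u - t) ^ 2)| := by
      intro u hu
      obtain ⟨τ, hτ⟩ := (hvu hu).1.2.1
      by_cases hj : b (τ i) = b (σ i) ∧ c (τ i) = c (σ i)
      · left; rw [← hj.1, ← hj.2]; exact hτ i
      · right
        have h1 := (hvu hu).1.1 _ _ hj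
        have h2 := hτ i
        have h3 := abs_sub_le (a + b (τ i) * (u - t) + c (τ i) * (u - t) ^ 2) (f u i)
          (a + b (σ i) * (u - t) + c (σ i) * (u - t) ^ 2)
        rw [abs_sub_comm _ (f u i)] at h3
        linarith
    have hs1 : 0 ≤ h s := by
      rcases dich s hs with h1 | h1
      · exact absurd hcon (not_lt.2 h1)
      · have := hpos s hs
        simp only [h]; nlinarith
    have hs2 : h s0 ≤ 0 := by
      have h1 := hσ i
      have := hpos s0 hs0
      simp only [h]; nlinarith
    obtain ⟨u, hu, hu0⟩ := hvc.intermediate_value hs0 hs hhc ⟨hs2, hs1⟩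
    have := hpos u hu
    simp only [h] at hu0
    rcases dich u hu with h1 | h1 <;> nlinarith
  refine ⟨σ, fun i ε hε => ?_⟩
  have hε' : 0 < min ε (κ / 4) := lt_min hε (by positivity)
  filter_upwards [hvl, hl (H.2 _ hε'), hl hf] with s hs hH hTD
  have hd := hTD.1.self_of_nhds.2 i
  have hroot : ∀ᶠ u in 𝓝[≠] s, (P u).IsRoot (f u i) := by
    refine Eventually.filter_mono nhdsWithin_le_nhds (hTD.1.mono fun u hu => ?_)
    rw [hu.1, pr_isRoot]
    exact ⟨i, rfl⟩
  obtain ⟨j, hj1, hj2⟩ := hH.2 (fun v => f v i) _ hroot.frequently hd.hasDerivAt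
  have hst : s ≠ t := (hvu hs).2
  have hpos : 0 < (s - t) ^ 2 := by
    have := sub_ne_zero.2 hst
    positivity
  have hjσ : b j = b (σ i) ∧ c j = c (σ i) := by
    by_contra hne
    have h1 := (hvu hs).1.1 _ _ hne
    have h2 := hall s hs i
    have h3 := abs_sub_le (a + b j * (s - t) + c j * (s - t) ^ 2) (f s i)
      (a + b (σ i) * (s - t) + c (σ i) * (s - t) ^ 2)
    rw [abs_sub_comm _ (f s i)] at h3
    have h4 : min ε (κ / 4) * (s - t) ^ 2 ≤ κ / 4 * (s - t) ^ 2 :=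
      mul_le_mul_of_nonneg_right (min_le_right _ _) hpos.le
    nlinarith
  rw [hjσ.1, hjσ.2] at hj1 hj2
  exact ⟨hj1.trans (mul_le_mul_of_nonneg_right (min_le_left _ _) hpos.le),
    hj2.trans (mul_le_mul_of_nonneg_right (min_le_left _ _) (abs_nonneg _))⟩

end PartF

open Set Filter Topology Polynomial

section PartF2

theorem jet_isolated {n : ℕ} {P : ℝ → ℝ[X]} {t a : ℝ} {b c : Fin n → ℝ} (H : J2t n P t a b c)
    {f : ℝ → Fin n → ℝ} (hf : ∀ᶠ s in 𝓝[≠] t, TD P f s) :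
    ∃ g : ℝ → Fin n → ℝ, ∀ᶠ s in 𝓝 t, TD P g s := by
  classical
  obtain ⟨σ, hσ⟩ := jet_side H hf (l := 𝓝[>] t) (nhdsWithin_mono _ fun s hs => ne_of_gt hs) (by
    intro u hu
    obtain ⟨d, hd, hd2⟩ := mem_nhdsGT_iff_exists_Ioo_subset.1 hu
    exact ⟨Ioo t d, Ioo_mem_nhdsGT hd, hd2, isPreconnected_Ioo⟩)
  obtain ⟨τ, hτ⟩ := jet_side H hf (l := 𝓝[<] t) (nhdsWithin_mono _ fun s hs => ne_of_lt hs) (by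
    intro u hu
    obtain ⟨d, hd, hd2⟩ := mem_nhdsLT_iff_exists_Ioo_subset.1 hu
    exact ⟨Ioo d t, Ioo_mem_nhdsLT hd, hd2, isPreconnected_Ioo⟩)
  let g : ℝ → Fin n → ℝ := fun s => if s < t then f s ∘ τ.symm else
    if t < s then f s ∘ σ.symm else fun _ => a
  have gl : ∀ s < t, g =ᶠ[𝓝 s] fun s => f s ∘ τ.symm := by
    intro s hs
    filter_upwards [Iio_mem_nhds hs] with u hu
    exact if_pos hu
  have gr : ∀ s, t < s → g =ᶠ[𝓝 s] fun s => f s ∘ σ.symm := by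
    intro s hs
    filter_upwards [Ioi_mem_nhds hs] with u hu
    have hu' : t < u := hu
    simp only [g]
    rw [if_neg (not_lt.2 hu'.le), if_pos hu']
  have gt : g t = fun _ => a := by simp [g]
  have hne : ∀ᶠ s in 𝓝[≠] t, TD P g s := by
    filter_upwards [hf, self_mem_nhdsWithin] with s hs hst
    rcases lt_or_gt_of_ne (show s ≠ t from hst) with h | h
    · exact (TD_glueHyp P).germ _ _ _ (gl s h).symm ((TD_glueHyp P).perm _ _ τ.symm hs)
    · exact (TD_glueHyp P).germ _ _ _ (gr s h).symm ((TD_glueHyp P).perm _ _ σ.symm hs)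
  have hjet : ∀ i, ∀ ε > 0, ∀ᶠ s in 𝓝[≠] t,
      |g s i - (a + b i * (s - t) + c i * (s - t) ^ 2)| ≤ ε * (s - t) ^ 2 ∧
      |deriv (fun v => g v i) s - (b i + 2 * c i * (s - t))| ≤ ε * |s - t| := by
    intro i ε hε
    rw [← Iio_union_Ioi, nhdsWithin_union, eventually_sup]
    constructor
    · filter_upwards [hτ (τ.symm i) ε hε, self_mem_nhdsWithin] with s hs hst
      have e1 : g s i = f s (τ.symm i) := by rw [(gl s hst).self_of_nhds]; rfl
      have e2 : (fun v => g v i) =ᶠ[𝓝 s] fun v => f v (τ.symm i) :=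
        (gl s hst).fun_comp (fun w : Fin n → ℝ => w i)
      rw [e1, e2.deriv_eq]
      simpa using hs
    · filter_upwards [hσ (σ.symm i) ε hε, self_mem_nhdsWithin] with s hs hst
      have e1 : g s i = f s (σ.symm i) := by rw [(gr s hst).self_of_nhds]; rfl
      have e2 : (fun v => g v i) =ᶠ[𝓝 s] fun v => f v (σ.symm i) :=
        (gr s hst).fun_comp (fun w : Fin n → ℝ => w i)
      rw [e1, e2.deriv_eq]
      simpa using hs
  have hd1 : ∀ i, HasDerivAt (fun v => g v i) (b i) t := fun i =>
    jet_d1 (a := a) (c := c i) (by rw [gt]) fun ε hε => (hjet i ε hε).mono fun s hs => hs.1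
  have hd2 : ∀ i, DifferentiableAt ℝ (deriv fun v => g v i) t := fun i =>
    jet_d2 (a := a) (b := b i) (c := c i) (by rw [gt])
      (fun ε hε => (hjet i ε hε).mono fun s hs => hs.1)
      fun ε hε => (hjet i ε hε).mono fun s hs => hs.2
  have htt : TD P g t := by
    refine ⟨?_, hd2⟩
    filter_upwards [eventually_nhdsWithin_iff.1 hne] with u hu
    by_cases hut : u = t
    · rw [hut]
      exact ⟨by rw [gt]; exact H.1, fun i => (hd1 i).differentiableAt⟩
    · exact (hu hut).1.self_of_nhds
  refine ⟨g, ?_⟩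
  filter_upwards [eventually_nhdsWithin_iff.1 hne] with u hu
  by_cases hut : u = t
  · rw [hut]; exact htt
  · exact hu hut

/-- Local hypotheses at a point. -/
def Good (n : ℕ) (P : ℝ → ℝ[X]) (t : ℝ) : Prop :=
  (∀ᶠ s in 𝓝 t, Hyp n (P s)) ∧ ∀ j : Fin n, ContDiffAt ℝ (2 * n : ℕ) (fun s => (P s).coeff j) t

theorem Good.eventually {n : ℕ} {P : ℝ → ℝ[X]} {t : ℝ} (h : Good n P t) :
    ∀ᶠ s in 𝓝 t, Good n P s := by
  filter_upwards [eventually_eventually_nhds.2 h.1,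
    eventually_all.2 fun j => (h.2 j).eventually (WithTop.coe_injective.ne (ENat.natCast_ne_top (2 * n)))] with s h1 h2
  exact ⟨h1, h2⟩

theorem Good.J2t {n : ℕ} (hn : 1 ≤ n) {P : ℝ → ℝ[X]} {t a : ℝ} (h : Good n P t)
    (ha : P t = pr fun _ : Fin n => a) : ∃ a b c, J2t n P t a b c := by
  refine J2.translate (jm2 hn (y0 := fun _ => a) ?_ ?_ (by simpa using ha) fun _ _ => rfl)
  · have : Tendsto (fun s : ℝ => s + t) (𝓝 0) (𝓝 t) := by
      have := (continuous_add_const t).tendsto (0 : ℝ)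
      simpa using this
    exact this.eventually h.1
  · intro j
    have h1 : ContDiffAt ℝ (2 * n : ℕ) (fun s => (P s).coeff j) (0 + t) := by simpa using h.2 j
    exact h1.comp (0 : ℝ) (f := fun s => s + t) (by fun_prop)

theorem TD_append {k l : ℕ} {A B : ℝ → ℝ[X]} {f : ℝ → Fin k → ℝ} {g : ℝ → Fin l → ℝ} {t : ℝ}
    {P : ℝ → ℝ[X]} (hP : ∀ᶠ s in 𝓝 t, P s = A s * B s)
    (hf : TD A f t) (hg : TD B g t) : TD P (fun s => Fin.append (f s) (g s)) t := by
  have key : ∀ (p : (ℝ → ℝ) → Prop), (∀ i, p fun v => f v i) → (∀ i, p fun v => g v i) →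
      ∀ i, p fun v => Fin.append (f v) (g v) i := by
    intro p h1 h2 i
    refine Fin.addCases (fun i => ?_) (fun i => ?_) i
    · simpa using h1 i
    · simpa using h2 i
  refine ⟨?_, key (fun x => DifferentiableAt ℝ (deriv x) t) hf.2 hg.2⟩
  filter_upwards [hP, hf.1, hg.1] with u h0 h1 h2
  refine ⟨by rw [h0, h1.1, h2.1, pr_append], key (fun x => DifferentiableAt ℝ x u) h1.2 h2.2⟩

/-- The inductive claim. -/
def LTh (n : ℕ) : Prop := ∀ (P : ℝ → ℝ[X]) (t : ℝ), Good n P t →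
  ∃ f : ℝ → Fin n → ℝ, ∀ᶠ s in 𝓝 t, TD P f s

theorem LTh_split {n : ℕ} (ih : ∀ m < n, LTh m) {P : ℝ → ℝ[X]} {t : ℝ} (h : Good n P t)
    (hne : ¬ ∃ a, P t = pr fun _ : Fin n => a) :
    ∃ f : ℝ → Fin n → ℝ, ∀ᶠ s in 𝓝 t, TD P f s := by
  obtain ⟨y, hy⟩ := h.1.self_of_nhds
  have hij : ∃ i j, y i ≠ y j := by
    by_contra hcon
    push Not at hcon
    apply hne
    rcases Nat.eq_zero_or_pos n with h0 | h0
    · subst h0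
      exact ⟨0, by rw [hy]; congr 1; ext i; exact i.elim0⟩
    · exact ⟨y ⟨0, h0⟩, by rw [hy]; congr 1; ext i; exact hcon _ _⟩
  obtain ⟨i, j, hij⟩ := hij
  obtain ⟨k, l, hkl, hk, hl, A, B, hA, hB, hAB, hcA, hcB⟩ := split_local h.1 h.2 hy hij
  obtain ⟨f, hf⟩ := ih k hk A t ⟨hA, fun j => (hcA j).of_le (by norm_cast; omega)⟩
  obtain ⟨g, hg⟩ := ih l hl B t ⟨hB, fun j => (hcB j).of_le (by norm_cast; omega)⟩
  subst hkl
  refine ⟨fun s => Fin.append (f s) (g s), ?_⟩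
  filter_upwards [eventually_eventually_nhds.2 hAB, hf, hg] with s h1 h2 h3
  exact TD_append h1 h2 h3

theorem eventually_punctured {p : ℝ → Prop} {t : ℝ} (h : ∀ᶠ s in 𝓝[≠] t, p s) :
    ∀ᶠ u in 𝓝 t, ∀ᶠ s in 𝓝[≠] u, p s := by
  filter_upwards [eventually_eventually_nhds.2 (eventually_nhdsWithin_iff.1 h)] with u hu
  by_cases hut : u = t
  · rw [hut]; exact h
  · refine Eventually.filter_mono nhdsWithin_le_nhds ?_
    filter_upwards [hu, isOpen_ne.mem_nhds hut] with s hs hst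
    exact hs hst

theorem pr_const_eq {n : ℕ} {y : Fin n → ℝ} {a : ℝ} (h : pr y = pr fun _ : Fin n => a) (i : Fin n) :
    y i = a := by
  obtain ⟨σ, hσ⟩ := pr_perm h
  rw [hσ]; rfl

theorem LTh_step {n : ℕ} (hn : 1 ≤ n) (ih : ∀ m < n, LTh m) : LTh n := by
  classical
  intro P t0 hP0
  let I : Set ℝ := interior {t | Good n P t}
  have hIo : IsOpen I := isOpen_interior
  have hIg : ∀ t ∈ I, Good n P t := fun t ht => interior_subset (s := {t | Good n P t}) ht
  have ht0 : t0 ∈ I := mem_interior_iff_mem_nhds.2 hP0.eventually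
  let F : Set ℝ := {t | ∃ a, P t = pr fun _ : Fin n => a}
  -- the complement of `F` is open in `I`
  have hFc : ∀ t ∈ I, t ∉ F → ∀ᶠ s in 𝓝 t, s ∉ F := by
    intro t ht htF
    obtain ⟨f, hf⟩ := LTh_split ih (hIg t ht) htF
    have hft := hf.self_of_nhds
    have hij : ∃ i, f t i ≠ f t ⟨0, hn⟩ := by
      by_contra hcon
      push Not at hcon
      apply htF
      refine ⟨f t ⟨0, hn⟩, ?_⟩
      rw [hft.1.self_of_nhds.1]
      congr 1; ext i; exact hcon i
    obtain ⟨i, hij⟩ := hij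
    have h1 := (hft.1.self_of_nhds.2 i).continuousAt
    have h2 := (hft.1.self_of_nhds.2 ⟨0, hn⟩).continuousAt
    filter_upwards [(h1.sub h2).eventually_ne (sub_ne_zero.2 hij), hft.1] with s hs hs2
    rintro ⟨a, ha⟩
    have h3 := pr_const_eq (hs2.1.symm.trans ha)
    exact hs (sub_eq_zero.2 ((h3 _).trans (h3 _).symm))
  let U : Set ℝ := {t | t ∈ I ∧ ∀ᶠ s in 𝓝[≠] t, s ∉ F}
  have hUo : IsOpen U := by
    rw [isOpen_iff_mem_nhds]
    rintro t ⟨ht, ht2⟩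
    filter_upwards [hIo.mem_nhds ht, eventually_punctured ht2] with s h1 h2
    exact ⟨h1, h2⟩
  have hUloc : ∀ t ∈ U, ∃ f : ℝ → Fin n → ℝ, ∀ᶠ s in 𝓝 t, TD P f s := by
    rintro t ⟨ht, ht2⟩
    by_cases htF : t ∈ F
    · obtain ⟨a0, ha0⟩ := htF
      obtain ⟨a, b, c, H⟩ := (hIg t ht).J2t hn ha0
      have h1 : ∀ᶠ s in 𝓝 t, s ≠ t → s ∈ I ∧ s ∉ F := by
        filter_upwards [hIo.mem_nhds ht, eventually_nhdsWithin_iff.1 ht2] with s h1 h2 h3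
        exact ⟨h1, h2 h3⟩
      obtain ⟨V, hV, hVo, htV⟩ := eventually_nhds_iff.1 h1
      obtain ⟨f, hf⟩ := glue_open (TD_glueHyp (n := n) P) (U := V \ {t})
        (hVo.sdiff isClosed_singleton)
        (fun s hs => LTh_split ih (hIg s (hV s hs.1 hs.2).1) (hV s hs.1 hs.2).2)
      refine jet_isolated H (f := f) ?_
      filter_upwards [mem_nhdsWithin_of_mem_nhds (hVo.mem_nhds htV), self_mem_nhdsWithin]
        with s h2 h3
      exact hf s ⟨h2, h3⟩
    · exact LTh_split ih (hIg t ht) htF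
  obtain ⟨f, hf⟩ := glue_open (TD_glueHyp (n := n) P) hUo hUloc
  have hex : ∀ t ∈ I, ∃ y : Fin n → ℝ, P t = pr y := fun t ht => (hIg t ht).1.self_of_nhds
  choose! y hy using hex
  let g : ℝ → Fin n → ℝ := fun t => if t ∈ U then f t else y t
  have hgU : ∀ t ∈ U, TD P g t := by
    intro t ht
    refine (TD_glueHyp P).germ f g t ?_ (hf t ht)
    filter_upwards [hUo.mem_nhds ht] with s hs
    exact (if_pos hs).symm
  have hgP : ∀ t ∈ I, P t = pr (g t) := by
    intro t ht
    by_cases htU : t ∈ U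
    · exact (hgU t htU).1.self_of_nhds.1
    · simp only [g, if_neg htU]; exact hy t ht
  -- jets at the accumulation points of `F`
  have hacc : ∀ t ∈ I, t ∉ U → ∃ a b c, J2t n P t a (fun _ : Fin n => b) (fun _ => c) := by
    intro t ht htU
    have hfr : ∃ᶠ s in 𝓝[≠] t, s ∈ F := by
      by_contra hcon
      exact htU ⟨ht, not_frequently.1 hcon⟩
    have htF : t ∈ F := by
      by_contra hcon
      exact hfr ((hFc t ht hcon).filter_mono nhdsWithin_le_nhds)
    obtain ⟨a0, ha0⟩ := htF
    obtain ⟨a, b, c, H⟩ := (hIg t ht).J2t hn ha0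
    have hbc : ∀ i j, b i = b j ∧ c i = c j := by
      intro i j
      by_contra hne
      obtain ⟨κ, hκ, hsep⟩ := jet_sep (a := a) (t := t) hne
      obtain ⟨s, hsF, hs1, hs2, hst⟩ := (hfr.and_eventually (hsep.and
        ((H.2 (κ / 4) (by positivity)).and self_mem_nhdsWithin))).exists
      obtain ⟨⟨z, hz, hz2⟩, -⟩ := hs2
      obtain ⟨a1, ha1⟩ := hsF
      have hzi := pr_const_eq (hz.symm.trans ha1) i
      have hzj := pr_const_eq (hz.symm.trans ha1) j
      have h1 := hz2 i
      have h2 := hz2 j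
      rw [hzi, abs_sub_comm] at h1
      rw [hzj] at h2
      have h3 := abs_sub_le (a + b i * (s - t) + c i * (s - t) ^ 2) a1
        (a + b j * (s - t) + c j * (s - t) ^ 2)
      have hpos : 0 < (s - t) ^ 2 := by
        have := sub_ne_zero.2 (show s ≠ t from hst)
        positivity
      nlinarith
    have eb : b = fun _ => b ⟨0, hn⟩ := by ext i; exact (hbc i _).1
    have ec : c = fun _ => c ⟨0, hn⟩ := by ext i; exact (hbc i _).2
    rw [eb, ec] at H
    exact ⟨a, _, _, H⟩
  have hval : ∀ t ∈ I, ∀ a b c, J2t n P t a (fun _ : Fin n => b) (fun _ => c) → ∀ i,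
      g t i = a ∧ ∀ ε > 0, ∀ᶠ s in 𝓝[≠] t,
        |g s i - (a + b * (s - t) + c * (s - t) ^ 2)| ≤ ε * (s - t) ^ 2 := by
    intro t ht a b c H i
    refine ⟨pr_const_eq ((hgP t ht).symm.trans H.1) i, fun ε hε => ?_⟩
    filter_upwards [H.2 ε hε, mem_nhdsWithin_of_mem_nhds (hIo.mem_nhds ht)] with s hs hsI
    obtain ⟨⟨z, hz, hz2⟩, -⟩ := hs
    obtain ⟨σ, hσ⟩ := pr_perm ((hgP s hsI).symm.trans hz)
    rw [hσ]; exact hz2 _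
  have hdiff : ∀ t ∈ I, ∀ i, DifferentiableAt ℝ (fun v => g v i) t := by
    intro t ht i
    by_cases htU : t ∈ U
    · exact (hgU t htU).1.self_of_nhds.2 i
    · obtain ⟨a, b, c, H⟩ := hacc t ht htU
      obtain ⟨h1, h2⟩ := hval t ht a b c H i
      exact (jet_d1 h1 h2).differentiableAt
  refine ⟨g, ?_⟩
  filter_upwards [hIo.mem_nhds ht0] with t ht
  by_cases htU : t ∈ U
  · exact hgU t htU
  refine ⟨?_, fun i => ?_⟩
  · filter_upwards [hIo.mem_nhds ht] with s hs
    exact ⟨hgP s hs, hdiff s hs⟩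
  · obtain ⟨a, b, c, H⟩ := hacc t ht htU
    obtain ⟨h1, h2⟩ := hval t ht a b c H i
    refine jet_d2 h1 h2 fun ε hε => ?_
    filter_upwards [H.2 ε hε, mem_nhdsWithin_of_mem_nhds (hIo.mem_nhds ht)] with s hs hsI
    have hroot : ∀ᶠ u in 𝓝[≠] s, (P u).IsRoot (g u i) := by
      refine Eventually.filter_mono nhdsWithin_le_nhds ?_
      filter_upwards [hIo.mem_nhds hsI] with u hu
      rw [hgP u hu, pr_isRoot]
      exact ⟨i, rfl⟩
    obtain ⟨j, -, hj⟩ := hs.2 (fun v => g v i) _ hroot.frequently (hdiff s hsI i).hasDerivAt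
    exact hj

theorem LTh_all (n : ℕ) : LTh n := by
  induction n using Nat.strong_induction_on with
  | _ n ih =>
    rcases Nat.eq_zero_or_pos n with h0 | h0
    · subst h0
      intro P t h
      refine ⟨fun _ i => i.elim0, ?_⟩
      filter_upwards [eventually_eventually_nhds.2 h.1] with s hs
      refine ⟨?_, fun i => i.elim0⟩
      filter_upwards [hs] with u ⟨y, hy⟩
      exact ⟨by rw [hy]; congr 1; ext i; exact i.elim0, fun i => i.elim0⟩
    · exact LTh_step h0 ih

end PartF2

open Set Filter Topology Polynomial

theorem final_eval {R : Type*} [CommRing R] {n : ℕ} (φ : ℝ →+* R) (a : Fin n → ℝ) (z : R) :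
    (mkp fun i : Fin n => (-1 : ℝ) ^ ((Fin.rev i : ℕ) + 1) * a (Fin.rev i)).eval₂ φ z =
      z ^ n + ∑ j : Fin n, (-1 : R) ^ ((j : ℕ) + 1) * φ (a j) * z ^ (n - ((j : ℕ) + 1)) := by
  rw [mkp, eval₂_add, eval₂_X_pow, lk_apply, eval₂_finset_sum, ← Equiv.sum_comp Fin.revPerm]
  congr 1
  refine Finset.sum_congr rfl fun j _ => ?_
  rw [eval₂_monomial]
  simp [Fin.val_rev]

theorem roots_twice_differentiable (n : ℕ) (hn : 1 ≤ n) (a : Fin n → ℝ → ℝ)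
    (ha : ∀ j, ContDiff ℝ (2 * n) (a j))
    (hhyp : ∀ t : ℝ, ∀ z : ℂ,
      z ^ n + ∑ j : Fin n, (-1 : ℂ) ^ ((j : ℕ) + 1) * (a j t : ℂ) * z ^ (n - ((j : ℕ) + 1)) = 0 → z.im = 0) :
    ∃ lam : Fin n → ℝ → ℝ,
      (∀ j, Differentiable ℝ (lam j) ∧ Differentiable ℝ (deriv (lam j))) ∧
      (∀ t x : ℝ, x ^ n + ∑ j : Fin n, (-1 : ℝ) ^ ((j : ℕ) + 1) * a j t * x ^ (n - ((j : ℕ) + 1)) =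
          ∏ j : Fin n, (x - lam j t)) := by
  let P : ℝ → ℝ[X] := fun t => mkp fun i : Fin n =>
    (-1 : ℝ) ^ ((Fin.rev i : ℕ) + 1) * a (Fin.rev i) t
  have hH : ∀ t, Hyp n (P t) := by
    intro t
    refine Hyp.of_splits (mkp_monic _) (mkp_natDegree _) ?_
    refine Splits.of_splits_map (algebraMap ℝ ℂ) (IsAlgClosed.splits _) fun z hz => ?_
    have hz1 := isRoot_of_mem_roots hz
    rw [IsRoot, eval_map, final_eval (algebraMap ℝ ℂ) (fun j => a j t)] at hz1
    have := hhyp t z hz1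
    exact ⟨z.re, by apply Complex.ext <;> simp [this]⟩
  have hG : ∀ t, Good n P t := by
    intro t
    refine ⟨Eventually.of_forall hH, fun j => ?_⟩
    simp only [P, mkp_coeff]
    refine contDiffAt_const.mul ?_
    have := (ha (Fin.rev j)).contDiffAt (x := t)
    exact_mod_cast this
  obtain ⟨f, hf⟩ := glue_open (TD_glueHyp (n := n) P) isOpen_univ
    (fun t _ => LTh_all n P t (hG t))
  have hf' : ∀ t, TD P f t := fun t => hf t (mem_univ t)
  refine ⟨fun j t => f t j, fun j => ⟨fun t => (hf' t).1.self_of_nhds.2 j, fun t => (hf' t).2 j⟩,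
    fun t x => ?_⟩
  have h1 := congrArg (fun p => p.eval₂ (RingHom.id ℝ) x) (hf' t).1.self_of_nhds.1
  simp only [P] at h1
  rw [final_eval (RingHom.id ℝ) (fun j => a j t)] at h1
  simpa [pr, eval₂_finset_prod] using h1
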